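/- Let S be a quasi-hereditary algebra with a simple-preserving duality and Ringel dual S'. Then gfd(S) = wfd(S) = wfd(S') = gfd(S'). -/

import Mathlib

/-!
Common definitions for formalizing "On the global and ∇-filtration dimensions of
quasi-hereditary algebras" by Erdmann and Parker.

We work with a finite-dimensional algebra `S` over a field `k`; since `S` is
finite dimensional over `k`, the finite-dimensional `S`-modules are exactly the
finitely generated ones, so we express finite-dimensionality of a module `M` as
`Module.Finite S M`.
-/

open CategoryTheory

namespace QHPaper

variable (S : Type) [Ring S]

/-- The subquotient `B ⧸ A` associated to two submodules `A B` of `M`. -/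
abbrev subquot {M : ModuleCat.{0} S} (A B : Submodule S ↥M) : Type :=
  ↥B ⧸ (Submodule.comap B.subtype A)

/-- A filtration `⊥ = f 0 ≤ f 1 ≤ ⋯ ≤ f n = ⊤` of `M` whose `i`-th section
`f (i+1) / f i` is isomorphic to the prescribed module `D i`. -/
def HasFiltrationWithSections (M : ModuleCat.{0} S) (n : ℕ)
    (f : Fin (n + 1) → Submodule S ↥M) (D : Fin n → ModuleCat.{0} S) : Prop :=
  Monotone f ∧ f 0 = ⊥ ∧ f (Fin.last n) = ⊤ ∧
    ∀ i : Fin n, Nonempty ((subquot S (f i.castSucc) (f i.succ)) ≃ₗ[S] ↥(D i))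

/-- `L` occurs as a (simple) subquotient of `M`; for `L` simple this says that `L`
is a composition factor of `M`. -/
def IsCompFactor (L M : ModuleCat.{0} S) : Prop :=
  ∃ (A B : Submodule S ↥M), A ≤ B ∧ Nonempty ((subquot S A B) ≃ₗ[S] ↥L)

/-- `L` occurs with multiplicity `m` among the sections of a composition series of `M`. -/
def CompFactorMult (L M : ModuleCat.{0} S) (m : ℕ) : Prop :=
  ∃ (n : ℕ) (f : Fin (n + 1) → Submodule S ↥M),
    Monotone f ∧ f 0 = ⊥ ∧ f (Fin.last n) = ⊤ ∧
    (∀ i : Fin n, IsSimpleModule S (subquot S (f i.castSucc) (f i.succ))) ∧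
    Nat.card {i : Fin n // Nonempty ((subquot S (f i.castSucc) (f i.succ)) ≃ₗ[S] ↥L)} = m

/-- `P` is a projective cover of `M`: `P` is projective and there is a surjection
`P → M` whose kernel is superfluous in `P`. -/
def IsProjCover (P M : ModuleCat.{0} S) : Prop :=
  Module.Projective S ↥P ∧ ∃ π : ↥P →ₗ[S] ↥M, Function.Surjective π ∧
    ∀ N : Submodule S ↥P, N ⊔ LinearMap.ker π = ⊤ → N = ⊤

/-- `I` is an injective hull of `M`: `I` is injective and there is an injection
`M → I` with essential image. -/
def IsInjHull (I M : ModuleCat.{0} S) : Prop :=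
  Module.Injective S ↥I ∧ ∃ ι : ↥M →ₗ[S] ↥I, Function.Injective ι ∧
    ∀ N : Submodule S ↥I, N ⊓ LinearMap.range ι = ⊥ → N = ⊥

/-- The data of a quasi-hereditary algebra structure on `S` with weight poset `Λ`:
a full set `L` of pairwise non-isomorphic simple modules, their projective covers `P`
and injective hulls `I`, the standard modules `std` (largest quotient of `P lam` with
all composition factors `L mu`, `mu ≤ lam`), the costandard modules `costd`
(largest submodule of `I lam` with all composition factors `L mu`, `mu ≤ lam`),
such that `L lam` occurs exactly once in `std lam` and `P lam` is filtered by
standard modules `std mu` with `mu ≥ lam`, with `std lam` occurring exactly once. -/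
structure QHData (Λ : Type) [Fintype Λ] [PartialOrder Λ] where
  L : Λ → ModuleCat.{0} S
  P : Λ → ModuleCat.{0} S
  I : Λ → ModuleCat.{0} S
  std : Λ → ModuleCat.{0} S
  costd : Λ → ModuleCat.{0} S
  finiteL : ∀ lam, Module.Finite S ↥(L lam)
  simpleL : ∀ lam, IsSimpleModule S ↥(L lam)
  nonisoL : ∀ lam mu, lam ≠ mu → IsEmpty (↥(L lam) ≃ₗ[S] ↥(L mu))
  fullL : ∀ M : ModuleCat.{0} S, IsSimpleModule S ↥M → ∃ lam, Nonempty (↥M ≃ₗ[S] ↥(L lam))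
  projCover : ∀ lam, IsProjCover S (P lam) (L lam)
  injHull : ∀ lam, IsInjHull S (I lam) (L lam)
  stdSpec : ∀ lam, ∃ K : Submodule S ↥(P lam),
    Nonempty (↥(std lam) ≃ₗ[S] (↥(P lam) ⧸ K)) ∧
    (∀ mu, IsCompFactor S (L mu) (ModuleCat.of S (↥(P lam) ⧸ K)) → mu ≤ lam) ∧
    ∀ K' : Submodule S ↥(P lam),
      (∀ mu, IsCompFactor S (L mu) (ModuleCat.of S (↥(P lam) ⧸ K')) → mu ≤ lam) → K ≤ K'
  costdSpec : ∀ lam, ∃ V : Submodule S ↥(I lam),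
    Nonempty (↥(costd lam) ≃ₗ[S] ↥V) ∧
    (∀ mu, IsCompFactor S (L mu) (ModuleCat.of S ↥V) → mu ≤ lam) ∧
    ∀ V' : Submodule S ↥(I lam),
      (∀ mu, IsCompFactor S (L mu) (ModuleCat.of S ↥V') → mu ≤ lam) → V' ≤ V
  multOne : ∀ lam, CompFactorMult S (L lam) (std lam) 1
  projFilt : ∀ lam, ∃ (n : ℕ) (f : Fin (n + 1) → Submodule S ↥(P lam)) (g : Fin n → Λ),
    HasFiltrationWithSections S (P lam) n f (fun i => std (g i)) ∧
    (∀ i, lam ≤ g i) ∧ Nat.card {i : Fin n // g i = lam} = 1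

variable {Λ : Type} [Fintype Λ] [PartialOrder Λ]

/-- `M` has a filtration with costandard sections, i.e. `M ∈ F(∇)`. -/
def InCostdFilt (Q : QHData S Λ) (M : ModuleCat.{0} S) : Prop :=
  ∃ (n : ℕ) (f : Fin (n + 1) → Submodule S ↥M) (g : Fin n → Λ),
    HasFiltrationWithSections S M n f (fun i => Q.costd (g i))

/-- `M` has a filtration with standard sections, i.e. `M ∈ F(Δ)`. -/
def InStdFilt (Q : QHData S Λ) (M : ModuleCat.{0} S) : Prop :=
  ∃ (n : ℕ) (f : Fin (n + 1) → Submodule S ↥M) (g : Fin n → Λ),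
    HasFiltrationWithSections S M n f (fun i => Q.std (g i))

/-- `0 → N 0 → N 1 → ⋯ → N (n+1) → 0` is exact. -/
def IsExactSeq (n : ℕ) (N : Fin (n + 2) → ModuleCat.{0} S)
    (f : ∀ i : Fin (n + 1), ↥(N i.castSucc) →ₗ[S] ↥(N i.succ)) : Prop :=
  Function.Injective (f 0) ∧ Function.Surjective (f (Fin.last n)) ∧
    ∀ i : Fin n, LinearMap.range (f i.castSucc) = LinearMap.ker (f i.succ)

/-- `M` has a ∇-resolution (co-resolution by modules in `F(∇)`) of length `d`:
`0 → M → M₀ → ⋯ → M_d → 0` with each `Mᵢ ∈ F(∇)`. -/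
def GfdLE (Q : QHData S Λ) (M : ModuleCat.{0} S) (d : ℕ) : Prop :=
  ∃ (N : Fin (d + 2) → ModuleCat.{0} S)
    (f : ∀ i : Fin (d + 1), ↥(N i.castSucc) →ₗ[S] ↥(N i.succ)),
    IsExactSeq S d N f ∧ N 0 = M ∧ ∀ i : Fin (d + 1), InCostdFilt S Q (N i.succ)

/-- The ∇-filtration dimension (good filtration dimension) of a module. -/
noncomputable def gfd (Q : QHData S Λ) (M : ModuleCat.{0} S) : ℕ :=
  sInf {d | GfdLE S Q M d}

/-- `M` has a resolution `0 → M_d → ⋯ → M₀ → M → 0` with each `Mᵢ ∈ F(Δ)`. -/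
def WfdLE (Q : QHData S Λ) (M : ModuleCat.{0} S) (d : ℕ) : Prop :=
  ∃ (N : Fin (d + 2) → ModuleCat.{0} S)
    (f : ∀ i : Fin (d + 1), ↥(N i.castSucc) →ₗ[S] ↥(N i.succ)),
    IsExactSeq S d N f ∧ N (Fin.last (d + 1)) = M ∧
    ∀ i : Fin (d + 1), InStdFilt S Q (N i.castSucc)

/-- The Δ-filtration dimension of a module. -/
noncomputable def wfd (Q : QHData S Λ) (M : ModuleCat.{0} S) : ℕ :=
  sInf {d | WfdLE S Q M d}

/-- `M` has a projective resolution of length `d`. -/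
def ProjdimLE (M : ModuleCat.{0} S) (d : ℕ) : Prop :=
  ∃ (N : Fin (d + 2) → ModuleCat.{0} S)
    (f : ∀ i : Fin (d + 1), ↥(N i.castSucc) →ₗ[S] ↥(N i.succ)),
    IsExactSeq S d N f ∧ N (Fin.last (d + 1)) = M ∧
    ∀ i : Fin (d + 1), Module.Projective S ↥(N i.castSucc)

/-- The projective dimension of a module. -/
noncomputable def projdim (M : ModuleCat.{0} S) : ℕ :=
  sInf {d | ProjdimLE S M d}

/-- `M` has an injective resolution of length `d`. -/
def InjdimLE (M : ModuleCat.{0} S) (d : ℕ) : Prop :=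
  ∃ (N : Fin (d + 2) → ModuleCat.{0} S)
    (f : ∀ i : Fin (d + 1), ↥(N i.castSucc) →ₗ[S] ↥(N i.succ)),
    IsExactSeq S d N f ∧ N 0 = M ∧
    ∀ i : Fin (d + 1), Module.Injective S ↥(N i.succ)

/-- The injective dimension of a module. -/
noncomputable def injdim (M : ModuleCat.{0} S) : ℕ :=
  sInf {d | InjdimLE S M d}

/-- `gfd(S)`: the supremum of the ∇-filtration dimensions of all
finite-dimensional `S`-modules. -/
noncomputable def gfdAlg (Q : QHData S Λ) : ℕ :=
  sSup {d | ∃ M : ModuleCat.{0} S, Module.Finite S ↥M ∧ gfd S Q M = d}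

/-- `wfd(S)`: the supremum of the Δ-filtration dimensions of all
finite-dimensional `S`-modules. -/
noncomputable def wfdAlg (Q : QHData S Λ) : ℕ :=
  sSup {d | ∃ M : ModuleCat.{0} S, Module.Finite S ↥M ∧ wfd S Q M = d}

/-- The global dimension of `S`: the supremum of the projective dimensions of all
finite-dimensional `S`-modules. -/
noncomputable def globdim : ℕ :=
  sSup {d | ∃ M : ModuleCat.{0} S, Module.Finite S ↥M ∧ projdim S M = d}

/-- `Ext^n_S(A, B) ≠ 0`. -/
noncomputable def extNe (A B : ModuleCat.{0} S) (n : ℕ) : Prop :=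
  Nontrivial ↥(((Ext ℤ (ModuleCat.{0} S) n).obj (Opposite.op A)).obj B)

/-- A simple-preserving duality on `S`: a contravariant, exact, fully faithful,
additive self-functor `D` on the category of finite-dimensional `S`-modules with
`D (D M) ≅ M` and `D (L lam) ≅ L lam` for all `lam`. -/
structure Duality (Q : QHData S Λ) where
  D : ModuleCat.{0} S → ModuleCat.{0} S
  Dmap : ∀ {A B : ModuleCat.{0} S}, (↥A →ₗ[S] ↥B) → (↥(D B) →ₗ[S] ↥(D A))
  finD : ∀ M : ModuleCat.{0} S, Module.Finite S ↥M → Module.Finite S ↥(D M)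
  Did : ∀ A : ModuleCat.{0} S, Module.Finite S ↥A →
    Dmap (LinearMap.id : ↥A →ₗ[S] ↥A) = LinearMap.id
  Dcomp : ∀ {A B C : ModuleCat.{0} S}, Module.Finite S ↥A → Module.Finite S ↥B →
    Module.Finite S ↥C → ∀ (f : ↥A →ₗ[S] ↥B) (g : ↥B →ₗ[S] ↥C),
      Dmap (g ∘ₗ f) = Dmap f ∘ₗ Dmap g
  Dadd : ∀ {A B : ModuleCat.{0} S}, Module.Finite S ↥A → Module.Finite S ↥B →
    ∀ (f g : ↥A →ₗ[S] ↥B), Dmap (f + g) = Dmap f + Dmap g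
  Dfull : ∀ {A B : ModuleCat.{0} S}, Module.Finite S ↥A → Module.Finite S ↥B →
    Function.Bijective (fun f : ↥A →ₗ[S] ↥B => Dmap f)
  Dexact : ∀ {A B C : ModuleCat.{0} S}, Module.Finite S ↥A → Module.Finite S ↥B →
    Module.Finite S ↥C → ∀ (f : ↥A →ₗ[S] ↥B) (g : ↥B →ₗ[S] ↥C),
      Function.Injective f → Function.Surjective g →
      LinearMap.range f = LinearMap.ker g →
      Function.Injective (Dmap g) ∧ Function.Surjective (Dmap f) ∧
        LinearMap.range (Dmap g) = LinearMap.ker (Dmap f)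
  Dinvol : ∀ M : ModuleCat.{0} S, Module.Finite S ↥M → Nonempty (↥(D (D M)) ≃ₗ[S] ↥M)
  DL : ∀ lam, Nonempty (↥(D (Q.L lam)) ≃ₗ[S] ↥(Q.L lam))

/-- Strong property A: `mu < lam` implies `gfd (L mu) < gfd (L lam)`. -/
def StrongPropA (Q : QHData S Λ) : Prop :=
  ∀ mu lam : Λ, mu < lam → gfd S Q (Q.L mu) < gfd S Q (Q.L lam)

/-- Property A: `mu < lam` implies `gfd (L mu) ≤ gfd (L lam)`. -/
def PropA (Q : QHData S Λ) : Prop :=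
  ∀ mu lam : Λ, mu < lam → gfd S Q (Q.L mu) ≤ gfd S Q (Q.L lam)

/-- Property B: `mu < lam` implies `wfd (∇ mu) ≤ wfd (∇ lam)`. -/
def PropB (Q : QHData S Λ) : Prop :=
  ∀ mu lam : Λ, mu < lam → wfd S Q (Q.costd mu) ≤ wfd S Q (Q.costd lam)

/-- Property C: `wfd (∇ lam) = gfd S - inj (∇ lam)` for all `lam`. -/
def PropC (Q : QHData S Λ) : Prop :=
  ∀ lam : Λ, wfd S Q (Q.costd lam) = gfdAlg S Q - injdim S (Q.costd lam)

/-- Property D: `wfd (∇ lam) = wfd (L lam)` for all `lam`. -/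
def PropD (Q : QHData S Λ) : Prop :=
  ∀ lam : Λ, wfd S Q (Q.costd lam) = wfd S Q (Q.L lam)

/-- Property E: `mu < lam` implies `inj (∇ mu) ≥ inj (∇ lam)`. -/
def PropE (Q : QHData S Λ) : Prop :=
  ∀ mu lam : Λ, mu < lam → injdim S (Q.costd lam) ≤ injdim S (Q.costd mu)

/-- The partial order is minimal for the quasi-hereditary structure: whenever
`mu < lam` are adjacent, `L mu` is a composition factor of `Δ lam` or of `∇ lam`. -/
def MinimalOrder (Q : QHData S Λ) : Prop :=
  ∀ mu lam : Λ, mu < lam → (¬ ∃ nu, mu < nu ∧ nu < lam) →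
    IsCompFactor S (Q.L mu) (Q.std lam) ∨ IsCompFactor S (Q.L mu) (Q.costd lam)

/-- `S` is connected (indecomposable as an algebra, i.e. one block): the only
central idempotents are `0` and `1`. -/
def ConnectedRing : Prop :=
  ∀ c : S, c * c = c → (∀ s : S, c * s = s * c) → c = 0 ∨ c = 1

/-- A tilting module: a module in `F(Δ) ∩ F(∇)`. -/
def IsTilting (Q : QHData S Λ) (T : ModuleCat.{0} S) : Prop :=
  InStdFilt S Q T ∧ InCostdFilt S Q T

/-- The indecomposable tilting module `T(lam)`: an indecomposable tilting module in
which `L lam` occurs exactly once and all other composition factors `L mu` have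
`mu < lam`. -/
def IsIndecTilting (Q : QHData S Λ) (lam : Λ) (T : ModuleCat.{0} S) : Prop :=
  IsTilting S Q T ∧ Nontrivial ↥T ∧
    (∀ A B : Submodule S ↥T, IsCompl A B → A = ⊥ ∨ B = ⊥) ∧
    CompFactorMult S (Q.L lam) T 1 ∧
    ∀ mu, IsCompFactor S (Q.L mu) T → mu = lam ∨ mu < lam

/-- A full tilting module: a (finite-dimensional) tilting module having every
indecomposable tilting module as a direct summand. -/
def IsFullTilting (Q : QHData S Λ) (T : ModuleCat.{0} S) : Prop :=
  IsTilting S Q T ∧ Module.Finite S ↥T ∧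
    ∀ (lam : Λ) (Tl : ModuleCat.{0} S), IsIndecTilting S Q lam Tl →
      ∃ Cc : ModuleCat.{0} S, Nonempty (↥T ≃ₗ[S] (↥Tl × ↥Cc))

/-- The Ringel dual ring `S' = End_S(T)^op`. -/
abbrev RingelDualRing (T : ModuleCat.{0} S) : Type := (Module.End S ↥T)ᵐᵒᵖ

/-- `Hom_S(T, X)` is a module over `S' = End_S(T)^op` via `f • φ = φ ∘ f`. -/
instance homTModule (T X : ModuleCat.{0} S) :
    Module (RingelDualRing S T) (↥T →ₗ[S] ↥X) where
  smul a φ := φ ∘ₗ a.unop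
  one_smul φ := rfl
  mul_smul a b φ := rfl
  smul_zero a := rfl
  smul_add a φ ψ := rfl
  add_smul a b φ := by
    ext x
    show φ ((a.unop + b.unop) x) = φ (a.unop x) + φ (b.unop x)
    rw [LinearMap.add_apply, map_add]
  zero_smul φ := by
    ext x
    show φ ((0 : Module.End S ↥T) x) = 0
    rw [LinearMap.zero_apply, map_zero]

/-- The `S'`-module `Hom_S(T, X)`, i.e. the image of `X` under the functor
`F = Hom_S(T, -)`. -/
noncomputable def homTMod (T X : ModuleCat.{0} S) :
    ModuleCat.{0} (RingelDualRing S T) :=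
  ModuleCat.of (RingelDualRing S T) (↥T →ₗ[S] ↥X)

/-- `Q'` is a Ringel dual quasi-hereditary structure for `(Q, T)`:
`T` is a full tilting module, `Q'` is a quasi-hereditary structure on
`S' = End_S(T)^op` for the opposite poset, and its standard modules are
`Δ'(lam) = Hom_S(T, ∇(lam))`. -/
def IsRingelDualData (Q : QHData S Λ) (T : ModuleCat.{0} S)
    (Q' : QHData (RingelDualRing S T) Λᵒᵈ) : Prop :=
  IsFullTilting S Q T ∧
    ∀ lam : Λ, Nonempty
      (↥(Q'.std (OrderDual.toDual lam)) ≃ₗ[RingelDualRing S T]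
        (↥T →ₗ[S] ↥(Q.costd lam)))

/-- `0 → T_d → ⋯ → T_0 → M → 0` exact with all `T_i` tilting modules. -/
def TiltResLE (Q : QHData S Λ) (M : ModuleCat.{0} S) (d : ℕ) : Prop :=
  ∃ (N : Fin (d + 2) → ModuleCat.{0} S)
    (f : ∀ i : Fin (d + 1), ↥(N i.castSucc) →ₗ[S] ↥(N i.succ)),
    IsExactSeq S d N f ∧ N (Fin.last (d + 1)) = M ∧
    ∀ i : Fin (d + 1), IsTilting S Q (N i.castSucc)

/-- An idempotent `e` is primitive if it is nonzero and is not the sum of two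
nonzero orthogonal idempotents. -/
def IsPrimitiveIdempotent (e : S) : Prop :=
  e * e = e ∧ e ≠ 0 ∧ ∀ a b : S, a * a = a → b * b = b → a * b = 0 → b * a = 0 →
    e = a + b → a = 0 ∨ b = 0

/-- The additive subgroup `e•M = {m | e • m = m}` of `M` (for `e` idempotent). -/
def cornerSet (eG : S) (M : ModuleCat.{0} S) : AddSubgroup ↥M where
  carrier := {m | eG • m = m}
  add_mem' := by
    intro a b ha hb
    simp only [Set.mem_setOf_eq] at *
    rw [smul_add, ha, hb]
  zero_mem' := by
    simp only [Set.mem_setOf_eq]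
    rw [smul_zero]
  neg_mem' := by
    intro a ha
    simp only [Set.mem_setOf_eq] at *
    rw [smul_neg, ha]

/-- The `R`-module structure on `e•M`, where `ι : R → S` identifies `R` with the
corner ring `eSe` (as a non-unital ring, with `ι 1 = e`). -/
def cornerModuleStructure (R : Type) [Ring R] (ι : R →ₙ+* S) (eG : S)
    (hone : ι 1 = eG) (hrange : ∀ r : R, eG * ι r * eG = ι r)
    (M : ModuleCat.{0} S) : Module R ↥(cornerSet S eG M) where
  smul r m := ⟨ι r • (m : ↥M), by
    have hm : eG • (m : ↥M) = (m : ↥M) := m.2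
    show eG • (ι r • (m : ↥M)) = ι r • (m : ↥M)
    have h : eG • (ι r • (m : ↥M)) = (eG * ι r * eG) • (m : ↥M) := by
      rw [mul_assoc, mul_smul, mul_smul, hm]
    rw [h, hrange]⟩
  one_smul m := by
    apply Subtype.ext
    show ι 1 • (m : ↥M) = (m : ↥M)
    rw [hone]
    exact m.2
  mul_smul r s m := by
    apply Subtype.ext
    show ι (r * s) • (m : ↥M) = ι r • (ι s • (m : ↥M))
    rw [map_mul, mul_smul]
  smul_zero r := by
    apply Subtype.ext
    show ι r • (0 : ↥M) = 0
    rw [smul_zero]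
  smul_add r m n := by
    apply Subtype.ext
    show ι r • ((m : ↥M) + (n : ↥M)) = ι r • (m : ↥M) + ι r • (n : ↥M)
    rw [smul_add]
  add_smul r s m := by
    apply Subtype.ext
    show ι (r + s) • (m : ↥M) = ι r • (m : ↥M) + ι s • (m : ↥M)
    rw [map_add, add_smul]
  zero_smul m := by
    apply Subtype.ext
    show ι 0 • (m : ↥M) = 0
    rw [map_zero, zero_smul]

/-- The `R`-module `e•M`, where `R ≅ eSe` via `ι`. -/
noncomputable def cornerMod (R : Type) [Ring R] (ι : R →ₙ+* S) (eG : S)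
    (hone : ι 1 = eG) (hrange : ∀ r : R, eG * ι r * eG = ι r)
    (M : ModuleCat.{0} S) : ModuleCat.{0} R :=
  @ModuleCat.of R _ ↥(cornerSet S eG M) _
    (cornerModuleStructure S R ι eG hone hrange M)

end QHPaper


namespace QHPaper
open CategoryTheory

section ExtPart

/-- Short exact sequence of modules given by linear maps. -/
structure SES {S : Type} [Ring S] {A B C : Type} [AddCommGroup A] [Module S A]
    [AddCommGroup B] [Module S B] [AddCommGroup C] [Module S C]
    (f : A →ₗ[S] B) (g : B →ₗ[S] C) : Prop where
  inj : Function.Injective f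
  surj : Function.Surjective g
  exact : Function.Exact f g

/-- `Ext^n_S(X,Y) = 0`. -/
def EV (S : Type) [Ring S] (n : ℕ) (X Y : Type) [AddCommGroup X] [Module S X]
    [AddCommGroup Y] [Module S Y] : Prop :=
  Subsingleton (Abelian.Ext (ModuleCat.of S X) (ModuleCat.of S Y) n)

variable {S : Type} [Ring S]
variable {A B C X Y Z : Type} [AddCommGroup A] [Module S A]
    [AddCommGroup B] [Module S B] [AddCommGroup C] [Module S C]
    [AddCommGroup X] [Module S X] [AddCommGroup Y] [Module S Y] [AddCommGroup Z] [Module S Z]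

/-- The short complex attached to a short exact sequence. -/
abbrev SES.sc {f : A →ₗ[S] B} {g : B →ₗ[S] C} (h : SES f g) : ShortComplex (ModuleCat.{0} S) :=
  ShortComplex.mk (ModuleCat.ofHom f) (ModuleCat.ofHom g) (by
    ext x
    exact h.exact.apply_apply_eq_zero x)

lemma SES.se {f : A →ₗ[S] B} {g : B →ₗ[S] C} (h : SES f g) : h.sc.ShortExact :=
  ModuleCat.shortComplex_shortExact _ h.exact h.inj h.surj

lemma SES.of_sub (N : Submodule S B) : SES N.subtype N.mkQ :=
  ⟨N.injective_subtype, N.mkQ_surjective, by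
    rw [LinearMap.exact_iff]; simp⟩

lemma SES.of_surj (g : B →ₗ[S] C) (hg : Function.Surjective g) : SES (LinearMap.ker g).subtype g :=
  ⟨Submodule.injective_subtype _, hg, by rw [LinearMap.exact_iff]; simp⟩

lemma SES.of_inj (f : A →ₗ[S] B) (hf : Function.Injective f) : SES f (LinearMap.range f).mkQ :=
  ⟨hf, Submodule.mkQ_surjective _, by rw [LinearMap.exact_iff]; simp⟩

lemma SES.zero_right (e : A ≃ₗ[S] B) (C : Type) [AddCommGroup C] [Module S C] [Subsingleton C] :
    SES e.toLinearMap (0 : B →ₗ[S] C) :=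
  ⟨e.injective, fun c => ⟨0, Subsingleton.elim _ _⟩, by
    rw [LinearMap.exact_iff]
    simp⟩

lemma SES.zero_left (e : B ≃ₗ[S] C) (A : Type) [AddCommGroup A] [Module S A] [Subsingleton A] :
    SES (0 : A →ₗ[S] B) e.toLinearMap :=
  ⟨fun a b _ => Subsingleton.elim _ _, e.surjective, by
    rw [LinearMap.exact_iff]
    simp⟩

lemma SES.prod (A B : Type) [AddCommGroup A] [Module S A] [AddCommGroup B] [Module S B] :
    SES (LinearMap.inl S A B) (LinearMap.snd S A B) :=
  ⟨LinearMap.inl_injective, LinearMap.snd_surjective, by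
    rw [LinearMap.exact_iff, LinearMap.ker_snd]⟩

lemma SES.descend {f : A →ₗ[S] B} {g : B →ₗ[S] C} (h : SES f g) (φ : B →ₗ[S] X)
    (hφ : φ ∘ₗ f = 0) : ∃ ψ : C →ₗ[S] X, ψ ∘ₗ g = φ := by
  have hk : LinearMap.ker g ≤ LinearMap.ker φ := by
    intro x hx
    obtain ⟨y, rfl⟩ := (h.exact x).1 hx
    exact LinearMap.congr_fun hφ y
  refine ⟨(Submodule.liftQ _ φ hk) ∘ₗ
    (g.quotKerEquivOfSurjective h.surj).symm.toLinearMap, ?_⟩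
  ext x
  have : (g.quotKerEquivOfSurjective h.surj).symm (g x) = Submodule.Quotient.mk x := by
    rw [LinearEquiv.symm_apply_eq]; rfl
  simp [this]

lemma SES.factor {f : A →ₗ[S] B} {g : B →ₗ[S] C} (h : SES f g) (φ : X →ₗ[S] B)
    (hφ : g ∘ₗ φ = 0) : ∃ ψ : X →ₗ[S] A, f ∘ₗ ψ = φ := by
  have hr : ∀ x, φ x ∈ LinearMap.range f := fun x =>
    (h.exact (φ x)).1 (LinearMap.congr_fun hφ x)
  refine ⟨(LinearEquiv.ofInjective f h.inj).symm.toLinearMap ∘ₗ φ.codRestrict _ hr, ?_⟩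
  ext x
  have := (LinearEquiv.ofInjective f h.inj).apply_symm_apply (φ.codRestrict _ hr x)
  exact congrArg Subtype.val this

lemma EV.cov2 {f : A →ₗ[S] B} {g : B →ₗ[S] C} (h : SES f g) {n : ℕ}
    (h1 : EV S n X A) (h3 : EV S n X C) : EV S n X B := by
  refine subsingleton_of_forall_eq 0 fun x => ?_
  obtain ⟨y, hy⟩ := Abelian.Ext.covariant_sequence_exact₂ _ h.se x (h3.elim _ _)
  rw [← hy, h1.elim y 0, Abelian.Ext.zero_comp]

lemma EV.cov3 {f : A →ₗ[S] B} {g : B →ₗ[S] C} (h : SES f g) {n : ℕ}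
    (h1 : EV S (n+1) X A) (h3 : EV S n X B) : EV S n X C := by
  refine subsingleton_of_forall_eq 0 fun x => ?_
  obtain ⟨y, hy⟩ := Abelian.Ext.covariant_sequence_exact₃ _ h.se x rfl (h1.elim _ _)
  rw [← hy, h3.elim y 0, Abelian.Ext.zero_comp]

lemma EV.cov1 {f : A →ₗ[S] B} {g : B →ₗ[S] C} (h : SES f g) {n : ℕ}
    (h1 : EV S n X C) (h3 : EV S (n+1) X B) : EV S (n+1) X A := by
  refine subsingleton_of_forall_eq 0 fun x => ?_
  obtain ⟨y, hy⟩ := Abelian.Ext.covariant_sequence_exact₁ _ h.se x (h3.elim _ _) rfl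
  rw [← hy, h1.elim y 0, Abelian.Ext.zero_comp]

lemma EV.con2 {f : A →ₗ[S] B} {g : B →ₗ[S] C} (h : SES f g) {n : ℕ}
    (h1 : EV S n A Y) (h3 : EV S n C Y) : EV S n B Y := by
  refine subsingleton_of_forall_eq 0 fun x => ?_
  obtain ⟨y, hy⟩ := Abelian.Ext.contravariant_sequence_exact₂ h.se _ x (h1.elim _ _)
  rw [← hy, h3.elim y 0, Abelian.Ext.comp_zero]

lemma EV.con1 {f : A →ₗ[S] B} {g : B →ₗ[S] C} (h : SES f g) {n : ℕ}
    (h1 : EV S (n+1) C Y) (h3 : EV S n B Y) : EV S n A Y := by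
  refine subsingleton_of_forall_eq 0 fun x => ?_
  obtain ⟨y, hy⟩ := Abelian.Ext.contravariant_sequence_exact₁ h.se _ x (add_comm 1 n) (h1.elim _ _)
  rw [← hy, h3.elim y 0, Abelian.Ext.comp_zero]

lemma EV.con3 {f : A →ₗ[S] B} {g : B →ₗ[S] C} (h : SES f g) {n : ℕ}
    (h1 : EV S n A Y) (h3 : EV S (n+1) B Y) : EV S (n+1) C Y := by
  refine subsingleton_of_forall_eq 0 fun x => ?_
  obtain ⟨y, hy⟩ := Abelian.Ext.contravariant_sequence_exact₃ h.se _ x (h3.elim _ _) (add_comm 1 n)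
  rw [← hy, h1.elim y 0, Abelian.Ext.comp_zero]

lemma EV.lift {f : A →ₗ[S] B} {g : B →ₗ[S] C} (h : SES f g) (h1 : EV S 1 X A)
    (φ : X →ₗ[S] C) : ∃ ψ : X →ₗ[S] B, g ∘ₗ ψ = φ := by
  obtain ⟨y, hy⟩ := Abelian.Ext.covariant_sequence_exact₃ (ModuleCat.of S X) h.se
    (Abelian.Ext.mk₀ (ModuleCat.ofHom φ)) rfl (h1.elim _ _)
  obtain ⟨y, rfl⟩ := Abelian.Ext.mk₀_bijective _ _ |>.2 y
  rw [Abelian.Ext.mk₀_comp_mk₀] at hy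
  have := (Abelian.Ext.mk₀_bijective _ _).1 hy
  exact ⟨y.hom, congrArg ModuleCat.Hom.hom this⟩

lemma EV.extend {f : A →ₗ[S] B} {g : B →ₗ[S] C} (h : SES f g) (h1 : EV S 1 C Y)
    (φ : A →ₗ[S] Y) : ∃ ψ : B →ₗ[S] Y, ψ ∘ₗ f = φ := by
  obtain ⟨y, hy⟩ := Abelian.Ext.contravariant_sequence_exact₁ h.se (ModuleCat.of S Y)
    (Abelian.Ext.mk₀ (ModuleCat.ofHom φ)) rfl (h1.elim _ _)
  obtain ⟨y, rfl⟩ := Abelian.Ext.mk₀_bijective _ _ |>.2 y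
  rw [Abelian.Ext.mk₀_comp_mk₀] at hy
  have := (Abelian.Ext.mk₀_bijective _ _).1 hy
  exact ⟨y.hom, congrArg ModuleCat.Hom.hom this⟩

lemma EV.of_proj [Module.Projective S X] (n : ℕ) : EV S (n+1) X Y := by
  have : Projective (ModuleCat.of S X) := inferInstance
  exact Abelian.Ext.subsingleton_of_projective _ _ n

lemma EV.of_inj (h : Module.Injective S Y) (n : ℕ) : EV S (n+1) X Y := by
  have : Injective (ModuleCat.of S Y) := (Module.injective_iff_injective_object S Y).1 h
  exact Abelian.Ext.subsingleton_of_injective _ _ n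

lemma EV.of_extend {f : A →ₗ[S] B} {g : B →ₗ[S] C} (h : SES f g) (hB : EV S 1 B Y)
    (H : ∀ φ : A →ₗ[S] Y, ∃ ψ : B →ₗ[S] Y, ψ ∘ₗ f = φ) : EV S 1 C Y := by
  refine subsingleton_of_forall_eq 0 fun x => ?_
  obtain ⟨y, hy⟩ := Abelian.Ext.contravariant_sequence_exact₃ h.se _ x (hB.elim _ _)
    (add_comm 1 0)
  obtain ⟨y, rfl⟩ := Abelian.Ext.mk₀_bijective _ _ |>.2 y
  obtain ⟨ψ, hψ⟩ := H y.hom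
  have : y = h.sc.f ≫ ModuleCat.ofHom ψ := by
    ext1; exact hψ.symm
  rw [← hy, this, ← Abelian.Ext.mk₀_comp_mk₀]
  exact h.se.extClass_comp_assoc _

lemma EV.of_lift {f : A →ₗ[S] B} {g : B →ₗ[S] C} (h : SES f g) (hB : EV S 1 X B)
    (H : ∀ φ : X →ₗ[S] C, ∃ ψ : X →ₗ[S] B, g ∘ₗ ψ = φ) : EV S 1 X A := by
  refine subsingleton_of_forall_eq 0 fun x => ?_
  obtain ⟨y, hy⟩ := Abelian.Ext.covariant_sequence_exact₁ _ h.se x (hB.elim _ _) rfl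
  obtain ⟨y, rfl⟩ := Abelian.Ext.mk₀_bijective _ _ |>.2 y
  obtain ⟨ψ, hψ⟩ := H y.hom
  have : y = ModuleCat.ofHom ψ ≫ h.sc.g := by
    ext1; exact hψ.symm
  rw [← hy, this, ← Abelian.Ext.mk₀_comp_mk₀]
  rw [Abelian.Ext.comp_assoc_of_second_deg_zero, ShortComplex.ShortExact.comp_extClass,
    Abelian.Ext.comp_zero]

lemma EV.of_subsingleton_right [Subsingleton Y] (n : ℕ) : EV S n X Y := by
  have : Limits.IsZero (ModuleCat.of S Y) := ModuleCat.isZero_of_subsingleton _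
  refine subsingleton_of_forall_eq 0 fun x => ?_
  rw [← x.comp_mk₀_id, this.eq_of_src (𝟙 _) 0]
  simp

lemma EV.of_subsingleton_left [Subsingleton X] (n : ℕ) : EV S n X Y := by
  have : Limits.IsZero (ModuleCat.of S X) := ModuleCat.isZero_of_subsingleton _
  refine subsingleton_of_forall_eq 0 fun x => ?_
  rw [← x.mk₀_id_comp, this.eq_of_src (𝟙 _) 0]
  simp

/-- Retracts in the second variable. -/
lemma EV.retract_right {n : ℕ} (i : Y →ₗ[S] Z) (r : Z →ₗ[S] Y) (hri : r ∘ₗ i = LinearMap.id)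
    (h : EV S n X Z) : EV S n X Y := by
  refine subsingleton_of_forall_eq 0 fun x => ?_
  have : 𝟙 (ModuleCat.of S Y) = ModuleCat.ofHom i ≫ ModuleCat.ofHom r := by
    ext1; exact hri.symm
  rw [← x.comp_mk₀_id, this, ← Abelian.Ext.mk₀_comp_mk₀, ← Abelian.Ext.comp_assoc_of_third_deg_zero,
    h.elim (x.comp _ _) 0, Abelian.Ext.zero_comp]

/-- Retracts in the first variable. -/
lemma EV.retract_left {n : ℕ} (i : X →ₗ[S] Z) (r : Z →ₗ[S] X) (hri : r ∘ₗ i = LinearMap.id)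
    (h : EV S n Z Y) : EV S n X Y := by
  refine subsingleton_of_forall_eq 0 fun x => ?_
  have : 𝟙 (ModuleCat.of S X) = ModuleCat.ofHom i ≫ ModuleCat.ofHom r := by
    ext1; exact hri.symm
  rw [← x.mk₀_id_comp, this, ← Abelian.Ext.mk₀_comp_mk₀_assoc,
    h.elim (Abelian.Ext.comp _ x _) 0, Abelian.Ext.comp_zero]

lemma EV.congr_right {n : ℕ} (e : Y ≃ₗ[S] Z) (h : EV S n X Z) : EV S n X Y :=
  h.retract_right e.toLinearMap e.symm.toLinearMap (by ext; simp)

lemma EV.congr_left {n : ℕ} (e : X ≃ₗ[S] Z) (h : EV S n Z Y) : EV S n X Y :=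
  h.retract_left e.toLinearMap e.symm.toLinearMap (by ext; simp)

lemma EV.prod_right {n : ℕ} (h1 : EV S n X Y) (h2 : EV S n X Z) : EV S n X (Y × Z) :=
  EV.cov2 (SES.prod Y Z) h1 h2

lemma EV.prod_left {n : ℕ} (h1 : EV S n Y X) (h2 : EV S n Z X) : EV S n (Y × Z) X :=
  EV.con2 (SES.prod Y Z) h1 h2

lemma SES.pi_succ (Y : Type) [AddCommGroup Y] [Module S Y] (m : ℕ) :
    ∃ (f : (Fin m → Y) →ₗ[S] (Fin (m+1) → Y)) (g : (Fin (m+1) → Y) →ₗ[S] Y), SES f g := by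
  refine ⟨LinearMap.pi (Fin.cases 0 (fun i => LinearMap.proj i)), LinearMap.proj 0, ?_, ?_, ?_⟩
  · intro a b hab
    ext i
    have := congrFun hab i.succ
    simpa using this
  · intro y
    exact ⟨fun _ => y, rfl⟩
  · intro y
    constructor
    · intro hy
      refine ⟨fun i => y i.succ, ?_⟩
      ext i
      refine Fin.cases ?_ (fun i => ?_) i
      · simpa using hy.symm
      · simp
    · rintro ⟨x, rfl⟩
      simp

lemma EV.pi_right {n : ℕ} (h1 : EV S n X Y) (m : ℕ) : EV S n X (Fin m → Y) := by
  induction m with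
  | zero => exact EV.of_subsingleton_right n
  | succ m ih =>
    obtain ⟨f, g, h⟩ := SES.pi_succ (S := S) Y m
    exact EV.cov2 h ih h1

lemma EV.pi_left {n : ℕ} (h1 : EV S n Y X) (m : ℕ) : EV S n (Fin m → Y) X := by
  induction m with
  | zero => exact EV.of_subsingleton_left n
  | succ m ih =>
    obtain ⟨f, g, h⟩ := SES.pi_succ (S := S) Y m
    exact EV.con2 h ih h1

/-- split from `Ext^1 = 0`. -/
lemma EV.split {f : A →ₗ[S] B} {g : B →ₗ[S] C} (h : SES f g) (h1 : EV S 1 C A) :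
    ∃ s : C →ₗ[S] B, g ∘ₗ s = LinearMap.id := EV.lift h h1 _

end ExtPart

end QHPaper

namespace QHPaper
open CategoryTheory

section Filtrations

variable {S : Type} [Ring S]
variable {A B C X Y Z : Type} [AddCommGroup A] [Module S A]
    [AddCommGroup B] [Module S B] [AddCommGroup C] [Module S C]
    [AddCommGroup X] [Module S X] [AddCommGroup Y] [Module S Y] [AddCommGroup Z] [Module S Z]

lemma SES.finite {f : A →ₗ[S] B} {g : B →ₗ[S] C} (h : SES f g) (hA : Module.Finite S A)
    (hC : Module.Finite S C) : Module.Finite S B := by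
  have h1 : Module.Finite S (LinearMap.ker g) := by
    rw [h.exact.linearMap_ker_eq]; infer_instance
  have h2 : Module.Finite S (B ⧸ LinearMap.ker g) :=
    Module.Finite.equiv (g.quotKerEquivOfSurjective h.surj).symm
  exact Module.Finite.of_submodule_quotient (LinearMap.ker g)

lemma SES.finite_right {f : A →ₗ[S] B} {g : B →ₗ[S] C} (h : SES f g) (hA : Module.Finite S B) :
    Module.Finite S C := Module.Finite.of_surjective g h.surj

lemma SES.finite_left [IsArtinianRing S] {f : A →ₗ[S] B} {g : B →ₗ[S] C} (h : SES f g)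
    (hA : Module.Finite S B) : Module.Finite S A := Module.Finite.of_injective f h.inj

lemma SES.length_right [IsArtinianRing S] {f : A →ₗ[S] B} {g : B →ₗ[S] C} (h : SES f g)
    [Nontrivial A] [Module.Finite S B] : Module.length S C < Module.length S B := by
  rw [Module.length_eq_add_of_exact f g h.inj h.surj h.exact]
  have := h.finite_right (S := S) inferInstance
  rw [add_comm]
  exact (ENat.add_lt_add_iff_left Module.length_ne_top).2 Module.length_pos |>.trans_eq' (add_zero _)

lemma SES.length_left [IsArtinianRing S] {f : A →ₗ[S] B} {g : B →ₗ[S] C} (h : SES f g)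
    [Nontrivial C] [Module.Finite S B] : Module.length S A < Module.length S B := by
  rw [Module.length_eq_add_of_exact f g h.inj h.surj h.exact]
  have := h.finite_left (S := S) inferInstance
  exact (ENat.add_lt_add_iff_left Module.length_ne_top).2 Module.length_pos |>.trans_eq' (add_zero _)

/-- Pushout of a short exact sequence. -/
lemma SES.pushout {f : A →ₗ[S] B} {g : B →ₗ[S] C} (h : SES f g) (φ : A →ₗ[S] X) :
    ∃ (N : ModuleCat.{0} S) (ι : X →ₗ[S] N) (Φ : B →ₗ[S] N) (q : N →ₗ[S] C),
      SES ι q ∧ Φ ∘ₗ f = ι ∘ₗ φ ∧ q ∘ₗ Φ = g ∧ q ∘ₗ ι = 0 ∧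
      (∀ n, ∃ x b, n = ι x + Φ b) ∧ (∀ x b, ι x + Φ b = 0 → ∃ a, φ a = -x ∧ f a = b) := by
  let R : Submodule S (X × B) := LinearMap.range (φ.prod (-f))
  let Φ : B →ₗ[S] ((X × B) ⧸ R) := R.mkQ ∘ₗ LinearMap.inr S X B
  let ι : X →ₗ[S] ((X × B) ⧸ R) := R.mkQ ∘ₗ LinearMap.inl S X B
  let q : ((X × B) ⧸ R) →ₗ[S] C := R.liftQ (g ∘ₗ LinearMap.snd S X B) (by
    rintro _ ⟨a, rfl⟩
    simp [h.exact.apply_apply_eq_zero])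
  have hq : ∀ x b, q (R.mkQ (x, b)) = g b := fun x b => rfl
  have hfac : ∀ x b, R.mkQ (x, b) = ι x + Φ b := by
    intro x b
    change _ = R.mkQ (x, 0) + R.mkQ (0, b)
    rw [← map_add]; simp
  have hz : ∀ x b, R.mkQ (x, b) = 0 → ∃ a, φ a = -x ∧ f a = b := by
    intro x b hxb
    rw [Submodule.mkQ_apply, Submodule.Quotient.mk_eq_zero] at hxb
    obtain ⟨a, ha⟩ := hxb
    have h1 : φ a = x := congrArg Prod.fst ha
    have h2 : - f a = b := congrArg Prod.snd ha
    exact ⟨-a, by rw [map_neg, h1], by rw [map_neg, h2]⟩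
  refine ⟨ModuleCat.of S ((X × B) ⧸ R), ι, Φ, q, ⟨?_, ?_, ?_⟩, ?_, ?_, ?_, ?_, ?_⟩
  · rw [← LinearMap.ker_eq_bot, LinearMap.ker_eq_bot']
    intro x hx
    obtain ⟨a, h1, h2⟩ := hz x 0 hx
    have : a = 0 := h.inj (by rw [h2, map_zero])
    rw [this, map_zero] at h1
    exact neg_eq_zero.1 h1.symm
  · intro c
    obtain ⟨b, rfl⟩ := h.surj c
    exact ⟨R.mkQ (0, b), hq _ _⟩
  · intro n
    obtain ⟨⟨x, b⟩, rfl⟩ := R.mkQ_surjective n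
    constructor
    · intro hn
      obtain ⟨a, rfl⟩ := (h.exact b).1 hn
      refine ⟨x + φ a, ?_⟩
      change R.mkQ (x + φ a, 0) = _
      rw [← sub_eq_zero, ← map_sub, Submodule.mkQ_apply, Submodule.Quotient.mk_eq_zero]
      exact ⟨a, by simp⟩
    · rintro ⟨y, hy⟩
      rw [← hy]
      change g 0 = 0
      simp
  · ext a
    change R.mkQ (0, f a) = R.mkQ (φ a, 0)
    rw [eq_comm, ← sub_eq_zero, ← map_sub, Submodule.mkQ_apply, Submodule.Quotient.mk_eq_zero]
    exact ⟨a, by simp⟩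
  · ext b
    rfl
  · ext x
    exact map_zero g
  · intro n
    obtain ⟨⟨x, b⟩, rfl⟩ := R.mkQ_surjective n
    exact ⟨x, b, hfac x b⟩
  · intro x b hxb
    rw [← hfac] at hxb
    exact hz x b hxb

/-- Pushout of two monomorphisms. -/
lemma SES.pushout₂ {f : A →ₗ[S] B} {g : B →ₗ[S] C} (h : SES f g) {φ : A →ₗ[S] X}
    {ψ : X →ₗ[S] Y} (h' : SES φ ψ) :
    ∃ (N : ModuleCat.{0} S) (ι : X →ₗ[S] N) (Φ : B →ₗ[S] N) (q : N →ₗ[S] C) (q' : N →ₗ[S] Y),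
      SES ι q ∧ SES Φ q' ∧ Φ ∘ₗ f = ι ∘ₗ φ ∧ q ∘ₗ Φ = g ∧ q' ∘ₗ ι = ψ := by
  obtain ⟨N, ι, Φ, q, h1, h2, h3, h3', h4, h5⟩ := h.pushout φ
  have hs : SES (φ.prod (-f)) (ι.coprod Φ) := by
    refine ⟨?_, ?_, ?_⟩
    · intro a b hab
      exact h'.inj (congrArg Prod.fst hab)
    · intro n
      obtain ⟨x, b, rfl⟩ := h4 n
      exact ⟨(x, b), rfl⟩
    · rintro ⟨x, b⟩
      constructor
      · intro hxb
        obtain ⟨a, ha1, ha2⟩ := h5 x b hxb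
        refine ⟨-a, ?_⟩
        simp [ha1, ha2]
      · rintro ⟨a, ha⟩
        rw [← ha]
        have := LinearMap.congr_fun h2 a
        simp at this
        simp [this]
  obtain ⟨q', hq'⟩ := hs.descend (ψ.coprod (0 : B →ₗ[S] Y)) (by
    ext a; simp [h'.exact.apply_apply_eq_zero])
  have hι : q' ∘ₗ ι = ψ := by
    ext x
    have := LinearMap.congr_fun hq' (x, 0)
    simpa using this
  have hΦ : q' ∘ₗ Φ = 0 := by
    ext x
    have := LinearMap.congr_fun hq' (0, x)
    simpa using this
  refine ⟨N, ι, Φ, q, q', h1, ⟨?_, ?_, ?_⟩, h2, h3, hι⟩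
  · rw [← LinearMap.ker_eq_bot, LinearMap.ker_eq_bot']
    intro b hb
    obtain ⟨a, ha1, ha2⟩ := h5 0 b (by simpa using hb)
    have : a = 0 := h'.inj (by simpa using ha1)
    rw [← ha2, this, map_zero]
  · intro y
    obtain ⟨x, rfl⟩ := h'.surj y
    exact ⟨ι x, LinearMap.congr_fun hι x⟩
  · intro n
    constructor
    · intro hn
      obtain ⟨x, b, rfl⟩ := h4 n
      have hx : ψ x = 0 := by
        have e1 := LinearMap.congr_fun hι x
        have e2 := LinearMap.congr_fun hΦ b
        simp only [LinearMap.comp_apply, LinearMap.zero_apply] at e1 e2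
        rw [map_add, e1, e2, add_zero] at hn
        exact hn
      obtain ⟨a, rfl⟩ := (h'.exact x).1 hx
      refine ⟨f a + b, ?_⟩
      have := LinearMap.congr_fun h2 a
      simp only [LinearMap.comp_apply] at this
      rw [map_add, this]
    · rintro ⟨b, rfl⟩
      exact LinearMap.congr_fun hΦ b

/-- A composite of epimorphisms: kernel filtration. -/
lemma SES.comp_surj {f : A →ₗ[S] B} {g : B →ₗ[S] C} (h : SES f g) {φ : X →ₗ[S] C}
    {ψ : C →ₗ[S] Y} (h' : SES φ ψ) :
    ∃ (f' : A →ₗ[S] LinearMap.ker (ψ ∘ₗ g)) (g' : LinearMap.ker (ψ ∘ₗ g) →ₗ[S] X),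
      SES f' g' ∧ SES (LinearMap.ker (ψ ∘ₗ g)).subtype (ψ ∘ₗ g) ∧
      φ ∘ₗ g' = g ∘ₗ (LinearMap.ker (ψ ∘ₗ g)).subtype := by
  have hs : SES (LinearMap.ker (ψ ∘ₗ g)).subtype (ψ ∘ₗ g) :=
    SES.of_surj _ (h'.surj.comp h.surj)
  obtain ⟨g', hg'⟩ := h'.factor (g ∘ₗ (LinearMap.ker (ψ ∘ₗ g)).subtype) (by
    ext x; exact x.2)
  obtain ⟨f', hf'⟩ := hs.factor f (by ext x; simp [h.exact.apply_apply_eq_zero])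
  have hg2 : ∀ x, φ (g' x) = g x := fun x => LinearMap.congr_fun hg' x
  have hf2 : ∀ x, (f' x : B) = f x := fun x => LinearMap.congr_fun hf' x
  refine ⟨f', g', ⟨?_, ?_, ?_⟩, hs, hg'⟩
  · intro a b hab
    apply h.inj
    rw [← hf2, ← hf2, hab]
  · intro x
    obtain ⟨b, hb⟩ := h.surj (φ x)
    refine ⟨⟨b, ?_⟩, ?_⟩
    · simp [hb, h'.exact.apply_apply_eq_zero]
    · apply h'.inj
      rw [hg2, hb]
  · intro x
    constructor
    · intro hx
      have : g x = 0 := by rw [← hg2, hx, map_zero]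
      obtain ⟨a, ha⟩ := (h.exact _).1 this
      exact ⟨a, Subtype.ext (by rw [hf2, ha])⟩
    · rintro ⟨a, rfl⟩
      apply h'.inj
      rw [hg2, hf2, map_zero, h.exact.apply_apply_eq_zero]

/-- Modules with a filtration by the `D i`. -/
inductive Filt {ι : Type} (D : ι → ModuleCat.{0} S) : ModuleCat.{0} S → Prop
  | zero (M : ModuleCat.{0} S) (h : Subsingleton M) : Filt D M
  | ext {A B : ModuleCat.{0} S} (i : ι) (f : A →ₗ[S] B) (g : B →ₗ[S] D i) (h : SES f g)
      (hA : Filt D A) : Filt D B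

variable {ι : Type} {D : ι → ModuleCat.{0} S}

lemma Filt.congr {M N : ModuleCat.{0} S} (e : M ≃ₗ[S] N) (h : Filt D M) : Filt D N := by
  cases h with
  | zero _ h =>
    exact Filt.zero _ (e.symm.injective.subsingleton)
  | ext i f g h hA =>
    refine Filt.ext i (e.toLinearMap ∘ₗ f) (g ∘ₗ e.symm.toLinearMap) ⟨?_, ?_, ?_⟩ hA
    · exact e.injective.comp h.inj
    · exact h.surj.comp e.symm.surjective
    · intro n
      have := h.exact (e.symm n)
      refine Iff.trans this ?_
      constructor
      · rintro ⟨a, ha⟩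
        exact ⟨a, by simp [ha]⟩
      · rintro ⟨a, ha⟩
        exact ⟨a, by simp [← ha]⟩

lemma Filt.single (i : ι) : Filt D (D i) :=
  Filt.ext (A := ModuleCat.of S PUnit) i 0 LinearMap.id
    (SES.zero_left (LinearEquiv.refl S (D i)) PUnit) (Filt.zero _ (inferInstanceAs (Subsingleton PUnit)))

lemma Filt.extension {A B C : ModuleCat.{0} S} {f : A →ₗ[S] B} {g : B →ₗ[S] C} (h : SES f g)
    (hA : Filt D A) (hC : Filt D C) : Filt D B := by
  induction hC generalizing B with
  | zero M hM =>
    refine hA.congr (LinearEquiv.ofBijective f ⟨h.inj, fun b => (h.exact b).1 (Subsingleton.elim _ _)⟩)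
  | ext i φ ψ h' hA' ih =>
    obtain ⟨f', g', hs, hs', -⟩ := h.comp_surj h'
    exact Filt.ext (A := ModuleCat.of S (LinearMap.ker (ψ ∘ₗ g))) i _ _ hs' (ih hs)

lemma Filt.mono {κ : Type} {D' : κ → ModuleCat.{0} S} {M : ModuleCat.{0} S} (h : Filt D M)
    (H : ∀ i, Filt D' (D i)) : Filt D' M := by
  induction h with
  | zero M hM => exact Filt.zero M hM
  | ext i φ ψ h' hA' ih => exact Filt.extension h' ih (H i)

lemma Filt.finite {M : ModuleCat.{0} S} (h : Filt D M) (H : ∀ i, Module.Finite S (D i)) :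
    Module.Finite S M := by
  induction h with
  | zero M hM => infer_instance
  | ext i φ ψ h' hA' ih => exact h'.finite ih (H i)

lemma Filt.ev_left {M : ModuleCat.{0} S} (h : Filt D M) (n : ℕ) (H : ∀ i, EV S n (D i) X) :
    EV S n M X := by
  induction h with
  | zero M hM => exact EV.of_subsingleton_left n
  | ext i φ ψ h' hA' ih => exact EV.con2 h' ih (H i)

lemma Filt.ev_right {M : ModuleCat.{0} S} (h : Filt D M) (n : ℕ) (H : ∀ i, EV S n X (D i)) :
    EV S n X M := by
  induction h with
  | zero M hM => exact EV.of_subsingleton_right n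
  | ext i φ ψ h' hA' ih => exact EV.cov2 h' ih (H i)

lemma Filt.prod {M N : ModuleCat.{0} S} (hM : Filt D M) (hN : Filt D N) :
    Filt D (ModuleCat.of S (M × N)) :=
  Filt.extension (B := ModuleCat.of S (M × N)) (SES.prod M N) hM hN

lemma Filt.pi {M : ModuleCat.{0} S} (hM : Filt D M) (m : ℕ) :
    Filt D (ModuleCat.of S (Fin m → M)) := by
  induction m with
  | zero => exact Filt.zero _ (inferInstanceAs (Subsingleton (Fin 0 → M)))
  | succ m ih =>
    obtain ⟨f, g, h⟩ := SES.pi_succ (S := S) M m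
    exact Filt.extension (B := ModuleCat.of S (Fin (m+1) → M)) h ih hM

/-- The subquotient sequence. -/
lemma SES.subquot {M : ModuleCat.{0} S} {A B : Submodule S M} (hAB : A ≤ B) {E : Type}
    [AddCommGroup E] [Module S E] (e : subquot S A B ≃ₗ[S] E) :
    SES (Submodule.inclusion hAB) (e.toLinearMap ∘ₗ (Submodule.comap B.subtype A).mkQ) := by
  refine ⟨Submodule.inclusion_injective hAB, e.surjective.comp (Submodule.mkQ_surjective _), ?_⟩
  intro x
  simp only [LinearMap.comp_apply, LinearEquiv.coe_coe, LinearEquiv.map_eq_zero_iff,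
    Submodule.mkQ_apply, Submodule.Quotient.mk_eq_zero, Submodule.mem_comap, Submodule.subtype_apply]
  constructor
  · intro hx
    exact ⟨⟨x, hx⟩, rfl⟩
  · rintro ⟨y, rfl⟩
    exact y.2

/-- Initial segments of a filtration. -/
lemma Filt.of_filtration {M : ModuleCat.{0} S} {n : ℕ} {f : Fin (n + 1) → Submodule S M}
    {κ : Type} {D' : κ → ModuleCat.{0} S}
    {D : Fin n → ModuleCat.{0} S} (h : HasFiltrationWithSections S M n f D)
    (j : Fin (n+1)) (H : ∀ i : Fin n, i.castSucc < j → Filt D' (D i)) :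
    Filt D' (ModuleCat.of S (f j)) := by
  induction j using Fin.induction with
  | zero =>
    refine Filt.zero _ ?_
    rw [h.2.1]
    exact inferInstanceAs (Subsingleton (⊥ : Submodule S M))
  | succ i ih =>
    obtain ⟨e⟩ := h.2.2.2 i
    exact Filt.extension (A := ModuleCat.of S (f i.castSucc)) (B := ModuleCat.of S (f i.succ))
      (SES.subquot (h.1 i.castSucc_lt_succ.le) e) (ih fun k hk => H k (hk.trans i.castSucc_lt_succ))
      (H i i.castSucc_lt_succ)

lemma Filt.of_hasFiltration {M : ModuleCat.{0} S} {n : ℕ} {f : Fin (n + 1) → Submodule S M}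
    {g : Fin n → ι} (h : HasFiltrationWithSections S M n f (fun i => D (g i))) : Filt D M := by
  have := Filt.of_filtration (D' := D) h (Fin.last n) (fun i _ => Filt.single _)
  rw [h.2.2.1] at this
  exact this.congr Submodule.topEquiv

/-- Equivalence from equal kernels. -/
lemma equiv_of_surj {f : A →ₗ[S] B} {g : A →ₗ[S] C} (hf : Function.Surjective f)
    (hg : Function.Surjective g) (h : LinearMap.ker f = LinearMap.ker g) :
    Nonempty (B ≃ₗ[S] C) :=
  ⟨(f.quotKerEquivOfSurjective hf).symm.trans
    ((Submodule.quotEquivOfEq _ _ h).trans (g.quotKerEquivOfSurjective hg))⟩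

lemma subquot_map {A B : ModuleCat.{0} S} {f : A →ₗ[S] B} (hf : Function.Injective f)
    (U V : Submodule S A) : Nonempty (subquot S U V ≃ₗ[S] subquot S (U.map f) (V.map f)) := by
  let F : V →ₗ[S] (V.map f) := f.restrict (fun x hx => Submodule.mem_map_of_mem hx)
  have hF : Function.Surjective F := by
    rintro ⟨_, ⟨x, hx, rfl⟩⟩
    exact ⟨⟨x, hx⟩, rfl⟩
  refine equiv_of_surj (Submodule.mkQ_surjective _)
    (g := (Submodule.comap (V.map f).subtype (U.map f)).mkQ ∘ₗ F)
    ((Submodule.mkQ_surjective _).comp hF) ?_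
  ext x
  simp only [Submodule.ker_mkQ, Submodule.mem_comap, LinearMap.mem_ker, LinearMap.comp_apply,
    Submodule.mkQ_apply, Submodule.Quotient.mk_eq_zero, Submodule.subtype_apply]
  constructor
  · intro hx
    exact Submodule.mem_map_of_mem hx
  · rintro ⟨y, hy, hyx⟩
    have : y = x := hf hyx
    rwa [← this]

lemma subquot_congr {M : ModuleCat.{0} S} {U U' V V' : Submodule S M} {i i' : ι}
    (hU : U = U') (hV : V = V') (hi : i = i') (h : Nonempty (subquot S U V ≃ₗ[S] D i)) :
    Nonempty (subquot S U' V' ≃ₗ[S] D i') := by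
  subst hU; subst hV; subst hi; exact h

lemma Filt.exists_hasFiltration {M : ModuleCat.{0} S} (h : Filt D M) :
    ∃ (n : ℕ) (f : Fin (n + 1) → Submodule S M) (g : Fin n → ι),
      HasFiltrationWithSections S M n f (fun i => D (g i)) := by
  induction h with
  | zero M hM =>
    exact ⟨0, fun _ => ⊥, Fin.elim0, monotone_const, rfl, Subsingleton.elim _ _, fun i => i.elim0⟩
  | @ext A B i φ ψ h' hA' ih =>
    obtain ⟨n, f, g, hm, h0, hl, hs⟩ := ih
    refine ⟨n+1, Fin.snoc (fun j => (f j).map φ) ⊤, Fin.snoc g i, ?_, ?_, ?_, ?_⟩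
    · rw [Fin.monotone_iff_le_succ]
      intro j
      refine Fin.lastCases ?_ (fun j => ?_) j
      · simp
      · rw [Fin.snoc_castSucc, ← Fin.castSucc_succ, Fin.snoc_castSucc]
        exact Submodule.map_mono (hm j.castSucc_lt_succ.le)
    · rw [← Fin.castSucc_zero, Fin.snoc_castSucc, h0, Submodule.map_bot]
    · simp
    · intro j
      refine Fin.lastCases ?_ (fun j => ?_) j
      · refine subquot_congr (U := (⊤ : Submodule S A).map φ) (V := ⊤) (i := i) (by rw [Fin.snoc_castSucc, hl])
          (by rw [Fin.succ_last, Fin.snoc_last]) (by rw [Fin.snoc_last]) ?_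
        refine equiv_of_surj (A := (⊤ : Submodule S B)) (Submodule.mkQ_surjective _)
          (g := (ψ ∘ₗ (⊤ : Submodule S B).subtype : (⊤ : Submodule S B) →ₗ[S] D i)) ?_ ?_
        · intro x
          obtain ⟨y, hy⟩ := h'.surj x
          exact ⟨⟨y, trivial⟩, hy⟩
        · ext x
          simp only [Submodule.ker_mkQ, Submodule.mem_comap, LinearMap.mem_ker,
            LinearMap.comp_apply, Submodule.subtype_apply, Submodule.map_top]
          exact (h'.exact x).symm
      · obtain ⟨e⟩ := hs j
        obtain ⟨e'⟩ := subquot_map h'.inj (f j.castSucc) (f j.succ)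
        refine subquot_congr (U := (f j.castSucc).map φ) (V := (f j.succ).map φ) (i := g j)
          (by rw [Fin.snoc_castSucc])
          (by rw [← Fin.castSucc_succ, Fin.snoc_castSucc]) (by rw [Fin.snoc_castSucc])
          ⟨e'.symm.trans e⟩

variable {Λ : Type} [Fintype Λ] [PartialOrder Λ]

lemma inCostdFilt_iff (Q : QHData S Λ) (M : ModuleCat.{0} S) :
    InCostdFilt S Q M ↔ Filt Q.costd M :=
  ⟨fun ⟨_, _, _, h⟩ => Filt.of_hasFiltration h, fun h => h.exists_hasFiltration⟩

lemma inStdFilt_iff (Q : QHData S Λ) (M : ModuleCat.{0} S) :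
    InStdFilt S Q M ↔ Filt Q.std M :=
  ⟨fun ⟨_, _, _, h⟩ => Filt.of_hasFiltration h, fun h => h.exists_hasFiltration⟩

end Filtrations

end QHPaper

namespace QHPaper
open CategoryTheory

/-- The finiteness properties of a finite-dimensional algebra that we use. -/
class FDA (S : Type) [Ring S] : Prop where
  art : IsArtinianRing S
  homfin : ∀ (A M : ModuleCat.{0} S), Module.Finite S A → Module.Finite S M →
    ∃ (m : ℕ) (φ : Fin m → (A →ₗ[S] M)), ∀ (ψ : A →ₗ[S] M) (B N : ModuleCat.{0} S)
      (f : A →ₗ[S] B) (j : M →ₗ[S] N), (∀ i, ∃ Φ : B →ₗ[S] N, Φ ∘ₗ f = j ∘ₗ φ i) →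
      ∃ Ψ : B →ₗ[S] N, Ψ ∘ₗ f = j ∘ₗ ψ
  enough : ∀ M : ModuleCat.{0} S, Module.Finite S M →
    ∃ (E : ModuleCat.{0} S) (j : M →ₗ[S] E), Module.Finite S E ∧ Module.Injective S E ∧
      Function.Injective j

instance FDA.instArt (S : Type) [Ring S] [FDA S] : IsArtinianRing S := FDA.art

section Weights

variable {S : Type} [Ring S] {Λ : Type} [Fintype Λ] [PartialOrder Λ] (Q : QHData S Λ)
variable {A B C M N X Y Z : Type} [AddCommGroup A] [Module S A]
    [AddCommGroup B] [Module S B] [AddCommGroup C] [Module S C]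
    [AddCommGroup M] [Module S M] [AddCommGroup N] [Module S N]
    [AddCommGroup X] [Module S X] [AddCommGroup Y] [Module S Y] [AddCommGroup Z] [Module S Z]

/-- `mu` is a weight of `M`. -/
def QHData.wt (M : Type) [AddCommGroup M] [Module S M] (mu : Λ) : Prop :=
  ∃ φ : Q.P mu →ₗ[S] M, φ ≠ 0

instance QHData.instSimpleL (lam : Λ) : IsSimpleModule S (Q.L lam) := Q.simpleL lam
instance QHData.instNontrivialL (lam : Λ) : Nontrivial (Q.L lam) :=
  IsSimpleModule.nontrivial S (Q.L lam)
instance QHData.instFiniteL (lam : Λ) : Module.Finite S (Q.L lam) := Q.finiteL lam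
instance QHData.instProjP (lam : Λ) : Module.Projective S (Q.P lam) := (Q.projCover lam).1
instance QHData.instInjI (lam : Λ) : Module.Injective S (Q.I lam) := (Q.injHull lam).1

instance QHData.instFiniteP (lam : Λ) : Module.Finite S (Q.P lam) := by
  obtain ⟨π, hπ, hs⟩ := (Q.projCover lam).2
  obtain ⟨m, hm⟩ := exists_ne (0 : Q.L lam)
  have h1 := IsSimpleModule.toSpanSingleton_surjective S hm
  obtain ⟨φ, hφ⟩ := Module.projective_lifting_property π (LinearMap.toSpanSingleton S (Q.L lam) m) hπ
  have : LinearMap.range φ = ⊤ := by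
    apply hs
    rw [eq_top_iff]
    intro x _
    obtain ⟨s, hs⟩ := h1 (π x)
    have h3 : π (φ s) = π x := by rw [← hs, ← hφ]; rfl
    rw [Submodule.mem_sup]
    exact ⟨φ s, ⟨s, rfl⟩, x - φ s, by simp [h3], by simp⟩
  exact Module.Finite.of_surjective φ (LinearMap.range_eq_top.1 this)

instance QHData.instFiniteI [FDA S] (lam : Λ) : Module.Finite S (Q.I lam) := by
  obtain ⟨j, hj, he⟩ := (Q.injHull lam).2
  obtain ⟨E, i, hE1, hE2, hi⟩ := FDA.enough (Q.L lam) inferInstance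
  obtain ⟨φ, hφ⟩ := Module.Injective.extension_property S E _ _ j hj i
  have : LinearMap.ker φ = ⊥ := by
    apply he
    rw [eq_bot_iff]
    rintro x ⟨hx, ⟨y, rfl⟩⟩
    have h1 : i y = 0 := by rw [← hφ]; exact hx
    have : y = 0 := hi (by rw [h1, map_zero])
    simp [this]
  exact Module.Finite.of_injective φ (LinearMap.ker_eq_bot.1 this)

/-- Proper submodules of `P lam` lie in the unique maximal one. -/
lemma QHData.proj_max (lam : Λ) : ∃ π : Q.P lam →ₗ[S] Q.L lam, Function.Surjective π ∧
    ∀ N : Submodule S (Q.P lam), N ≠ ⊤ → N ≤ LinearMap.ker π := by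
  obtain ⟨π, hπ, hs⟩ := (Q.projCover lam).2
  refine ⟨π, hπ, fun N hN => ?_⟩
  have hc : IsCoatom (LinearMap.ker π) := by
    rw [← isSimpleModule_iff_isCoatom]
    exact IsSimpleModule.congr (π.quotKerEquivOfSurjective hπ)
  by_contra h
  have : LinearMap.ker π < N ⊔ LinearMap.ker π :=
    lt_of_le_of_ne le_sup_right (fun h' => h (h' ▸ le_sup_left))
  exact hN (hs N (hc.2 _ this))

lemma QHData.simple_of_hom (lam : Λ) [IsSimpleModule S N] (φ : Q.P lam →ₗ[S] N) (hφ : φ ≠ 0) :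
    Nonempty (N ≃ₗ[S] Q.L lam) := by
  obtain ⟨π, hπ, hs⟩ := Q.proj_max lam
  have hsur := LinearMap.surjective_of_ne_zero hφ
  refine equiv_of_surj hsur hπ ?_
  have hc : IsCoatom (LinearMap.ker φ) := by
    rw [← isSimpleModule_iff_isCoatom]
    exact IsSimpleModule.congr (φ.quotKerEquivOfSurjective hsur)
  have hc' : IsCoatom (LinearMap.ker π) := by
    rw [← isSimpleModule_iff_isCoatom]
    exact IsSimpleModule.congr (π.quotKerEquivOfSurjective hπ)
  rcases (hs _ hc.1).eq_or_lt with h | h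
  · exact h
  · exact absurd (hc.2 _ h) hc'.1

variable {Q}

lemma QHData.wt.of_inj {mu : Λ} (h : Q.wt A mu) (f : A →ₗ[S] B) (hf : Function.Injective f) :
    Q.wt B mu := by
  obtain ⟨φ, hφ⟩ := h
  refine ⟨f ∘ₗ φ, fun h0 => hφ ?_⟩
  ext x
  exact hf (by rw [← LinearMap.comp_apply, h0]; simp)

lemma QHData.wt.of_surj {mu : Λ} (h : Q.wt C mu) (g : B →ₗ[S] C) (hg : Function.Surjective g) :
    Q.wt B mu := by
  obtain ⟨φ, hφ⟩ := h
  obtain ⟨ψ, hψ⟩ := Module.projective_lifting_property g φ hg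
  exact ⟨ψ, fun h0 => hφ (by rw [← hψ, h0, LinearMap.comp_zero])⟩

lemma QHData.wt.mid {mu : Λ} {f : A →ₗ[S] B} {g : B →ₗ[S] C} (h : Q.wt B mu) (hs : SES f g) :
    Q.wt A mu ∨ Q.wt C mu := by
  obtain ⟨φ, hφ⟩ := h
  by_cases h0 : g ∘ₗ φ = 0
  · obtain ⟨ψ, hψ⟩ := hs.factor φ h0
    exact Or.inl ⟨ψ, fun h1 => hφ (by rw [← hψ, h1, LinearMap.comp_zero])⟩
  · exact Or.inr ⟨_, h0⟩

lemma QHData.wt.congr {mu : Λ} (h : Q.wt A mu) (e : A ≃ₗ[S] B) : Q.wt B mu :=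
  h.of_inj e.toLinearMap e.injective

lemma QHData.wt.nontrivial {mu : Λ} (h : Q.wt A mu) : Nontrivial A := by
  obtain ⟨φ, hφ⟩ := h
  by_contra hA
  rw [not_nontrivial_iff_subsingleton] at hA
  exact hφ (by ext; exact Subsingleton.elim _ _)

variable (Q)

lemma QHData.wt_simple {lam : Λ} (e : N ≃ₗ[S] Q.L lam) : Q.wt N lam := by
  obtain ⟨π, hπ, -⟩ := Q.proj_max lam
  refine QHData.wt.congr ⟨π, ?_⟩ e.symm
  rintro rfl
  obtain ⟨x, hx⟩ := exists_ne (0 : Q.L lam)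
  obtain ⟨y, hy⟩ := hπ x
  exact hx (by simpa using hy.symm)

lemma QHData.wt_L {lam mu : Λ} : Q.wt (Q.L lam) mu ↔ mu = lam := by
  constructor
  · rintro ⟨φ, hφ⟩
    obtain ⟨e⟩ := Q.simple_of_hom mu φ hφ
    by_contra h
    exact (Q.nonisoL lam mu (Ne.symm h)).elim e
  · rintro rfl
    exact Q.wt_simple (LinearEquiv.refl _ _)

lemma QHData.wt_iff (M : ModuleCat.{0} S) (mu : Λ) : IsCompFactor S (Q.L mu) M ↔ Q.wt M mu := by
  constructor
  · rintro ⟨A, B, hAB, ⟨e⟩⟩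
    have h1 := Q.wt_simple e
    exact (h1.of_surj _ (Submodule.mkQ_surjective _)).of_inj _ B.injective_subtype
  · rintro ⟨φ, hφ⟩
    obtain ⟨π, hπ, hmax⟩ := Q.proj_max mu
    have hk : LinearMap.ker φ ≤ LinearMap.ker π := hmax _ (fun h => hφ (LinearMap.ker_eq_top.1 h))
    refine ⟨(LinearMap.ker π).map φ, LinearMap.range φ, ?_, ?_⟩
    · exact LinearMap.map_le_range
    · refine equiv_of_surj (A := Q.P mu)
        (f := (Submodule.comap (LinearMap.range φ).subtype ((LinearMap.ker π).map φ)).mkQ ∘ₗ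
          φ.rangeRestrict) ((Submodule.mkQ_surjective _).comp φ.surjective_rangeRestrict) hπ ?_
      ext x
      simp only [LinearMap.mem_ker, LinearMap.comp_apply, Submodule.mkQ_apply,
        Submodule.Quotient.mk_eq_zero, Submodule.mem_comap, Submodule.subtype_apply,
        LinearMap.codRestrict_apply, LinearMap.rangeRestrict, Submodule.mem_map]
      constructor
      · rintro ⟨y, hy, hyx⟩
        have : x - y ∈ LinearMap.ker π := hk (by simp [hyx])
        have h2 : π (x - y) = 0 := this
        rw [map_sub, hy, sub_zero] at h2
        exact h2
      · intro hx
        exact ⟨x, hx, rfl⟩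

variable {Q}

lemma QHData.exists_sub [IsArtinianRing S] (Q : QHData S Λ) (M : Type) [AddCommGroup M] [Module S M]
    [Module.Finite S M] [Nontrivial M] : ∃ (mu : Λ) (j : Q.L mu →ₗ[S] M), Function.Injective j := by
  obtain ⟨a, ha⟩ := IsAtomic.exists_atom (Submodule S M)
  have := isSimpleModule_iff_isAtom.2 ha
  obtain ⟨mu, ⟨e⟩⟩ := Q.fullL (ModuleCat.of S a) this
  exact ⟨mu, a.subtype ∘ₗ e.symm.toLinearMap, a.injective_subtype.comp e.symm.injective⟩

lemma QHData.exists_quot [IsArtinianRing S] (Q : QHData S Λ) (M : Type) [AddCommGroup M] [Module S M]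
    [Module.Finite S M] [Nontrivial M] : ∃ (mu : Λ) (p : M →ₗ[S] Q.L mu), Function.Surjective p := by
  obtain ⟨a, ha⟩ := IsCoatomic.exists_coatom (Submodule S M)
  have := isSimpleModule_iff_isCoatom.2 ha
  obtain ⟨mu, ⟨e⟩⟩ := Q.fullL (ModuleCat.of S (M ⧸ a)) this
  exact ⟨mu, e.toLinearMap ∘ₗ a.mkQ, e.surjective.comp a.mkQ_surjective⟩

lemma QHData.exists_wt [IsArtinianRing S] (Q : QHData S Λ) (M : Type) [AddCommGroup M] [Module S M]
    [Module.Finite S M] [Nontrivial M] : ∃ mu, Q.wt M mu := by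
  obtain ⟨mu, j, hj⟩ := Q.exists_sub M
  exact ⟨mu, (Q.wt_L.2 rfl).of_inj j hj⟩

/-- Vanishing of homs by disjoint weights. -/
lemma QHData.hom_eq_zero [IsArtinianRing S] (Q : QHData S Λ) [Module.Finite S M]
    (φ : M →ₗ[S] N) (h : ∀ mu, Q.wt M mu → ¬ Q.wt N mu) : φ = 0 := by
  by_contra hφ
  have : Nontrivial (LinearMap.range φ) := by
    rw [Submodule.nontrivial_iff_ne_bot]
    exact fun h => hφ (LinearMap.range_eq_bot.1 h)
  obtain ⟨mu, hmu⟩ := Q.exists_wt (LinearMap.range φ)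
  exact h mu (hmu.of_surj _ φ.surjective_rangeRestrict) (hmu.of_inj _ (Submodule.injective_subtype _))

/-- Basic properties of standard modules. -/
lemma QHData.std_spec (Q : QHData S Λ) (lam : Λ) :
    ∃ p : Q.P lam →ₗ[S] Q.std lam, Function.Surjective p ∧
    (∀ mu, Q.wt (Q.std lam) mu → mu ≤ lam) ∧
    ∀ (M : Type) [AddCommGroup M] [Module S M] (φ : Q.P lam →ₗ[S] M),
      (∀ mu, Q.wt M mu → mu ≤ lam) → ∃ ψ : Q.std lam →ₗ[S] M, ψ ∘ₗ p = φ := by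
  obtain ⟨K, ⟨e⟩, h1, h2⟩ := Q.stdSpec lam
  have hs : SES K.subtype (e.symm.toLinearMap ∘ₗ K.mkQ) := by
    refine ⟨K.injective_subtype, e.symm.surjective.comp K.mkQ_surjective, ?_⟩
    rw [LinearMap.exact_iff]
    ext x; simp
  refine ⟨e.symm.toLinearMap ∘ₗ K.mkQ, hs.surj, ?_, ?_⟩
  · intro mu hmu
    exact h1 mu ((Q.wt_iff _ _).2 (hmu.congr e))
  · intro M _ _ φ hM
    apply hs.descend
    have hK : K ≤ LinearMap.ker φ := by
      apply h2
      intro mu hmu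
      rw [Q.wt_iff] at hmu
      apply hM
      exact hmu.of_inj _ (LinearMap.ker_eq_bot.1 (Submodule.ker_liftQ_eq_bot _ φ le_rfl le_rfl))
    ext x
    exact hK x.2

instance QHData.instFiniteStd (Q : QHData S Λ) (lam : Λ) : Module.Finite S (Q.std lam) := by
  obtain ⟨p, hp, -⟩ := Q.std_spec lam
  exact Module.Finite.of_surjective p hp

lemma QHData.std_le (Q : QHData S Λ) {lam mu : Λ} (h : Q.wt (Q.std lam) mu) : mu ≤ lam := by
  obtain ⟨p, hp, h1, -⟩ := Q.std_spec lam
  exact h1 mu h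

/-- Basic properties of costandard modules. -/
lemma QHData.costd_spec (Q : QHData S Λ) (lam : Λ) :
    ∃ (i : Q.costd lam →ₗ[S] Q.I lam) (j : Q.L lam →ₗ[S] Q.costd lam),
    Function.Injective i ∧ Function.Injective j ∧
    (∀ N : Submodule S (Q.costd lam), N ⊓ LinearMap.range j = ⊥ → N = ⊥) ∧
    (∀ mu, Q.wt (Q.costd lam) mu → mu ≤ lam) ∧
    ∀ (M : Type) [AddCommGroup M] [Module S M] (φ : M →ₗ[S] Q.I lam),
      (∀ mu, Q.wt M mu → mu ≤ lam) → ∃ ψ : M →ₗ[S] Q.costd lam, i ∘ₗ ψ = φ := by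
  obtain ⟨V, ⟨e⟩, h1, h2⟩ := Q.costdSpec lam
  obtain ⟨k, hk, he⟩ := (Q.injHull lam).2
  have hs : SES (V.subtype ∘ₗ e.toLinearMap) V.mkQ := by
    refine ⟨V.injective_subtype.comp e.injective, V.mkQ_surjective, ?_⟩
    rw [LinearMap.exact_iff]
    ext x; simp
  have huniv : ∀ (M : Type) [AddCommGroup M] [Module S M] (φ : M →ₗ[S] Q.I lam),
      (∀ mu, Q.wt M mu → mu ≤ lam) →
        ∃ ψ : M →ₗ[S] Q.costd lam, (V.subtype ∘ₗ e.toLinearMap) ∘ₗ ψ = φ := by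
    intro M _ _ φ hM
    apply hs.factor
    have hK : LinearMap.range φ ≤ V := by
      apply h2
      intro mu hmu
      rw [Q.wt_iff] at hmu
      exact hM _ (hmu.of_surj _ φ.surjective_rangeRestrict)
    ext x
    have := hK ⟨x, rfl⟩
    simpa using this
  obtain ⟨j, hj⟩ := huniv (Q.L lam) k (fun mu h => (Q.wt_L.1 h).le)
  refine ⟨V.subtype ∘ₗ e.toLinearMap, j, hs.inj, ?_, ?_, ?_, huniv⟩
  · intro x y hxy
    apply hk
    rw [← hj]
    simp [hxy]
  · intro N hN
    have : N.map (V.subtype ∘ₗ e.toLinearMap) = ⊥ := by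
      apply he
      rw [eq_bot_iff]
      rintro _ ⟨⟨x, hx, rfl⟩, ⟨y, hy⟩⟩
      have hxy : x = j y := by
        apply hs.inj
        rw [← hy, ← hj]; rfl
      have : x ∈ N ⊓ LinearMap.range j := ⟨hx, ⟨y, hxy.symm⟩⟩
      rw [hN] at this
      rw [(Submodule.mem_bot S).1 this]; simp
    exact (Submodule.map_injective_of_injective hs.inj) (this.trans (Submodule.map_bot _).symm)
  · intro mu hmu
    exact h1 mu ((Q.wt_iff _ _).2 (hmu.congr e))

instance QHData.instFiniteCostd [FDA S] (Q : QHData S Λ) (lam : Λ) :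
    Module.Finite S (Q.costd lam) := by
  obtain ⟨p, j, hp, -⟩ := Q.costd_spec lam
  exact Module.Finite.of_injective p hp

lemma QHData.costd_le (Q : QHData S Λ) {lam mu : Λ} (h : Q.wt (Q.costd lam) mu) : mu ≤ lam := by
  obtain ⟨p, j, hp, -, -, h1, -⟩ := Q.costd_spec lam
  exact h1 mu h

/-- `L lam` occurs exactly once in `M`. -/
def QHData.One (Q : QHData S Λ) (M : Type) [AddCommGroup M] [Module S M] (lam : Λ) : Prop :=
  Q.wt M lam ∧ ∀ X : Submodule S M, Q.wt X lam → ¬ Q.wt (M ⧸ X) lam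

lemma fin_exists_step {n : ℕ} (p : Fin (n+1) → Prop) (h0 : ¬ p 0) (h1 : p (Fin.last n)) :
    ∃ i : Fin n, ¬ p i.castSucc ∧ p i.succ := by
  by_contra h
  push Not at h
  have : ∀ j, ¬ p j := by
    intro j
    induction j using Fin.induction with
    | zero => exact h0
    | succ i ih => exact h i ih
  exact this _ h1

lemma QHData.one_of_mult (Q : QHData S Λ) {M : ModuleCat.{0} S} {lam : Λ}
    (h : CompFactorMult S (Q.L lam) M 1) : Q.One M lam := by
  obtain ⟨n, f, hm, h0, hl, hsim, hcard⟩ := h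
  obtain ⟨⟨i, hi⟩, huniq⟩ := (Nat.card_eq_one_iff_unique.1 hcard).2, (Nat.card_eq_one_iff_unique.1 hcard).1
  obtain ⟨⟨i, ⟨e⟩⟩⟩ := (Nat.card_eq_one_iff_unique.1 hcard).2
  have key : ∀ (j : Fin n) (φ : Q.P lam →ₗ[S] f j.succ),
      (∃ x, (φ x : M) ∉ f j.castSucc) → j = i ∧
        f j.succ ≤ f j.castSucc ⊔ LinearMap.range ((f j.succ).subtype ∘ₗ φ) := by
    rintro j φ ⟨x, hx⟩
    have := hsim j
    let ψ := (Submodule.comap (f j.succ).subtype (f j.castSucc)).mkQ ∘ₗ φ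
    have hψ : ψ ≠ 0 := by
      intro h
      apply hx
      have := LinearMap.congr_fun h x
      simpa [ψ] using this
    constructor
    · have := Q.simple_of_hom lam ψ hψ
      exact congrArg Subtype.val (huniq.elim ⟨j, this⟩ ⟨i, ⟨e⟩⟩)
    · intro y hy
      obtain ⟨z, hz⟩ := LinearMap.surjective_of_ne_zero hψ (Submodule.Quotient.mk ⟨y, hy⟩)
      have hz' : y - φ z ∈ f j.castSucc := by
        have := (Submodule.Quotient.eq _).1 hz.symm
        simpa using this
      rw [Submodule.mem_sup]
      exact ⟨_, hz', φ z, ⟨z, rfl⟩, by simp⟩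
  refine ⟨(Q.wt_iff M lam).1 ⟨_, _, hm i.castSucc_lt_succ.le, ⟨e⟩⟩, ?_⟩
  rintro X ⟨φ, hφ⟩ ⟨ψ, hψ⟩
  -- first part
  have h1 : f i.succ ≤ f i.castSucc ⊔ X := by
    obtain ⟨j, hj1, hj2⟩ := fin_exists_step
      (fun j => LinearMap.range (X.subtype ∘ₗ φ) ≤ f j) (by
        rw [h0]
        intro h
        apply hφ
        ext x
        have := h ⟨x, rfl⟩
        simpa using this) (by rw [hl]; exact le_top)
    have hj3 : ∀ x, (φ x : M) ∈ f j.succ := fun x => hj2 ⟨x, rfl⟩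
    obtain ⟨hji, hle⟩ := key j ((X.subtype ∘ₗ φ).codRestrict _ hj3) (by
      by_contra hcon
      push Not at hcon
      apply hj1
      rintro _ ⟨x, rfl⟩
      exact hcon x)
    subst hji
    refine hle.trans (sup_le_sup_left ?_ _)
    rintro _ ⟨x, rfl⟩
    exact (φ x).2
  -- second part
  obtain ⟨j, hj1, hj2⟩ := fin_exists_step
      (fun j => LinearMap.range ψ ≤ (f j).map X.mkQ) (by
        rw [h0]
        intro h
        apply hψ
        ext x
        have := h ⟨x, rfl⟩
        simpa using this) (by
          rw [hl]
          intro y hy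
          obtain ⟨z, rfl⟩ := X.mkQ_surjective y
          exact ⟨z, trivial, rfl⟩)
  let g : f j.succ →ₗ[S] (f j.succ).map X.mkQ :=
    X.mkQ.restrict (fun x hx => Submodule.mem_map_of_mem hx)
  have hg : Function.Surjective g := by
    rintro ⟨_, ⟨x, hx, rfl⟩⟩
    exact ⟨⟨x, hx⟩, rfl⟩
  obtain ⟨χ, hχ⟩ := Module.projective_lifting_property g
    (ψ.codRestrict _ (fun x => hj2 ⟨x, rfl⟩)) hg
  have hχ' : ∀ x, X.mkQ (χ x) = ψ x := fun x => congrArg Subtype.val (LinearMap.congr_fun hχ x)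
  obtain ⟨hji, -⟩ := key j χ (by
    by_contra hcon
    push Not at hcon
    apply hj1
    rintro _ ⟨x, rfl⟩
    exact ⟨_, hcon x, hχ' x⟩)
  subst hji
  apply hj1
  rintro _ ⟨x, rfl⟩
  obtain ⟨u, hu, v, hv, huv⟩ := Submodule.mem_sup.1 (h1 (χ x).2)
  refine ⟨u, hu, ?_⟩
  rw [← hχ', ← huv, map_add]
  have : X.mkQ v = 0 := by simpa using hv
  rw [this, add_zero]

lemma QHData.mult_of_one [IsArtinianRing S] (Q : QHData S Λ) {M : ModuleCat.{0} S} {lam : Λ}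
    [Module.Finite S M] (h : Q.One M lam) : CompFactorMult S (Q.L lam) M 1 := by
  obtain ⟨s, hs0, hsl⟩ := isFiniteLength_iff_exists_compositionSeries.1
    (isFiniteLength_iff_isNoetherian_isArtinian.2 ⟨inferInstance, inferInstance⟩ : IsFiniteLength S M)
  have hmono : Monotone s.toFun := by
    rw [Fin.monotone_iff_le_succ]
    intro i
    exact (s.step i).le
  have hsimp : ∀ i : Fin s.length, IsSimpleModule S (subquot S (s.toFun i.castSucc) (s.toFun i.succ)) := by
    intro i
    exact covBy_iff_quot_is_simple (s.step i).le |>.1 (s.step i)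
  refine ⟨s.length, s.toFun, hmono, hs0, hsl, hsimp, ?_⟩
  rw [Nat.card_eq_one_iff_unique]
  constructor
  · constructor
    rintro ⟨i, ⟨ei⟩⟩ ⟨j, ⟨ej⟩⟩
    have main : ∀ i j : Fin s.length,
        (subquot S (s.toFun i.castSucc) (s.toFun i.succ) ≃ₗ[S] Q.L lam) →
        (subquot S (s.toFun j.castSucc) (s.toFun j.succ) ≃ₗ[S] Q.L lam) → ¬ i < j := by
      intro i j ei ej hij
      refine h.2 (s.toFun i.succ) ?_ ?_
      · exact (Q.wt_simple ei).of_surj _ (Submodule.mkQ_surjective _)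
      · have hle : s.toFun i.succ ≤ s.toFun j.castSucc := hmono (by
          rw [Fin.le_def]; simpa using hij)
        obtain ⟨φ, hφ⟩ := (Q.wt_simple ej).of_surj _ (Submodule.mkQ_surjective _)
        obtain ⟨ψ, hψ⟩ := Q.wt_simple ej
        obtain ⟨χ, hχ⟩ := Module.projective_lifting_property
          (Submodule.comap (s.toFun j.succ).subtype (s.toFun j.castSucc)).mkQ ψ
          (Submodule.mkQ_surjective _)
        refine ⟨(s.toFun i.succ).mkQ ∘ₗ (s.toFun j.succ).subtype ∘ₗ χ, fun h0 => hψ ?_⟩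
        rw [← hχ]
        ext x
        have h1 := LinearMap.congr_fun h0 x
        simp only [LinearMap.comp_apply, Submodule.mkQ_apply, LinearMap.zero_apply,
          Submodule.Quotient.mk_eq_zero, Submodule.subtype_apply] at h1
        simp only [LinearMap.comp_apply, Submodule.mkQ_apply, LinearMap.zero_apply,
          Submodule.Quotient.mk_eq_zero, Submodule.mem_comap, Submodule.subtype_apply]
        exact hle h1
    apply Subtype.ext
    rcases lt_trichotomy i j with h1 | h1 | h1
    · exact absurd h1 (main i j ei ej)
    · exact h1
    · exact absurd h1 (main j i ej ei)
  · obtain ⟨φ, hφ⟩ := h.1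
    obtain ⟨j, hj1, hj2⟩ := fin_exists_step (fun j => LinearMap.range φ ≤ s.toFun j) (by
        have : s.toFun 0 = ⊥ := hs0
        rw [this]
        intro h
        exact hφ (LinearMap.range_eq_bot.1 (le_bot_iff.1 h)))
        (by have : s.toFun (Fin.last _) = ⊤ := hsl
            rw [this]; exact le_top)
    have := hsimp j
    refine ⟨⟨j, Q.simple_of_hom lam ((Submodule.comap (s.toFun j.succ).subtype
      (s.toFun j.castSucc)).mkQ ∘ₗ φ.codRestrict _ (fun x => hj2 ⟨x, rfl⟩)) ?_⟩⟩
    intro h0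
    apply hj1
    rintro _ ⟨x, rfl⟩
    have h1 := LinearMap.congr_fun h0 x
    simpa using h1

lemma QHData.One.ses {Q : QHData S Λ} {lam : Λ} {f : A →ₗ[S] B} {g : B →ₗ[S] C}
    (h : Q.One B lam) (hs : SES f g) (hA : Q.wt A lam) : ¬ Q.wt C lam := by
  intro hC
  refine h.2 (LinearMap.ker g) ?_ ?_
  · rw [hs.exact.linearMap_ker_eq]
    exact hA.congr (LinearEquiv.ofInjective f hs.inj)
  · exact hC.congr (g.quotKerEquivOfSurjective hs.surj).symm

lemma QHData.std_one (Q : QHData S Λ) (lam : Λ) : Q.One (Q.std lam) lam :=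
  Q.one_of_mult (Q.multOne lam)

end Weights

end QHPaper

namespace QHPaper
open CategoryTheory

section QHTheory

variable {S : Type} [Ring S] {Λ : Type} [Fintype Λ] [PartialOrder Λ]
variable {A B C M N X Y Z : Type} [AddCommGroup A] [Module S A]
    [AddCommGroup B] [Module S B] [AddCommGroup C] [Module S C]
    [AddCommGroup M] [Module S M] [AddCommGroup N] [Module S N]
    [AddCommGroup X] [Module S X] [AddCommGroup Y] [Module S Y] [AddCommGroup Z] [Module S Z]

lemma Filt.hom_eq_zero {ι : Type} {D : ι → ModuleCat.{0} S} {M : ModuleCat.{0} S} (h : Filt D M)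
    (H : ∀ i (φ : D i →ₗ[S] X), φ = 0) (φ : M →ₗ[S] X) : φ = 0 := by
  induction h with
  | zero M hM => ext x; rw [Subsingleton.elim x 0]; simp
  | ext i f g h' hA' ih =>
    obtain ⟨ψ, hψ⟩ := h'.descend φ (ih _)
    rw [← hψ, H i ψ, LinearMap.zero_comp]

lemma Filt.wt {ι : Type} {D : ι → ModuleCat.{0} S} {M : ModuleCat.{0} S} (h : Filt D M)
    {Q : QHData S Λ} {mu : Λ} (hmu : Q.wt M mu) : ∃ i, Q.wt (D i) mu := by
  induction h with
  | zero M hM => exact absurd hmu.nontrivial (not_nontrivial_iff_subsingleton.2 hM)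
  | ext i f g h' hA' ih =>
    rcases hmu.mid h' with h | h
    · exact ih h
    · exact ⟨i, h⟩

variable (Q : QHData S Λ)

/-- A nonzero quotient of `std lam` has weight `lam`. -/
lemma QHData.wt_of_std_hom {lam : Λ} {φ : Q.std lam →ₗ[S] M} (hφ : φ ≠ 0) : Q.wt M lam := by
  obtain ⟨p, hp, -⟩ := Q.std_spec lam
  refine ⟨φ ∘ₗ p, fun h => hφ ?_⟩
  ext x
  obtain ⟨y, rfl⟩ := hp x
  exact LinearMap.congr_fun h y

lemma QHData.std_rad (lam : Λ) : ∃ (R : ModuleCat.{0} S) (i : R →ₗ[S] Q.std lam)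
    (p : Q.std lam →ₗ[S] Q.L lam), SES i p ∧ ∀ mu, Q.wt R mu → mu < lam := by
  obtain ⟨p, hp, hle, huniv⟩ := Q.std_spec lam
  obtain ⟨π, hπ, -⟩ := Q.proj_max lam
  obtain ⟨q, hq⟩ := huniv (Q.L lam) π (fun mu h => (Q.wt_L.1 h).le)
  have hqs : Function.Surjective q := by
    intro y
    obtain ⟨x, hx⟩ := hπ y
    exact ⟨p x, by rw [← hx, ← hq]; rfl⟩
  have hs := SES.of_surj q hqs
  refine ⟨ModuleCat.of S (LinearMap.ker q), _, q, hs, fun mu hmu => ?_⟩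
  refine lt_of_le_of_ne (hle mu (hmu.of_inj _ hs.inj)) ?_
  rintro rfl
  exact (Q.std_one mu).ses hs hmu (Q.wt_L.2 rfl)

lemma QHData.costd_soc (lam : Λ) : ∃ (R : ModuleCat.{0} S) (i : Q.L lam →ₗ[S] Q.costd lam)
    (p : Q.costd lam →ₗ[S] R), SES i p ∧ (∀ mu, Q.wt R mu → mu < lam) ∧
    ∀ N : Submodule S (Q.costd lam), N ≠ ⊥ → LinearMap.range i ≤ N := by
  obtain ⟨i, j, hi, hj, hess, hle, -⟩ := Q.costd_spec lam
  have hat : IsAtom (LinearMap.range j) := by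
    rw [← isSimpleModule_iff_isAtom]
    exact IsSimpleModule.congr (LinearEquiv.ofInjective j hj).symm
  have hmin : ∀ N : Submodule S (Q.costd lam), N ≠ ⊥ → LinearMap.range j ≤ N := by
    intro N hN
    have h1 : N ⊓ LinearMap.range j ≠ ⊥ := fun h => hN (hess N h)
    by_contra hcon
    have : N ⊓ LinearMap.range j < LinearMap.range j :=
      lt_of_le_of_ne inf_le_right (fun h => hcon (h ▸ inf_le_left))
    exact h1 (hat.2 _ this)
  have hs := SES.of_inj j hj
  refine ⟨ModuleCat.of S (Q.costd lam ⧸ LinearMap.range j), j, _, hs, fun mu hmu => ?_, hmin⟩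
  refine lt_of_le_of_ne (hle mu (hmu.of_surj _ hs.surj)) ?_
  rintro rfl
  obtain ⟨p, hp, hle', huniv⟩ := Q.std_spec mu
  obtain ⟨φ, hφ⟩ := hmu
  obtain ⟨ψ, hψ⟩ := Module.projective_lifting_property _ φ hs.surj
  obtain ⟨χ, hχ⟩ := huniv _ ψ hle
  let q := (LinearMap.range j).mkQ ∘ₗ χ
  have hq : q ≠ 0 := by
    intro h0
    apply hφ
    rw [← hψ, ← hχ, ← LinearMap.comp_assoc]
    change q ∘ₗ p = 0
    rw [h0, LinearMap.zero_comp]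
  have hχ0 : LinearMap.range χ ≠ ⊥ := by
    intro h0
    rw [LinearMap.range_eq_bot] at h0
    exact hq (by simp [q, h0])
  have hLχ := hmin _ hχ0
  refine (Q.std_one mu).ses (SES.of_surj q.rangeRestrict q.surjective_rangeRestrict) ?_ ?_
  · -- the kernel surjects onto `L`
    have : ∀ x : LinearMap.ker q.rangeRestrict, (χ x) ∈ LinearMap.range j := by
      rintro ⟨x, hx⟩
      have : q x = 0 := by
        have := congrArg Subtype.val hx
        simpa using this
      simpa [q] using this
    refine QHData.wt.of_surj (C := LinearMap.range j) ?_
      ((χ ∘ₗ (LinearMap.ker q.rangeRestrict).subtype).codRestrict _ this) ?_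
    · exact Q.wt_simple (LinearEquiv.ofInjective j hj).symm
    · rintro ⟨y, hy⟩
      obtain ⟨x, hx⟩ := hLχ hy
      refine ⟨⟨x, ?_⟩, Subtype.ext hx⟩
      rw [LinearMap.mem_ker]
      apply Subtype.ext
      change q x = 0
      simp only [q, LinearMap.comp_apply, hx]
      simpa using hy
  · refine Q.wt_of_std_hom (φ := q.rangeRestrict) (fun h0 => hq ?_)
    ext x
    exact congrArg Subtype.val (LinearMap.congr_fun h0 x)

lemma QHData.costd_wt (lam : Λ) : Q.wt (Q.costd lam) lam := by
  obtain ⟨R, i, p, hs, -⟩ := Q.costd_soc lam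
  exact (Q.wt_L.2 rfl).of_inj i hs.inj

lemma QHData.std_wt (lam : Λ) : Q.wt (Q.std lam) lam := (Q.std_one lam).1

lemma ses_top_subquot {M : ModuleCat.{0} S} {U V : Submodule S M} (hUV : U ≤ V) (hV : V = ⊤)
    {E : ModuleCat.{0} S} (e : subquot S U V ≃ₗ[S] E) :
    ∃ (i : U →ₗ[S] M) (p : M →ₗ[S] E), SES i p := by
  have hs := SES.subquot hUV e
  subst hV
  refine ⟨U.subtype, (e.toLinearMap ∘ₗ (Submodule.comap (⊤ : Submodule S M).subtype U).mkQ) ∘ₗ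
    Submodule.topEquiv.symm.toLinearMap, U.injective_subtype,
    hs.surj.comp Submodule.topEquiv.symm.surjective, ?_⟩
  intro x
  refine (hs.exact (Submodule.topEquiv.symm x)).trans ?_
  constructor
  · rintro ⟨y, hy⟩
    exact ⟨y, congrArg Subtype.val hy⟩
  · rintro ⟨y, hy⟩
    exact ⟨y, Subtype.ext hy⟩

/-- The top of `P lam`. -/
lemma QHData.proj_ses (lam : Λ) : ∃ (Om : ModuleCat.{0} S) (f : Om →ₗ[S] Q.P lam)
    (p : Q.P lam →ₗ[S] Q.std lam), SES f p ∧
    Filt (fun nu : {nu : Λ // lam < nu} => Q.std nu) Om := by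
  obtain ⟨n, f, g, hf, hg, hc⟩ := Q.projFilt lam
  rcases n with _ | n
  · exfalso
    have h1 : (⊥ : Submodule S (Q.P lam)) = ⊤ := by rw [← hf.2.1, ← hf.2.2.1]; rfl
    obtain ⟨π, hπ, -⟩ := Q.proj_max lam
    obtain ⟨x, hx⟩ := exists_ne (0 : Q.L lam)
    obtain ⟨y, hy⟩ := hπ x
    have : y ∈ (⊥ : Submodule S (Q.P lam)) := by rw [h1]; trivial
    rw [(Submodule.mem_bot S).1 this, map_zero] at hy
    exact hx hy.symm
  · have hlast : f (Fin.last n).succ = ⊤ := hf.2.2.1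
    obtain ⟨e⟩ := hf.2.2.2 (Fin.last n)
    have hs' : ∃ (i : f (Fin.last n).castSucc →ₗ[S] Q.P lam)
        (p : Q.P lam →ₗ[S] Q.std (g (Fin.last n))), SES i p := ses_top_subquot (hf.1 (Fin.last n).castSucc_lt_succ.le) hlast e
    have hgl : g (Fin.last n) = lam := by
      obtain ⟨i, p, hip⟩ := hs'
      obtain ⟨R, j, q, hjq, -⟩ := Q.std_rad (g (Fin.last n))
      have : Q.wt (Q.L (g (Fin.last n))) lam := by
        refine ⟨q ∘ₗ p, fun h0 => ?_⟩
        obtain ⟨x, hx⟩ := exists_ne (0 : Q.L (g (Fin.last n)))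
        obtain ⟨y, hy⟩ := hjq.surj.comp hip.surj x
        exact hx (hy.symm.trans (LinearMap.congr_fun h0 y))
      exact (Q.wt_L.1 this).symm
    have huniq := (Nat.card_eq_one_iff_unique.1 hc).1
    rw [hgl] at hs'
    obtain ⟨i, p, hip⟩ := hs'
    refine ⟨ModuleCat.of S (f (Fin.last n).castSucc), i, p, hip, ?_⟩
    refine Filt.of_filtration hf _ (fun k hk => ?_)
    have hk' : lam < g k := by
      refine lt_of_le_of_ne (hg k) (fun h => ?_)
      have := congrArg Subtype.val (huniq.elim ⟨k, h.symm⟩ ⟨Fin.last n, hgl⟩)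
      have h2 : k = Fin.last n := this
      subst h2
      exact lt_irrefl _ hk
    exact Filt.single (D := fun nu : {nu : Λ // lam < nu} => Q.std nu) ⟨g k, hk'⟩

lemma QHData.ev_std_of_wt {lam : Λ} (h : ∀ mu, Q.wt M mu → ¬ lam < mu) : EV S 1 (Q.std lam) M := by
  obtain ⟨Om, f, p, hs, hF⟩ := Q.proj_ses lam
  refine EV.of_extend hs (EV.of_proj 0) (fun φ => ⟨0, ?_⟩)
  rw [LinearMap.zero_comp, eq_comm]
  refine hF.hom_eq_zero (fun nu ψ => ?_) φ
  by_contra h0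
  exact h _ (Q.wt_of_std_hom h0) nu.2

lemma QHData.ev_costd_of_wt [IsArtinianRing S] [Module.Finite S M] {lam : Λ}
    (h : ∀ mu, Q.wt M mu → mu ≤ lam) : EV S 1 M (Q.costd lam) := by
  obtain ⟨i, j, hi, hj, -, hle, huniv⟩ := Q.costd_spec lam
  have hs := SES.of_inj i hi
  refine EV.of_lift hs (EV.of_inj inferInstance 0) (fun φ => ⟨0, ?_⟩)
  rw [LinearMap.comp_zero, eq_comm]
  let V : Submodule S (Q.I lam) := (LinearMap.range φ).comap (LinearMap.range i).mkQ
  have hV : ∀ mu, Q.wt V mu → mu ≤ lam := by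
    intro mu hmu
    let g : V →ₗ[S] LinearMap.range φ :=
      ((LinearMap.range i).mkQ ∘ₗ V.subtype).codRestrict _ (fun x => x.2)
    have hg : Function.Surjective g := by
      rintro ⟨y, hy⟩
      obtain ⟨x, rfl⟩ := (LinearMap.range i).mkQ_surjective y
      exact ⟨⟨x, hy⟩, rfl⟩
    rcases hmu.mid (SES.of_surj g hg) with h1 | h1
    · have hk : ∀ x : LinearMap.ker g, ((x : V) : Q.I lam) ∈ LinearMap.range i := by
        rintro ⟨x, hx⟩
        have h0 : (LinearMap.range i).mkQ (x : Q.I lam) = 0 := congrArg Subtype.val hx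
        simpa using h0
      have h2 : Q.wt (LinearMap.range i) mu := h1.of_inj
        ((V.subtype ∘ₗ (LinearMap.ker g).subtype).codRestrict _ hk) (by
          intro x y hxy
          have := congrArg Subtype.val hxy
          exact Subtype.ext (Subtype.ext this))
      exact hle mu (h2.congr (LinearEquiv.ofInjective i hi).symm)
    · exact h mu (h1.of_surj _ φ.surjective_rangeRestrict)
  obtain ⟨ψ, hψ⟩ := huniv V V.subtype hV
  ext m
  obtain ⟨x, hx⟩ := (LinearMap.range i).mkQ_surjective (φ m)
  have hxV : x ∈ V := by
    change (LinearMap.range i).mkQ x ∈ LinearMap.range φ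
    rw [hx]; exact ⟨m, rfl⟩
  have h3 : i (ψ ⟨x, hxV⟩) = x := LinearMap.congr_fun hψ ⟨x, hxV⟩
  rw [← hx, LinearMap.zero_apply]
  have : x ∈ LinearMap.range i := ⟨_, h3⟩
  simpa using this

lemma QHData.ev_std_costd [IsArtinianRing S] (n : ℕ) (lam mu : Λ) :
    EV S (n+1) (Q.std lam) (Q.costd mu) := by
  induction n generalizing lam with
  | zero =>
    by_cases h : ∀ nu, Q.wt (Q.costd mu) nu → ¬ lam < nu
    · exact Q.ev_std_of_wt h
    · push Not at h
      obtain ⟨nu, h1, h2⟩ := h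
      have : lam < mu := h2.trans_le (Q.costd_le h1)
      exact Q.ev_costd_of_wt (fun k hk => (Q.std_le hk).trans this.le)
  | succ n ih =>
    obtain ⟨Om, f, p, hs, hF⟩ := Q.proj_ses lam
    exact EV.con3 hs (hF.ev_left _ (fun nu => ih nu)) (EV.of_proj _)

variable {Q} in
lemma Filt.ev [IsArtinianRing S] {M N : ModuleCat.{0} S} (hM : Filt Q.std M) (hN : Filt Q.costd N)
    (n : ℕ) : EV S (n+1) M N :=
  hM.ev_left _ (fun lam => hN.ev_right _ (fun mu => Q.ev_std_costd n lam mu))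

/-- Induction on the length of finite modules. -/
lemma fin_induction [IsArtinianRing S] {p : ModuleCat.{0} S → Prop}
    (H : ∀ M : ModuleCat.{0} S, Module.Finite S M →
      (∀ N : ModuleCat.{0} S, Module.Finite S N → Module.length S N < Module.length S M → p N) → p M)
    (M : ModuleCat.{0} S) (hM : Module.Finite S M) : p M := by
  suffices ∀ (l : ℕ∞) (M : ModuleCat.{0} S), Module.Finite S M → Module.length S M = l → p M from
    this _ M hM rfl
  intro l
  induction l using WellFoundedLT.induction with
  | ind l ih =>
    intro M hM hl
    exact H M hM (fun N hN hlt => ih _ (hl ▸ hlt) N hN rfl)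

lemma QHData.ev_left_of_wt [IsArtinianRing S] (M : ModuleCat.{0} S) (hM : Module.Finite S M) (n : ℕ)
    (h : ∀ mu, Q.wt M mu → EV S n (Q.L mu) Y) : EV S n M Y := by
  revert h
  refine fin_induction (p := fun M => (∀ mu, Q.wt M mu → EV S n (Q.L mu) Y) → EV S n M Y) ?_ M hM
  intro M hM ih h
  rcases subsingleton_or_nontrivial M with h0 | h0
  · exact EV.of_subsingleton_left n
  · obtain ⟨mu, p, hp⟩ := Q.exists_quot M
    have hs := SES.of_surj p hp
    refine EV.con2 hs (ih (ModuleCat.of S (LinearMap.ker p)) (hs.finite_left hM) hs.length_left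
      (fun nu hnu => h nu (hnu.of_inj _ hs.inj))) (h mu ((Q.wt_L.2 rfl).of_surj p hp))

lemma QHData.ev_right_of_wt [IsArtinianRing S] (M : ModuleCat.{0} S) (hM : Module.Finite S M) (n : ℕ)
    (h : ∀ mu, Q.wt M mu → EV S n Y (Q.L mu)) : EV S n Y M := by
  revert h
  refine fin_induction (p := fun M => (∀ mu, Q.wt M mu → EV S n Y (Q.L mu)) → EV S n Y M) ?_ M hM
  intro M hM ih h
  rcases subsingleton_or_nontrivial M with h0 | h0
  · exact EV.of_subsingleton_right n
  · obtain ⟨mu, p, hp⟩ := Q.exists_quot M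
    have hs := SES.of_surj p hp
    refine EV.cov2 hs (ih (ModuleCat.of S (LinearMap.ker p)) (hs.finite_left hM) hs.length_left
      (fun nu hnu => h nu (hnu.of_inj _ hs.inj))) (h mu ((Q.wt_L.2 rfl).of_surj p hp))

/-- Criterion for a costandard filtration. -/
lemma QHData.filt_costd_of_ev [FDA S] (M : ModuleCat.{0} S) (hM : Module.Finite S M)
    (h : ∀ lam, EV S 1 (Q.std lam) M) : Filt Q.costd M := by
  revert h
  refine fin_induction (p := fun M => (∀ lam, EV S 1 (Q.std lam) M) → Filt Q.costd M) ?_ M hM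
  intro M hM ih h
  rcases subsingleton_or_nontrivial M with h0 | h0
  · exact Filt.zero M h0
  have hLs : ∀ mu (j : Q.L mu →ₗ[S] M), j ≠ 0 → ∃ φ : Q.std mu →ₗ[S] M, φ ≠ 0 := by
    intro mu j hj
    obtain ⟨R, i, p, hs, -⟩ := Q.std_rad mu
    refine ⟨j ∘ₗ p, fun h0 => hj ?_⟩
    ext x
    obtain ⟨y, rfl⟩ := hs.surj x
    exact LinearMap.congr_fun h0 y
  obtain ⟨lam, hlam, hmin⟩ : ∃ lam, (∃ φ : Q.std lam →ₗ[S] M, φ ≠ 0) ∧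
      ∀ mu, mu < lam → ¬ ∃ φ : Q.std mu →ₗ[S] M, φ ≠ 0 := by
    obtain ⟨mu, j, hj⟩ := Q.exists_sub M
    have hne : {mu | ∃ φ : Q.std mu →ₗ[S] M, φ ≠ 0}.Nonempty := ⟨mu, hLs mu j (by
      rintro rfl
      obtain ⟨x, hx⟩ := exists_ne (0 : Q.L mu)
      exact hx (hj (by simp)))⟩
    obtain ⟨lam, hl1, hl2⟩ := (Set.toFinite _).exists_minimal hne
    exact ⟨lam, hl1, fun mu hmu h => absurd (hl2 h hmu.le) (not_le_of_gt hmu)⟩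
  have hzero : ∀ (R : ModuleCat.{0} S), Module.Finite S R → (∀ mu, Q.wt R mu → mu < lam) →
      ∀ φ : R →ₗ[S] M, φ = 0 := by
    intro R hR hwt φ
    by_contra hφ
    have : Nontrivial (LinearMap.range φ) := by
      rw [Submodule.nontrivial_iff_ne_bot]
      exact fun h => hφ (LinearMap.range_eq_bot.1 h)
    obtain ⟨mu, j, hj⟩ := Q.exists_sub (LinearMap.range φ)
    have hmu : mu < lam := hwt mu
      (((Q.wt_L.2 rfl).of_inj j hj).of_surj _ φ.surjective_rangeRestrict)
    refine hmin mu hmu (hLs mu ((LinearMap.range φ).subtype ∘ₗ j) (fun h0 => ?_))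
    obtain ⟨x, hx⟩ := exists_ne (0 : Q.L mu)
    exact hx (hj (Subtype.ext (by simpa using LinearMap.congr_fun h0 x)))
  have hEL : ∀ nu, nu < lam → EV S 1 (Q.L nu) M := by
    intro nu hnu
    obtain ⟨R, i, p, hs, hwt⟩ := Q.std_rad nu
    refine EV.of_extend hs (h nu) (fun φ => ⟨0, ?_⟩)
    rw [hzero R (hs.finite_left inferInstance) (fun mu hmu => (hwt mu hmu).trans hnu) φ]
    simp
  obtain ⟨φ, hφ⟩ := hlam
  obtain ⟨R, i, p, hs, hwt⟩ := Q.std_rad lam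
  obtain ⟨j0, hj0⟩ := hs.descend φ (hzero R (hs.finite_left inferInstance) hwt _)
  have hj0n : j0 ≠ 0 := by
    rintro rfl
    exact hφ (by rw [← hj0]; simp)
  have hj0i := LinearMap.injective_of_ne_zero hj0n
  obtain ⟨C, i', p', hs', hwt', hsoc⟩ := Q.costd_soc lam
  have hEC : EV S 1 C M := Q.ev_left_of_wt C (hs'.finite_right inferInstance) 1
    (fun mu hmu => hEL mu (hwt' mu hmu))
  obtain ⟨k, hk⟩ := EV.extend hs' hEC j0
  have hki : Function.Injective k := by
    rw [← LinearMap.ker_eq_bot]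
    by_contra hcon
    obtain ⟨x, hx⟩ := exists_ne (0 : Q.L lam)
    have h1 : k (i' x) = 0 := hsoc _ hcon ⟨x, rfl⟩
    have h2 : j0 x = 0 := by rw [← hk]; exact h1
    exact hx (hj0i (by rw [h2, map_zero]))
  have hsk := SES.of_inj k hki
  have : Nontrivial (Q.costd lam) := (Q.costd_wt lam).nontrivial
  have hq : Filt Q.costd (ModuleCat.of S (M ⧸ LinearMap.range k)) :=
    ih (ModuleCat.of S (M ⧸ LinearMap.range k)) (hsk.finite_right hM) hsk.length_right
      (fun mu => EV.cov3 hsk (Q.ev_std_costd 1 mu lam) (h mu))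
  exact Filt.extension (C := ModuleCat.of S (M ⧸ LinearMap.range k)) hsk (Filt.single lam) hq

/-- Criterion for a standard filtration. -/
lemma QHData.filt_std_of_ev [FDA S] (M : ModuleCat.{0} S) (hM : Module.Finite S M)
    (h : ∀ lam, EV S 1 M (Q.costd lam)) : Filt Q.std M := by
  revert h
  refine fin_induction (p := fun M => (∀ lam, EV S 1 M (Q.costd lam)) → Filt Q.std M) ?_ M hM
  intro M hM ih h
  rcases subsingleton_or_nontrivial M with h0 | h0
  · exact Filt.zero M h0
  have hLs : ∀ mu (j : M →ₗ[S] Q.L mu), j ≠ 0 → ∃ φ : M →ₗ[S] Q.costd mu, φ ≠ 0 := by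
    intro mu j hj
    obtain ⟨R, i, p, hs, -⟩ := Q.costd_soc mu
    refine ⟨i ∘ₗ j, fun h0 => hj ?_⟩
    ext x
    exact hs.inj (by simpa using LinearMap.congr_fun h0 x)
  obtain ⟨lam, hlam, hmin⟩ : ∃ lam, (∃ φ : M →ₗ[S] Q.costd lam, φ ≠ 0) ∧
      ∀ mu, mu < lam → ¬ ∃ φ : M →ₗ[S] Q.costd mu, φ ≠ 0 := by
    obtain ⟨mu, j, hj⟩ := Q.exists_quot M
    have hne : {mu | ∃ φ : M →ₗ[S] Q.costd mu, φ ≠ 0}.Nonempty := ⟨mu, hLs mu j (by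
      rintro rfl
      obtain ⟨x, hx⟩ := exists_ne (0 : Q.L mu)
      obtain ⟨y, hy⟩ := hj x
      exact hx hy.symm)⟩
    obtain ⟨lam, hl1, hl2⟩ := (Set.toFinite _).exists_minimal hne
    exact ⟨lam, hl1, fun mu hmu h => absurd (hl2 h hmu.le) (not_le_of_gt hmu)⟩
  have hzero : ∀ (R : ModuleCat.{0} S), (∀ mu, Q.wt R mu → mu < lam) →
      ∀ φ : M →ₗ[S] R, φ = 0 := by
    intro R hwt φ
    by_contra hφ
    have : Nontrivial (LinearMap.range φ) := by
      rw [Submodule.nontrivial_iff_ne_bot]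
      exact fun h => hφ (LinearMap.range_eq_bot.1 h)
    obtain ⟨mu, j, hj⟩ := Q.exists_quot (LinearMap.range φ)
    have hmu : mu < lam := hwt mu
      (((Q.wt_L.2 rfl).of_surj j hj).of_inj _ (Submodule.injective_subtype _))
    refine hmin mu hmu (hLs mu (j ∘ₗ φ.rangeRestrict) (fun h0 => ?_))
    obtain ⟨x, hx⟩ := exists_ne (0 : Q.L mu)
    obtain ⟨y, hy⟩ := (hj.comp φ.surjective_rangeRestrict) x
    exact hx (hy.symm.trans (LinearMap.congr_fun h0 y))
  have hEL : ∀ nu, nu < lam → EV S 1 M (Q.L nu) := by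
    intro nu hnu
    obtain ⟨R, i, p, hs, hwt, -⟩ := Q.costd_soc nu
    refine EV.of_lift hs (h nu) (fun φ => ⟨0, ?_⟩)
    rw [hzero R (fun mu hmu => (hwt mu hmu).trans hnu) φ]
    simp
  obtain ⟨φ, hφ⟩ := hlam
  obtain ⟨R, i, p, hs, hwt, -⟩ := Q.costd_soc lam
  obtain ⟨j0, hj0⟩ := hs.factor φ (hzero R hwt _)
  have hj0n : j0 ≠ 0 := by
    rintro rfl
    exact hφ (by rw [← hj0]; simp)
  have hj0i := LinearMap.surjective_of_ne_zero hj0n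
  obtain ⟨C, i', p', hs', hwt'⟩ := Q.std_rad lam
  have hEC : EV S 1 M C := Q.ev_right_of_wt C (hs'.finite_left inferInstance) 1
    (fun mu hmu => hEL mu (hwt' mu hmu))
  obtain ⟨k, hk⟩ := EV.lift hs' hEC j0
  have hki : Function.Surjective k := by
    rw [← LinearMap.range_eq_top]
    by_contra hcon
    refine (Q.std_one lam).2 (LinearMap.range k) ?_ ?_
    · refine (Q.wt_L (lam := lam).2 rfl).of_surj (p' ∘ₗ (LinearMap.range k).subtype) ?_
      intro x
      obtain ⟨y, hy⟩ := hj0i x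
      exact ⟨⟨k y, y, rfl⟩, by rw [← hy, ← hk]; rfl⟩
    · refine Q.wt_of_std_hom (φ := (LinearMap.range k).mkQ) (fun h0 => hcon ?_)
      rw [← Submodule.ker_mkQ (LinearMap.range k), h0, LinearMap.ker_zero]
  have hsk := SES.of_surj k hki
  have : Nontrivial (Q.std lam) := (Q.std_wt lam).nontrivial
  have hq : Filt Q.std (ModuleCat.of S (LinearMap.ker k)) :=
    ih (ModuleCat.of S (LinearMap.ker k)) (hsk.finite_left hM) hsk.length_left
      (fun mu => EV.con1 hsk (Q.ev_std_costd 1 lam mu) (h mu))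
  exact Filt.ext lam _ _ hsk hq

lemma QHData.filt_costd_iff [FDA S] (M : ModuleCat.{0} S) (hM : Module.Finite S M) :
    Filt Q.costd M ↔ ∀ lam, EV S 1 (Q.std lam) M :=
  ⟨fun h lam => (Filt.single lam).ev h 0, Q.filt_costd_of_ev M hM⟩

lemma QHData.filt_std_iff [FDA S] (M : ModuleCat.{0} S) (hM : Module.Finite S M) :
    Filt Q.std M ↔ ∀ lam, EV S 1 M (Q.costd lam) :=
  ⟨fun h lam => h.ev (Filt.single lam) 0, Q.filt_std_of_ev M hM⟩

lemma QHData.bound_std : ∃ n, ∀ lam, ∀ i, n ≤ i → ∀ Y : ModuleCat.{0} S, EV S i (Q.std lam) Y := by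
  have h : ∀ lam, ∃ n, ∀ i, n ≤ i → ∀ Y : ModuleCat.{0} S, EV S i (Q.std lam) Y := by
    intro lam
    induction lam using WellFoundedGT.induction with
    | ind lam ih =>
      choose! n hn using ih
      refine ⟨Finset.univ.sup n + 1, fun i hi Y => ?_⟩
      obtain ⟨i, rfl⟩ : ∃ j, i = j + 1 := ⟨i - 1, by omega⟩
      obtain ⟨Om, f, p, hs, hF⟩ := Q.proj_ses lam
      refine EV.con3 hs (hF.ev_left _ (fun nu => hn nu nu.2 i ?_ Y)) (EV.of_proj i)
      exact (Finset.le_sup (Finset.mem_univ nu.1)).trans (by omega)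
  choose n hn using h
  exact ⟨Finset.univ.sup n, fun lam i hi Y =>
    hn lam i ((Finset.le_sup (Finset.mem_univ lam)).trans hi) Y⟩

lemma QHData.bound (Q : QHData S Λ) [IsArtinianRing S] : ∃ n, ∀ i, n ≤ i → ∀ X Y : ModuleCat.{0} S,
    Module.Finite S X → EV S i X Y := by
  obtain ⟨n0, hn0⟩ := Q.bound_std
  have h : ∀ lam, ∃ n, ∀ i, n ≤ i → ∀ Y : ModuleCat.{0} S, EV S i (Q.L lam) Y := by
    intro lam
    induction lam using WellFoundedLT.induction with
    | ind lam ih =>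
      choose! n hn using ih
      refine ⟨(Finset.univ.sup n + 1) + n0, fun i hi Y => ?_⟩
      obtain ⟨i, rfl⟩ : ∃ j, i = j + 1 := ⟨i - 1, by omega⟩
      obtain ⟨R, f, p, hs, hR⟩ := Q.std_rad lam
      refine EV.con3 hs (Q.ev_left_of_wt R (hs.finite_left inferInstance) i
        (fun nu hnu => hn nu (hR nu hnu) i ?_ Y)) (hn0 lam _ (by omega) Y)
      exact (Finset.le_sup (Finset.mem_univ nu)).trans (by omega)
  choose n hn using h
  exact ⟨Finset.univ.sup n, fun i hi X Y hX => Q.ev_left_of_wt X hX i (fun lam _ =>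
    hn lam i ((Finset.le_sup (Finset.mem_univ lam)).trans hi) Y)⟩

end QHTheory

end QHPaper

namespace QHPaper
open CategoryTheory

section Resolutions

variable {S : Type} [Ring S] {Λ : Type} [Fintype Λ] [PartialOrder Λ]
variable {A B C M N X Y Z : Type} [AddCommGroup A] [Module S A]
    [AddCommGroup B] [Module S B] [AddCommGroup C] [Module S C]
    [AddCommGroup M] [Module S M] [AddCommGroup N] [Module S N]
    [AddCommGroup X] [Module S X] [AddCommGroup Y] [Module S Y] [AddCommGroup Z] [Module S Z]

/-- Prepend a module to a list of modules, replacing its head. -/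
def seqN {d : ℕ} (A B : ModuleCat.{0} S) (N : Fin (d + 2) → ModuleCat.{0} S) :
    Fin (d + 3) → ModuleCat.{0} S
  | ⟨0, _⟩ => A
  | ⟨1, _⟩ => B
  | ⟨n + 2, h⟩ => N ⟨n + 1, by omega⟩

/-- The maps for `seqN`. -/
def seqF {d : ℕ} {A B : ModuleCat.{0} S} {N : Fin (d + 2) → ModuleCat.{0} S}
    (f : ∀ i : Fin (d + 1), ↥(N i.castSucc) →ₗ[S] ↥(N i.succ))
    (a : A →ₗ[S] B) (b : B →ₗ[S] N 0) :
    ∀ i : Fin (d + 2), ↥(seqN A B N i.castSucc) →ₗ[S] ↥(seqN A B N i.succ)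
  | ⟨0, _⟩ => a
  | ⟨1, _⟩ => (f 0) ∘ₗ b
  | ⟨n + 2, h⟩ => f ⟨n + 1, by omega⟩

lemma IsExactSeq.cons {d : ℕ} {A B : ModuleCat.{0} S} {N : Fin (d + 2) → ModuleCat.{0} S}
    {f : ∀ i : Fin (d + 1), ↥(N i.castSucc) →ₗ[S] ↥(N i.succ)}
    (hf : IsExactSeq S d N f) {a : A →ₗ[S] B} {b : B →ₗ[S] N 0} (hs : SES a b) :
    IsExactSeq S (d + 1) (seqN A B N) (seqF f a b) := by
  obtain ⟨h1, h2, h3⟩ := hf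
  refine ⟨hs.inj, ?_, ?_⟩
  · cases d with
    | zero => exact h2.comp hs.surj
    | succ d => exact h2
  · rintro ⟨i, hi⟩
    match i, hi with
    | 0, hi =>
      change LinearMap.range a = LinearMap.ker (f 0 ∘ₗ b)
      refine Eq.trans ?_ (LinearMap.ker_comp_of_ker_eq_bot b (LinearMap.ker_eq_bot.2 h1)).symm
      exact (LinearMap.exact_iff.1 hs.exact).symm
    | 1, hi =>
      cases d with
      | zero => omega
      | succ d =>
        change LinearMap.range (f 0 ∘ₗ b) = LinearMap.ker (f 1)
        exact (LinearMap.range_comp_of_range_eq_top (f 0)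
          (LinearMap.range_eq_top.2 hs.surj)).trans (h3 0)
    | n + 2, hi =>
      exact h3 ⟨n + 1, by omega⟩

/-- The constant sequence of length zero. -/
lemma IsExactSeq.refl (M : ModuleCat.{0} S) :
    IsExactSeq S 0 (fun _ => M) (fun _ => LinearMap.id) :=
  ⟨Function.injective_id, Function.surjective_id, fun i => i.elim0⟩

lemma IsExactSeq.ses {d : ℕ} {N : Fin (d + 2) → ModuleCat.{0} S}
    {f : ∀ i : Fin (d + 1), ↥(N i.castSucc) →ₗ[S] ↥(N i.succ)}
    (hf : IsExactSeq S d N f) (i : Fin d) :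
    SES (LinearMap.range (f i.castSucc)).subtype (f i.succ).rangeRestrict := by
  refine ⟨Submodule.injective_subtype _, LinearMap.surjective_rangeRestrict _, ?_⟩
  rw [LinearMap.exact_iff, LinearMap.ker_rangeRestrict, Submodule.range_subtype]
  exact (hf.2.2 i).symm

lemma IsExactSeq.ev_head {d : ℕ} {N : Fin (d + 2) → ModuleCat.{0} S}
    {f : ∀ i : Fin (d + 1), ↥(N i.castSucc) →ₗ[S] ↥(N i.succ)}
    (hf : IsExactSeq S d N f) (H : ∀ i : Fin (d + 1), ∀ n, EV S (n + 1) X (N i.succ)) (n : ℕ) :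
    EV S (n + d + 1) X (N 0) := by
  have h : ∀ i : Fin (d + 1), EV S (n + (d - i) + 1) X (LinearMap.range (f i)) := by
    intro i
    induction i using Fin.reverseInduction with
    | last =>
      rw [LinearMap.range_eq_top.2 hf.2.1]
      exact EV.congr_right Submodule.topEquiv (H _ _)
    | cast i ih =>
      have e : n + (d - (i.castSucc : Fin (d+1)).val) + 1 = (n + (d - i.succ.val) + 1) + 1 := by
        simp only [Fin.val_castSucc, Fin.val_succ]
        omega
      rw [e]
      exact EV.cov1 (hf.ses i) ih (H i.castSucc _)
  have := h 0
  simp only [Fin.val_zero, Nat.sub_zero] at this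
  exact EV.congr_right (LinearEquiv.ofInjective (f 0) hf.1) this

lemma IsExactSeq.ev_last {d : ℕ} {N : Fin (d + 2) → ModuleCat.{0} S}
    {f : ∀ i : Fin (d + 1), ↥(N i.castSucc) →ₗ[S] ↥(N i.succ)}
    (hf : IsExactSeq S d N f) (H : ∀ i : Fin (d + 1), ∀ n, EV S (n + 1) (N i.castSucc) Y) (n : ℕ) :
    EV S (n + d + 1) (N (Fin.last (d + 1))) Y := by
  have h : ∀ i : Fin (d + 1), EV S (n + i + 1) (LinearMap.range (f i)) Y := by
    intro i
    induction i using Fin.induction with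
    | zero =>
      exact EV.congr_left (LinearEquiv.ofInjective (f 0) hf.1).symm (H 0 _)
    | succ i ih =>
      exact EV.con3 (hf.ses i) ih (H i.succ _)
  have := h (Fin.last d)
  rw [LinearMap.range_eq_top.2 hf.2.1] at this
  exact EV.congr_left Submodule.topEquiv.symm this

variable (Q : QHData S Λ)

lemma exists_free_cover (M : ModuleCat.{0} S) (hM : Module.Finite S M) :
    ∃ (n : ℕ) (p : (Fin n → S) →ₗ[S] M), Function.Surjective p :=
  Module.Finite.exists_fin' S M

lemma QHData.filt_proj [FDA S] (P : ModuleCat.{0} S) (hP : Module.Finite S P)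
    (h : Module.Projective S P) : Filt Q.std P :=
  Q.filt_std_of_ev P hP (fun _ => EV.of_proj 0)

lemma QHData.filt_inj [FDA S] (E : ModuleCat.{0} S) (hE : Module.Finite S E)
    (h : Module.Injective S E) : Filt Q.costd E :=
  Q.filt_costd_of_ev E hE (fun _ => EV.of_inj h 0)

variable {Q}

lemma GfdLE.ev [IsArtinianRing S] {M : ModuleCat.{0} S} {d : ℕ} (h : GfdLE S Q M d) (lam : Λ) (n : ℕ) :
    EV S (n + d + 1) (Q.std lam) M := by
  obtain ⟨N, f, hf, rfl, hN⟩ := h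
  exact hf.ev_head (fun i n => (Filt.single lam).ev ((inCostdFilt_iff Q _).1 (hN i)) n) n

lemma WfdLE.ev [IsArtinianRing S] {M : ModuleCat.{0} S} {d : ℕ} (h : WfdLE S Q M d) (lam : Λ) (n : ℕ) :
    EV S (n + d + 1) M (Q.costd lam) := by
  obtain ⟨N, f, hf, rfl, hN⟩ := h
  exact hf.ev_last (fun i n => ((inStdFilt_iff Q _).1 (hN i)).ev (Filt.single lam) n) n

lemma GfdLE.zero {M : ModuleCat.{0} S} (h : Filt Q.costd M) : GfdLE S Q M 0 :=
  ⟨_, _, IsExactSeq.refl M, rfl, fun _ => (inCostdFilt_iff Q M).2 h⟩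

lemma GfdLE.succ {d : ℕ} {M E C : ModuleCat.{0} S} {a : M →ₗ[S] E} {b : E →ₗ[S] C}
    (hs : SES a b) (hE : Filt Q.costd E) (hC : GfdLE S Q C d) : GfdLE S Q M (d + 1) := by
  obtain ⟨N, f, hf, rfl, hN⟩ := hC
  refine ⟨_, _, hf.cons hs, rfl, ?_⟩
  rintro ⟨i, hi⟩
  match i, hi with
  | 0, hi => exact (inCostdFilt_iff Q _).2 hE
  | n + 1, hi => exact hN ⟨n, by omega⟩

lemma GfdLE.of_ev [FDA S] {d : ℕ} {M : ModuleCat.{0} S} (hM : Module.Finite S M)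
    (h : ∀ lam, EV S (d + 1) (Q.std lam) M) : GfdLE S Q M d := by
  induction d generalizing M with
  | zero => exact GfdLE.zero (Q.filt_costd_of_ev M hM h)
  | succ d ih =>
    obtain ⟨E, j, hE, hEi, hj⟩ := FDA.enough (S := S) M hM
    have hs := SES.of_inj j hj
    refine GfdLE.succ (C := ModuleCat.of S (E ⧸ LinearMap.range j)) hs (Q.filt_inj E hE hEi)
      (ih (hs.finite_right hE) (fun lam => ?_))
    exact EV.cov3 hs (h lam) (EV.of_inj hEi d)

lemma exists_syzygy [FDA S] (d : ℕ) (M : ModuleCat.{0} S) (hM : Module.Finite S M) :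
    ∃ (N : Fin (d + 2) → ModuleCat.{0} S)
    (f : ∀ i : Fin (d + 1), ↥(N i.castSucc) →ₗ[S] ↥(N i.succ)),
    IsExactSeq S d N f ∧ N (Fin.last (d + 1)) = M ∧ Module.Finite S (N 0) ∧
    (∀ i : Fin d, Filt Q.std (N i.succ.castSucc)) ∧
    ∀ n lam, EV S (n + d + 1) M (Q.costd lam) → EV S (n + 1) (N 0) (Q.costd lam) := by
  induction d with
  | zero => exact ⟨_, _, IsExactSeq.refl M, rfl, hM, fun i => i.elim0, fun n lam h => h⟩
  | succ d ih =>
    obtain ⟨N, f, hf, rfl, h0, hN, hev⟩ := ih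
    obtain ⟨m, p, hp⟩ := exists_free_cover (N 0) h0
    have hs := SES.of_surj p hp
    refine ⟨_, _, hf.cons (A := ModuleCat.of S (LinearMap.ker p)) (B := ModuleCat.of S (Fin m → S)) hs,
      rfl, hs.finite_left inferInstance, ?_, ?_⟩
    · rintro ⟨i, hi⟩
      match i, hi with
      | 0, hi => exact Q.filt_proj (ModuleCat.of S (Fin m → S))
                  (inferInstanceAs (Module.Finite S (Fin m → S)))
                  (inferInstanceAs (Module.Projective S (Fin m → S)))
      | n + 1, hi => exact hN ⟨n, by omega⟩
    · intro n lam h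
      refine EV.con1 hs (hev (n + 1) lam ?_) (EV.of_proj n)
      have e : n + 1 + d + 1 = n + (d + 1) + 1 := by omega
      rw [e]
      exact h

lemma WfdLE.of_ev [FDA S] {d : ℕ} {M : ModuleCat.{0} S} (hM : Module.Finite S M)
    (h : ∀ lam, EV S (d + 1) M (Q.costd lam)) : WfdLE S Q M d := by
  obtain ⟨N, f, hf, hl, h0, hN, hev⟩ := exists_syzygy (Q := Q) d M hM
  refine ⟨N, f, hf, hl, fun i => (inStdFilt_iff Q _).2 ?_⟩
  induction i using Fin.cases with
  | zero =>
    refine Q.filt_std_of_ev (N 0) h0 (fun lam => hev 0 lam ?_)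
    rw [Nat.zero_add]
    exact h lam
  | succ i => exact hN i

variable (Q)

/-- `gfd(S) ≤ d` in terms of Ext vanishing. -/
def GA (Q : QHData S Λ) (d : ℕ) : Prop :=
  ∀ M : ModuleCat.{0} S, Module.Finite S M → ∀ lam, EV S (d + 1) (Q.std lam) M

/-- `wfd(S) ≤ d` in terms of Ext vanishing. -/
def WA (Q : QHData S Λ) (d : ℕ) : Prop :=
  ∀ M : ModuleCat.{0} S, Module.Finite S M → ∀ lam, EV S (d + 1) M (Q.costd lam)

lemma gfd_le_iff [FDA S] {d : ℕ} {M : ModuleCat.{0} S} (hM : Module.Finite S M) :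
    gfd S Q M ≤ d ↔ ∀ lam, EV S (d + 1) (Q.std lam) M := by
  constructor
  · intro h lam
    obtain ⟨n, hn⟩ := Q.bound
    have hne : {d | GfdLE S Q M d}.Nonempty :=
      ⟨n, GfdLE.of_ev hM (fun lam => hn _ (by omega) _ _ inferInstance)⟩
    have := GfdLE.ev (Nat.sInf_mem hne) lam (d - gfd S Q M)
    have e : d - gfd S Q M + gfd S Q M = d := by omega
    change EV S (d - gfd S Q M + gfd S Q M + 1) _ _ at this
    rwa [e] at this
  · intro h
    exact Nat.sInf_le (GfdLE.of_ev hM h)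

lemma wfd_le_iff [FDA S] {d : ℕ} {M : ModuleCat.{0} S} (hM : Module.Finite S M) :
    wfd S Q M ≤ d ↔ ∀ lam, EV S (d + 1) M (Q.costd lam) := by
  constructor
  · intro h lam
    obtain ⟨n, hn⟩ := Q.bound
    have hne : {d | WfdLE S Q M d}.Nonempty :=
      ⟨n, WfdLE.of_ev hM (fun lam => hn _ (by omega) _ _ hM)⟩
    have := WfdLE.ev (Nat.sInf_mem hne) lam (d - wfd S Q M)
    have e : d - wfd S Q M + wfd S Q M = d := by omega
    change EV S (d - wfd S Q M + wfd S Q M + 1) _ _ at this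
    rwa [e] at this
  · intro h
    exact Nat.sInf_le (WfdLE.of_ev hM h)

lemma gfdAlg_le_iff [FDA S] {d : ℕ} : gfdAlg S Q ≤ d ↔ GA Q d := by
  obtain ⟨n, hn⟩ := Q.bound
  have hb : BddAbove {d | ∃ M : ModuleCat.{0} S, Module.Finite S ↥M ∧ gfd S Q M = d} := by
    refine ⟨n, ?_⟩
    rintro _ ⟨M, hM, rfl⟩
    exact (gfd_le_iff Q hM).2 (fun lam => hn _ (by omega) _ _ inferInstance)
  rw [gfdAlg, csSup_le_iff' hb]
  constructor
  · intro h M hM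
    exact (gfd_le_iff Q hM).1 (h _ ⟨M, hM, rfl⟩)
  · rintro h _ ⟨M, hM, rfl⟩
    exact (gfd_le_iff Q hM).2 (h M hM)

lemma wfdAlg_le_iff [FDA S] {d : ℕ} : wfdAlg S Q ≤ d ↔ WA Q d := by
  obtain ⟨n, hn⟩ := Q.bound
  have hb : BddAbove {d | ∃ M : ModuleCat.{0} S, Module.Finite S ↥M ∧ wfd S Q M = d} := by
    refine ⟨n, ?_⟩
    rintro _ ⟨M, hM, rfl⟩
    exact (wfd_le_iff Q hM).2 (fun lam => hn _ (by omega) _ _ hM)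
  rw [wfdAlg, csSup_le_iff' hb]
  constructor
  · intro h M hM
    exact (wfd_le_iff Q hM).1 (h _ ⟨M, hM, rfl⟩)
  · rintro h _ ⟨M, hM, rfl⟩
    exact (wfd_le_iff Q hM).2 (h M hM)

end Resolutions

end QHPaper

namespace QHPaper
open CategoryTheory

section Tilting

variable {S : Type} [Ring S] {Λ : Type} [Fintype Λ] [PartialOrder Λ]
variable {A B C D M N X Y Z : Type} [AddCommGroup A] [Module S A]
    [AddCommGroup B] [Module S B] [AddCommGroup C] [Module S C] [AddCommGroup D] [Module S D]
    [AddCommGroup M] [Module S M] [AddCommGroup N] [Module S N]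
    [AddCommGroup X] [Module S X] [AddCommGroup Y] [Module S Y] [AddCommGroup Z] [Module S Z]

lemma SES.comp_eq_zero {f : A →ₗ[S] B} {g : B →ₗ[S] C} (h : SES f g) : g ∘ₗ f = 0 :=
  h.exact.linearMap_comp_eq_zero

lemma SES.apply_eq_zero {f : A →ₗ[S] B} {g : B →ₗ[S] C} (h : SES f g) (x : A) : g (f x) = 0 :=
  LinearMap.congr_fun h.comp_eq_zero x

lemma SES.compLeft {f : A →ₗ[S] B} {g : B →ₗ[S] C} (h : SES f g) (m : ℕ) :
    SES (f.compLeft (Fin m)) (g.compLeft (Fin m)) := by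
  refine ⟨?_, ?_, ?_⟩
  · intro x y hxy
    funext i
    exact h.inj (congrFun hxy i)
  · intro y
    choose x hx using fun i => h.surj (y i)
    exact ⟨x, funext hx⟩
  · intro y
    constructor
    · intro hy
      choose x hx using fun i => (h.exact (y i)).1 (congrFun hy i)
      exact ⟨x, funext hx⟩
    · rintro ⟨x, rfl⟩
      funext i
      exact h.apply_eq_zero (x i)

/-- Composition of two inclusions. -/
lemma SES.comp_inj {a : M →ₗ[S] N} {q : N →ₗ[S] D} (h : SES a q) {i : N →ₗ[S] X} {p : X →ₗ[S] C}
    (h' : SES i p) : ∃ (Z : ModuleCat.{0} S) (r : X →ₗ[S] Z) (u : D →ₗ[S] Z) (v : Z →ₗ[S] C),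
      SES (i ∘ₗ a) r ∧ SES u v := by
  obtain ⟨Z, u, r, v, h1, h2, h3, h4, h5, h6⟩ := h'.pushout q
  refine ⟨Z, r, u, v, ⟨h'.inj.comp h.inj, ?_, ?_⟩, h1⟩
  · intro z
    obtain ⟨x, b, rfl⟩ := h5 z
    obtain ⟨y, rfl⟩ := h.surj x
    exact ⟨i y + b, by rw [map_add]; congr 1; exact LinearMap.congr_fun h2 y⟩
  · intro x
    constructor
    · intro hx
      obtain ⟨y, hy, rfl⟩ := h6 0 x (by simpa using hx)
      obtain ⟨m, rfl⟩ := (h.exact y).1 (by simpa using hy)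
      exact ⟨m, rfl⟩
    · rintro ⟨m, rfl⟩
      have := LinearMap.congr_fun h2 (a m)
      simp only [LinearMap.comp_apply] at this ⊢
      rw [this, h.apply_eq_zero, map_zero]

variable (Q : QHData S Λ)

/-- Universal extensions. -/
lemma QHData.exists_univ [FDA S] (s : Finset Λ) (hs : ∀ a ∈ s, ∀ b, b ≤ a → b ∈ s)
    (M : ModuleCat.{0} S) (hM : Module.Finite S M) (h : ∀ mu, mu ∉ s → EV S 1 (Q.std mu) M) :
    ∃ (K C : ModuleCat.{0} S) (i : M →ₗ[S] K) (q : K →ₗ[S] C), SES i q ∧ Filt Q.costd K ∧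
      Filt (fun mu : {mu // mu ∈ s} => Q.std mu) C := by
  classical
  induction s using Finset.strongInduction generalizing M with
  | H s ih =>
  rcases s.eq_empty_or_nonempty with rfl | hne
  · refine ⟨M, ModuleCat.of S PUnit, LinearMap.id, 0, SES.zero_right (LinearEquiv.refl S M) _,
      Q.filt_costd_of_ev M hM (fun mu => h mu (by simp)),
      Filt.zero _ (inferInstanceAs (Subsingleton PUnit))⟩
  obtain ⟨lam, hlam, hmax⟩ := s.exists_maximal hne
  obtain ⟨Om, f, p, hfp, hOm⟩ := Q.proj_ses lam
  obtain ⟨m, φ, hφ⟩ := FDA.homfin Om M (hfp.finite_left inferInstance) hM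
  obtain ⟨N, a, Φ, q, haq, h2, h3, h4, -, -⟩ := (hfp.compLeft m).pushout (LinearMap.lsum S (fun _ => Om) ℕ φ)
  have hN : Module.Finite S N := haq.finite hM inferInstance
  have hEN : ∀ mu, mu ∉ s.erase lam → EV S 1 (Q.std mu) N := by
    intro mu hmu
    by_cases hml : mu = lam
    · subst hml
      refine EV.of_extend hfp (EV.of_proj 0) (fun ψ => ?_)
      have h0 : q ∘ₗ ψ = 0 := by
        refine hOm.hom_eq_zero (fun nu χ => ?_) _
        ext x i
        have : LinearMap.proj i ∘ₗ χ = 0 := by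
          by_contra hcon
          exact absurd nu.2 (not_lt_of_ge (Q.std_le (Q.wt_of_std_hom hcon)))
        exact LinearMap.congr_fun this x
      obtain ⟨ψ', rfl⟩ := haq.factor ψ h0
      refine hφ ψ' _ _ f a (fun i => ⟨Φ ∘ₗ LinearMap.single S (fun _ => Q.P mu) i, ?_⟩)
      ext x
      have h5 := LinearMap.congr_fun h2 (LinearMap.single S (fun _ => (Om : Type)) i x)
      have h6 : (f.compLeft (Fin m)) (LinearMap.single S (fun _ => (Om : Type)) i x) =
          LinearMap.single S (fun _ => (Q.P mu : Type)) i (f x) := by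
        funext k
        by_cases hk : k = i
        · subst hk; simp
        · simp [hk]
      simp only [LinearMap.comp_apply] at h5 ⊢
      rw [h6] at h5
      rw [h5]
      congr 1
      simp [Pi.single_apply, apply_ite, Finset.sum_ite_eq']
    · have hmu' : mu ∉ s := fun h' => hmu (Finset.mem_erase.2 ⟨hml, h'⟩)
      refine EV.cov2 haq (h mu hmu') (EV.pi_right (Q.ev_std_of_wt (fun nu hnu hlt => hmu' ?_)) m)
      exact hs lam hlam mu (hlt.le.trans (Q.std_le hnu))
  obtain ⟨K, C, i, r, hir, hK, hC⟩ := ih (s.erase lam) (Finset.erase_ssubset hlam) (by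
      intro a ha b hb
      rw [Finset.mem_erase] at ha ⊢
      refine ⟨?_, hs a ha.2 b hb⟩
      rintro rfl
      exact ha.1 (le_antisymm (hmax ha.2 hb) hb)) N hN hEN
  obtain ⟨Z, r', u, v, h7, h8⟩ := haq.comp_inj hir
  refine ⟨K, Z, i ∘ₗ a, r', h7, hK, ?_⟩
  refine Filt.extension (A := ModuleCat.of S (Fin m → Q.std lam)) h8 ?_ ?_
  · exact (Filt.single (D := fun mu : {mu // mu ∈ s} => Q.std mu) ⟨lam, hlam⟩).pi m
  · refine hC.mono (fun mu => ?_)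
    exact Filt.single (D := fun mu : {mu // mu ∈ s} => Q.std mu) ⟨mu, Finset.mem_of_mem_erase mu.2⟩

lemma QHData.exists_univ' [FDA S] (M : ModuleCat.{0} S) (hM : Module.Finite S M) :
    ∃ (K C : ModuleCat.{0} S) (i : M →ₗ[S] K) (q : K →ₗ[S] C), SES i q ∧ Filt Q.costd K ∧
      Filt Q.std C := by
  obtain ⟨K, C, i, q, h1, h2, h3⟩ := Q.exists_univ Finset.univ (by simp) M hM (by simp)
  exact ⟨K, C, i, q, h1, h2, h3.mono (fun mu => Filt.single mu.1)⟩

lemma QHData.one_of_ses {lam : Λ} {j : A →ₗ[S] B} {q : B →ₗ[S] C} (hs : SES j q) (hA : Q.One A lam)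
    (hC : ¬ Q.wt C lam) : Q.One B lam := by
  have hz : ∀ φ : Q.P lam →ₗ[S] C, φ = 0 := fun φ => by
    by_contra h
    exact hC ⟨φ, h⟩
  refine ⟨hA.1.of_inj j hs.inj, ?_⟩
  rintro U ⟨φ, hφ⟩ ⟨ψ, hψ⟩
  obtain ⟨φ', hφ'⟩ := hs.factor (U.subtype ∘ₗ φ) (hz _)
  obtain ⟨ψ1, hψ1⟩ := Module.projective_lifting_property U.mkQ ψ U.mkQ_surjective
  obtain ⟨ψ', hψ'⟩ := hs.factor ψ1 (hz _)
  have hmem : ∀ x, φ' x ∈ U.comap j := by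
    intro x
    have : j (φ' x) = φ x := LinearMap.congr_fun hφ' x
    rw [Submodule.mem_comap, this]
    exact (φ x).2
  refine hA.2 (U.comap j) ⟨φ'.codRestrict _ hmem, fun h0 => hφ ?_⟩
    ⟨(U.comap j).mkQ ∘ₗ ψ', fun h0 => hψ ?_⟩
  · ext x
    have h1 : φ' x = 0 := congrArg Subtype.val (LinearMap.congr_fun h0 x)
    have h2 : j (φ' x) = φ x := LinearMap.congr_fun hφ' x
    rw [← h2, h1]
    simp
  · ext x
    have h1 : (U.comap j).mkQ (ψ' x) = 0 := LinearMap.congr_fun h0 x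
    have h1' : j (ψ' x) ∈ U := by simpa using h1
    have h2 : j (ψ' x) = ψ1 x := LinearMap.congr_fun hψ' x
    rw [← hψ1]
    simpa [← h2] using h1'

/-- The indecomposable tilting modules exist. -/
lemma QHData.exists_indec [FDA S] (lam : Λ) : ∃ (A : ModuleCat.{0} S) (j : Q.std lam →ₗ[S] A),
    IsIndecTilting S Q lam A ∧ Function.Injective j ∧
    ∀ mu (φ : Q.std lam →ₗ[S] Q.costd mu), ∃ ψ, ψ ∘ₗ j = φ := by
  classical
  obtain ⟨T0, C, i0, q0, hs0, hT0, hC⟩ := Q.exists_univ (Finset.univ.filter (· < lam))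
    (by intro a ha b hb; simp at ha ⊢; exact hb.trans_lt ha) (Q.std lam) inferInstance (by
      intro mu hmu
      refine Q.ev_std_of_wt (fun nu hnu hlt => hmu ?_)
      simpa using hlt.trans_le (Q.std_le hnu))
  have hT0f : Module.Finite S T0 := hT0.finite inferInstance
  have hCs : Filt Q.std C := hC.mono (fun mu => Filt.single mu.1)
  have hCw : ∀ mu, Q.wt C mu → mu < lam := by
    intro mu hmu
    obtain ⟨nu, hnu⟩ := hC.wt hmu
    have := nu.2
    simp only [Finset.mem_filter, Finset.mem_univ, true_and] at this
    exact (Q.std_le hnu).trans_lt this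
  let P : ModuleCat.{0} S → Prop := fun A => ∃ (j : Q.std lam →ₗ[S] A) (i : A →ₗ[S] T0)
    (r : T0 →ₗ[S] A), r ∘ₗ i = LinearMap.id ∧ i ∘ₗ j = i0
  have hP : ∃ A, P A := ⟨T0, i0, LinearMap.id, LinearMap.id, rfl, rfl⟩
  obtain ⟨A, ⟨j, i, r, hri, hij⟩, hmin⟩ : ∃ A, P A ∧ ∀ B, P B → ¬ Module.length S B < Module.length S A := by
    obtain ⟨_, ⟨A, hA, rfl⟩, h⟩ := wellFounded_lt.has_min {l : ℕ∞ | ∃ A, P A ∧ Module.length S A = l}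
      (by obtain ⟨A, hA⟩ := hP; exact ⟨_, A, hA, rfl⟩)
    exact ⟨A, hA, fun B hB => h _ ⟨B, hB, rfl⟩⟩
  have hji : Function.Injective j := by
    intro x y hxy
    apply hs0.inj
    rw [← hij, LinearMap.comp_apply, LinearMap.comp_apply, hxy]
  have hrs : Function.Surjective r := fun x => ⟨i x, LinearMap.congr_fun hri x⟩
  have hA : Module.Finite S A := Module.Finite.of_surjective r hrs
  have hext : ∀ mu (φ : Q.std lam →ₗ[S] Q.costd mu), ∃ ψ, ψ ∘ₗ j = φ := by
    intro mu φ
    obtain ⟨ψ, hψ⟩ := EV.extend hs0 (hCs.ev (Filt.single mu) 0) φ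
    exact ⟨ψ ∘ₗ i, by rw [LinearMap.comp_assoc, hij, hψ]⟩
  have hAcs : Filt Q.costd A := Q.filt_costd_of_ev A hA (fun mu =>
    EV.retract_right i r hri ((Filt.single mu).ev hT0 0))
  have hT0s : Filt Q.std T0 := Filt.extension hs0 (Filt.single lam) hCs
  have hAs : Filt Q.std A := Q.filt_std_of_ev A hA (fun mu =>
    EV.retract_left i r hri (hT0s.ev (Filt.single mu) 0))
  have hrj : r ∘ₗ i0 = j := by rw [← hij, ← LinearMap.comp_assoc, hri, LinearMap.id_comp]
  have hsj := SES.of_inj j hji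
  obtain ⟨c, hc⟩ := hs0.descend ((LinearMap.range j).mkQ ∘ₗ r) (by
    rw [LinearMap.comp_assoc, hrj, hsj.comp_eq_zero])
  have hcs : Function.Surjective c := by
    intro x
    obtain ⟨y, rfl⟩ := hsj.surj x
    obtain ⟨z, rfl⟩ := hrs y
    exact ⟨q0 z, LinearMap.congr_fun hc z⟩
  have hAw : ∀ mu, Q.wt (A ⧸ LinearMap.range j) mu → mu < lam := fun mu hmu =>
    hCw mu (hmu.of_surj c hcs)
  have hone : Q.One A lam := Q.one_of_ses hsj (Q.std_one lam) (fun h => lt_irrefl _ (hAw _ h))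
  have key : ∀ U V : Submodule S A, IsCompl U V → ¬ Q.wt V lam → V = ⊥ := by
    intro U V hUV hV
    let pU := U.projectionOnto V hUV
    let pV := V.projectionOnto U hUV.symm
    have h0 : pV ∘ₗ j = 0 := by
      by_contra h
      exact hV (Q.wt_of_std_hom h)
    have h1 : U.subtype ∘ₗ pU ∘ₗ j = j := by
      ext x
      have h2 : pV (j x) = 0 := LinearMap.congr_fun h0 x
      have h3 : j x ∈ U := (Submodule.projectionOnto_apply_eq_zero_iff hUV.symm).1 h2
      exact congrArg Subtype.val (Submodule.projectionOnto_apply_left hUV ⟨j x, h3⟩)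
    have hUP : P (ModuleCat.of S U) := by
      refine ⟨pU ∘ₗ j, i ∘ₗ U.subtype, pU ∘ₗ r, ?_, ?_⟩
      · ext x
        have h4 : r (i x) = x := LinearMap.congr_fun hri x
        change ((pU (r (i x)) : U) : A) = x
        rw [h4]
        exact congrArg Subtype.val (Submodule.projectionOnto_apply_left hUV x)
      · rw [LinearMap.comp_assoc, h1, hij]
    have hsU : SES U.subtype pV := by
      refine ⟨U.injective_subtype, ?_, ?_⟩
      · intro x
        exact ⟨x, Submodule.projectionOnto_apply_left hUV.symm x⟩
      · rw [LinearMap.exact_iff, Submodule.range_subtype]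
        exact Submodule.ker_projectionOnto hUV.symm
    rcases subsingleton_or_nontrivial V with h | h
    · exact (Submodule.subsingleton_iff_eq_bot).1 h
    · exact absurd hsU.length_left (hmin _ hUP)
  refine ⟨A, j, ⟨⟨(inStdFilt_iff Q A).2 hAs, (inCostdFilt_iff Q A).2 hAcs⟩, hone.1.nontrivial, ?_,
    Q.mult_of_one hone, ?_⟩, hji, hext⟩
  · intro U V hUV
    by_cases hV : Q.wt V lam
    · left
      refine key V U hUV.symm (fun hU => ?_)
      exact hone.2 U hU (hV.congr (Submodule.quotientEquivOfIsCompl U V hUV).symm)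
    · right
      exact key U V hUV hV
  · intro mu hmu
    rw [Q.wt_iff] at hmu
    rcases hmu.mid hsj with h | h
    · exact (Q.std_le h).eq_or_lt
    · exact Or.inr (hAw mu h)

variable {Q}

/-- Every module with a standard filtration embeds well into a power of `T`. -/
lemma IsFullTilting.embed [FDA S] {T : ModuleCat.{0} S} (hT : IsFullTilting S Q T)
    {Y : ModuleCat.{0} S} (hY : Filt Q.std Y) : ∃ (n : ℕ) (C : ModuleCat.{0} S)
      (j : Y →ₗ[S] (Fin n → T)) (q : (Fin n → T) →ₗ[S] C), SES j q ∧ Filt Q.std C := by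
  have hTs : Filt Q.std T := (inStdFilt_iff Q T).1 hT.1.1
  have hTc : Filt Q.costd T := (inCostdFilt_iff Q T).1 hT.1.2
  have hTf := hT.2.1
  suffices ∃ (n : ℕ) (j : Y →ₗ[S] (Fin n → T)), Function.Injective j ∧
      ∀ mu (φ : Y →ₗ[S] Q.costd mu), ∃ ψ, ψ ∘ₗ j = φ by
    obtain ⟨n, j, hj, hext⟩ := this
    have hs := SES.of_inj j hj
    refine ⟨n, ModuleCat.of S ((Fin n → T) ⧸ LinearMap.range j), j, _, hs, ?_⟩
    refine Q.filt_std_of_ev _ (hs.finite_right inferInstance) (fun mu => ?_)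
    exact EV.of_extend hs (EV.pi_left (hTs.ev (Filt.single mu) 0) n) (hext mu)
  induction hY with
  | zero M hM =>
    exact ⟨0, 0, fun x y _ => Subsingleton.elim x y, fun mu φ => ⟨0, by
      ext x; rw [Subsingleton.elim x 0]; simp⟩⟩
  | @ext A B lam f g hs hA ih =>
    obtain ⟨n, j, hj, hext⟩ := ih
    obtain ⟨A', j', hA', hj', hext'⟩ := Q.exists_indec lam
    obtain ⟨Cc, ⟨e⟩⟩ := hT.2.2 lam A' hA'
    obtain ⟨k, hk⟩ := EV.extend hs (EV.pi_right ((Filt.single lam).ev hTc 0) n) j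
    let d : Q.std lam →ₗ[S] T := e.symm.toLinearMap ∘ₗ LinearMap.inl S A' Cc ∘ₗ j'
    have hd : Function.Injective d := e.symm.injective.comp (LinearMap.inl_injective.comp hj')
    let J : B →ₗ[S] (Fin (n + 1) → T) := LinearMap.pi (Fin.cases
      (motive := fun _ => B →ₗ[S] T) (d ∘ₗ g) (fun i => LinearMap.proj i ∘ₗ k))
    refine ⟨n + 1, J, ?_, ?_⟩
    · rw [← LinearMap.ker_eq_bot, LinearMap.ker_eq_bot']
      intro x hx
      have h1 : d (g x) = 0 := congrFun hx 0
      have h2 : k x = 0 := funext fun i => congrFun hx i.succ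
      have h3 : g x = 0 := hd (by rw [h1, map_zero])
      obtain ⟨a, rfl⟩ := (hs.exact x).1 h3
      have h4 : j a = 0 := by rw [← hk]; exact h2
      rw [hj (h4.trans (map_zero j).symm), map_zero]
    · intro mu φ
      obtain ⟨β, hβ⟩ := hext mu (φ ∘ₗ f)
      obtain ⟨δ, hδ⟩ := hs.descend (φ - β ∘ₗ k) (by
        rw [LinearMap.sub_comp, LinearMap.comp_assoc, hk, hβ, sub_self])
      obtain ⟨β', hβ'⟩ := hext' mu δ
      refine ⟨β ∘ₗ LinearMap.pi (fun i => LinearMap.proj i.succ) +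
        (β' ∘ₗ LinearMap.fst S A' Cc ∘ₗ e.toLinearMap) ∘ₗ LinearMap.proj 0, ?_⟩
      ext x
      have h5 : δ (g x) = φ x - β (k x) := LinearMap.congr_fun hδ x
      have h6 : β' (j' (g x)) = δ (g x) := LinearMap.congr_fun hβ' (g x)
      have h8 : (e (J x 0)).1 = j' (g x) := by
        change (e (d (g x))).1 = _
        simp [d]
      change β (k x) + β' (e (J x 0)).1 = φ x
      rw [h8, h6, h5]
      abel

/-- Every tilting module is a direct summand of a power of `T`. -/
lemma IsFullTilting.summand [FDA S] {T : ModuleCat.{0} S} (hT : IsFullTilting S Q T)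
    {Y : ModuleCat.{0} S} (hY : Filt Q.std Y) (hY' : Filt Q.costd Y) : ∃ (n : ℕ)
      (i : Y →ₗ[S] (Fin n → T)) (r : (Fin n → T) →ₗ[S] Y), r ∘ₗ i = LinearMap.id := by
  obtain ⟨n, C, j, q, hs, hC⟩ := hT.embed hY
  obtain ⟨r, hr⟩ := EV.extend hs (hC.ev hY' 0) LinearMap.id
  exact ⟨n, j, r, hr⟩

/-- Every module with a costandard filtration is well covered by a power of `T`. -/
lemma IsFullTilting.cover [FDA S] {T : ModuleCat.{0} S} (hT : IsFullTilting S Q T)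
    {X : ModuleCat.{0} S} (hX : Filt Q.costd X) : ∃ (n : ℕ) (K : ModuleCat.{0} S)
      (i : K →ₗ[S] (Fin n → T)) (p : (Fin n → T) →ₗ[S] X), SES i p ∧ Filt Q.costd K := by
  have hTc : Filt Q.costd T := (inCostdFilt_iff Q T).1 hT.1.2
  have hTf := hT.2.1
  obtain ⟨m, p0, hp0⟩ := exists_free_cover X (hX.finite inferInstance)
  have hs0 := SES.of_surj p0 hp0
  obtain ⟨K, C, i, q, hs, hK, hC⟩ := Q.exists_univ' (ModuleCat.of S (LinearMap.ker p0))
    (hs0.finite_left inferInstance)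
  obtain ⟨N, a, Φ, b, b', h1, h2, -⟩ := hs0.pushout₂ hs
  have hNc : Filt Q.costd N := Filt.extension h1 hK hX
  have hNs : Filt Q.std N := Filt.extension (A := ModuleCat.of S (Fin m → S)) h2
    (Q.filt_proj (ModuleCat.of S (Fin m → S))
                  (inferInstanceAs (Module.Finite S (Fin m → S)))
                  (inferInstanceAs (Module.Projective S (Fin m → S)))) hC
  obtain ⟨n, j, r, hrj⟩ := hT.summand hNs hNc
  have hsur : Function.Surjective (b ∘ₗ r) := by
    intro x
    obtain ⟨y, rfl⟩ := h1.surj x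
    exact ⟨j y, congrArg b (LinearMap.congr_fun hrj y)⟩
  have hs' := SES.of_surj _ hsur
  refine ⟨n, ModuleCat.of S (LinearMap.ker (b ∘ₗ r)), _, _, hs', ?_⟩
  refine Q.filt_costd_of_ev _ (hs'.finite_left inferInstance) (fun mu => ?_)
  refine EV.of_lift hs' (EV.pi_right ((Filt.single mu).ev hTc 0) n) (fun φ => ?_)
  obtain ⟨ψ, hψ⟩ := EV.lift h1 ((Filt.single mu).ev hK 0) φ
  refine ⟨j ∘ₗ ψ, ?_⟩
  rw [← hψ]
  ext x
  exact congrArg b (LinearMap.congr_fun hrj (ψ x))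

end Tilting

end QHPaper

namespace QHPaper
open CategoryTheory

section DualityPart

variable {S : Type} [Ring S] {Λ : Type} [Fintype Λ] [PartialOrder Λ]
variable {X Y : Type} [AddCommGroup X] [Module S X] [AddCommGroup Y] [Module S Y]

lemma EV.of_split [FDA S] [Module.Finite S X] [Module.Finite S Y]
    (H : ∀ (N : ModuleCat.{0} S) (i : Y →ₗ[S] N) (q : N →ₗ[S] X), Module.Finite S N → SES i q →
      ∃ r : N →ₗ[S] Y, r ∘ₗ i = LinearMap.id) : EV S 1 X Y := by
  obtain ⟨m, p, hp⟩ := exists_free_cover (ModuleCat.of S X) ‹_›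
  have hs := SES.of_surj p hp
  refine EV.of_extend hs (EV.of_proj 0) (fun φ => ?_)
  obtain ⟨N, a, Φ, q, haq, h2, -⟩ := hs.pushout φ
  obtain ⟨r, hr⟩ := H N a q (haq.finite inferInstance inferInstance) haq
  exact ⟨r ∘ₗ Φ, by rw [LinearMap.comp_assoc, h2, ← LinearMap.comp_assoc, hr, LinearMap.id_comp]⟩

variable (Q : QHData S Λ)

lemma QHData.hom_costd_wt {mu : Λ} {φ : X →ₗ[S] Q.costd mu} (h : φ ≠ 0) : Q.wt X mu := by
  obtain ⟨R, i, p, hs, hw, hsoc⟩ := Q.costd_soc mu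
  have h1 : LinearMap.range i ≤ LinearMap.range φ :=
    hsoc _ (fun h0 => h (LinearMap.range_eq_bot.1 h0))
  have h2 : Q.wt (LinearMap.range φ) mu :=
    ((Q.wt_L (lam := mu).2 rfl).congr (LinearEquiv.ofInjective i hs.inj)).of_inj
      (Submodule.inclusion h1) (Submodule.inclusion_injective h1)
  exact h2.of_surj _ φ.surjective_rangeRestrict

lemma QHData.ev_costd_of_wt' [IsArtinianRing S] (M : ModuleCat.{0} S) (hM : Module.Finite S M)
    {mu : Λ} (h : ∀ nu, Q.wt M nu → ¬ mu < nu) : EV S 1 M (Q.costd mu) := by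
  refine Q.ev_left_of_wt M hM 1 (fun nu hnu => ?_)
  obtain ⟨R, i, p, hs, hw⟩ := Q.std_rad nu
  refine EV.of_extend hs (Q.ev_std_costd 0 nu mu) (fun φ => ⟨0, ?_⟩)
  by_contra hne
  refine h nu hnu (hw mu (Q.hom_costd_wt (φ := φ) (fun h0 => hne ?_)))
  rw [h0, LinearMap.zero_comp]

variable {Q}

lemma Duality.ses (d : Duality S Q) {A B C : ModuleCat.{0} S} (hA : Module.Finite S A)
    (hB : Module.Finite S B) (hC : Module.Finite S C) {f : A →ₗ[S] B} {g : B →ₗ[S] C}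
    (hs : SES f g) : SES (d.Dmap g) (d.Dmap f) := by
  obtain ⟨h1, h2, h3⟩ := d.Dexact hA hB hC f g hs.inj hs.surj (LinearMap.exact_iff.1 hs.exact).symm
  exact ⟨h1, h2, LinearMap.exact_iff.2 h3.symm⟩

lemma Duality.swap [FDA S] (d : Duality S Q) {A B : ModuleCat.{0} S} (hA : Module.Finite S A)
    (hB : Module.Finite S B) (h : EV S 1 (d.D A) (d.D B)) : EV S 1 B A := by
  refine EV.of_split (fun N i q hN hs => ?_)
  obtain ⟨s, hs'⟩ := EV.split (d.ses hA hN hB hs) h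
  obtain ⟨r, hr⟩ := (d.Dfull hN hA).2 s
  refine ⟨r, (d.Dfull hA hA).1 ?_⟩
  change d.Dmap (r ∘ₗ i) = d.Dmap LinearMap.id
  rw [d.Dcomp hA hN hA, d.Did A hA, ← hs']
  congr 1

lemma Duality.wt [IsArtinianRing S] (d : Duality S Q) {M : ModuleCat.{0} S} (hM : Module.Finite S M)
    {mu : Λ} (h : Q.wt M mu) : Q.wt (d.D M) mu := by
  obtain ⟨A, B, hAB, ⟨e⟩⟩ := (Q.wt_iff M mu).2 h
  have h1 := SES.of_sub B
  have hB : Module.Finite S (ModuleCat.of S B) := h1.finite_left hM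
  have h2 := SES.subquot hAB e
  have h3 := d.ses (A := ModuleCat.of S A) (B := ModuleCat.of S B) (C := Q.L mu)
    (h2.finite_left hB) hB inferInstance h2
  have h4 := d.ses (A := ModuleCat.of S B) (B := M) (C := ModuleCat.of S (M ⧸ B))
    hB hM (h1.finite_right hM) h1
  obtain ⟨e'⟩ := d.DL mu
  exact (((Q.wt_L (lam := mu).2 rfl).congr e'.symm).of_inj _ h3.inj).of_surj _ h4.surj

lemma Duality.wt' [IsArtinianRing S] (d : Duality S Q) {M : ModuleCat.{0} S} (hM : Module.Finite S M)
    {mu : Λ} (h : Q.wt (d.D M) mu) : Q.wt M mu := by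
  obtain ⟨e⟩ := d.Dinvol M hM
  exact (d.wt (d.finD M hM) h).congr e

lemma Duality.swap_left [FDA S] (d : Duality S Q) {A B : ModuleCat.{0} S} (hA : Module.Finite S A)
    (hB : Module.Finite S B) (h : EV S 1 (d.D A) B) : EV S 1 (d.D B) A := by
  obtain ⟨e⟩ := d.Dinvol B hB
  exact d.swap hA (d.finD B hB) (EV.congr_right e h)

lemma Duality.swap_right [FDA S] (d : Duality S Q) {A B : ModuleCat.{0} S} (hA : Module.Finite S A)
    (hB : Module.Finite S B) (h : EV S 1 A (d.D B)) : EV S 1 B (d.D A) := by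
  obtain ⟨e⟩ := d.Dinvol A hA
  exact d.swap (d.finD A hA) hB (EV.congr_left e h)

lemma Duality.filt_costd [FDA S] (d : Duality S Q) (lam : Λ) : Filt Q.std (d.D (Q.costd lam)) := by
  have hf := d.finD (Q.costd lam) inferInstance
  have key : ∀ lam mu, ¬ mu < lam → EV S 1 (d.D (Q.costd lam)) (Q.costd mu) := fun lam mu h =>
    Q.ev_costd_of_wt' _ (d.finD (Q.costd lam) inferInstance)
      (fun nu hnu hlt => h (hlt.trans_le (Q.costd_le (d.wt' inferInstance hnu))))
  refine Q.filt_std_of_ev _ hf (fun mu => ?_)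
  by_cases h : mu < lam
  · exact d.swap_left inferInstance inferInstance (key mu lam (not_lt_of_gt h))
  · exact key lam mu h

lemma Duality.filt_std [FDA S] (d : Duality S Q) (lam : Λ) : Filt Q.costd (d.D (Q.std lam)) := by
  have hf := d.finD (Q.std lam) inferInstance
  have key : ∀ lam mu, ¬ mu < lam → EV S 1 (Q.std mu) (d.D (Q.std lam)) := fun lam mu h =>
    Q.ev_std_of_wt
      (fun nu hnu hlt => h (hlt.trans_le (Q.std_le (d.wt' inferInstance hnu))))
  refine Q.filt_costd_of_ev _ hf (fun mu => ?_)
  by_cases h : mu < lam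
  · exact d.swap_right inferInstance inferInstance (key mu lam (not_lt_of_gt h))
  · exact key lam mu h

lemma Duality.std_of_costd [FDA S] (d : Duality S Q) {M : ModuleCat.{0} S} (hM : Filt Q.costd M) :
    Filt Q.std (d.D M) := by
  have hf : Module.Finite S M := hM.finite inferInstance
  exact Q.filt_std_of_ev _ (d.finD M hf) (fun mu =>
    d.swap_left inferInstance hf ((d.filt_costd mu).ev hM 0))

lemma Duality.costd_of_std [FDA S] (d : Duality S Q) {M : ModuleCat.{0} S} (hM : Filt Q.std M) :
    Filt Q.costd (d.D M) := by
  have hf : Module.Finite S M := hM.finite inferInstance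
  exact Q.filt_costd_of_ev _ (d.finD M hf) (fun mu =>
    d.swap_right hf inferInstance (hM.ev (d.filt_std mu) 0))

lemma Duality.ev_left [FDA S] (d : Duality S Q) (n : ℕ) {M : ModuleCat.{0} S}
    (hM : Module.Finite S M) (h : ∀ lam, EV S (n + 1) (Q.std lam) M) (lam : Λ) :
    EV S (n + 1) (d.D M) (Q.costd lam) := by
  induction n generalizing M with
  | zero => exact (d.std_of_costd (Q.filt_costd_of_ev M hM h)).ev (Filt.single lam) 0
  | succ n ih =>
    obtain ⟨E, j, hE, hEi, hj⟩ := FDA.enough (S := S) M hM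
    have hs := SES.of_inj j hj
    have hC : Module.Finite S (ModuleCat.of S (E ⧸ LinearMap.range j)) := hs.finite_right hE
    refine EV.con3 (d.ses (C := ModuleCat.of S (E ⧸ LinearMap.range j)) hM hE hC hs)
      (ih hC (fun lam => EV.cov3 hs (h lam) (EV.of_inj hEi n)))
      ((d.std_of_costd (Q.filt_inj E hE hEi)).ev (Filt.single lam) _)

lemma Duality.ev_right [FDA S] (d : Duality S Q) (n : ℕ) {M : ModuleCat.{0} S}
    (hM : Module.Finite S M) (h : ∀ lam, EV S (n + 1) M (Q.costd lam)) (lam : Λ) :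
    EV S (n + 1) (Q.std lam) (d.D M) := by
  induction n generalizing M with
  | zero => exact (Filt.single lam).ev (d.costd_of_std (Q.filt_std_of_ev M hM h)) 0
  | succ n ih =>
    obtain ⟨m, p, hp⟩ := exists_free_cover M hM
    have hs := SES.of_surj p hp
    have hP : Module.Finite S (ModuleCat.of S (Fin m → S)) :=
      inferInstanceAs (Module.Finite S (Fin m → S))
    have hK : Module.Finite S (ModuleCat.of S (LinearMap.ker p)) := hs.finite_left hP
    refine EV.cov1 (d.ses (A := ModuleCat.of S (LinearMap.ker p)) (B := ModuleCat.of S (Fin m → S))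
      hK hP hM hs) (ih hK (fun lam => EV.con1 hs (h lam) (EV.of_proj n)))
      ((Filt.single lam).ev (d.costd_of_std (Q.filt_proj (ModuleCat.of S (Fin m → S)) hP
        (inferInstanceAs (Module.Projective S (Fin m → S))))) _)

lemma Duality.GA_iff_WA [FDA S] (d : Duality S Q) (n : ℕ) : GA Q n ↔ WA Q n := by
  constructor
  · intro h M hM lam
    obtain ⟨e⟩ := d.Dinvol M hM
    exact EV.congr_left e.symm (d.ev_left n (d.finD M hM) (h _ (d.finD M hM)) lam)
  · intro h M hM lam
    obtain ⟨e⟩ := d.Dinvol M hM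
    exact EV.congr_right e.symm (d.ev_right n (d.finD M hM) (h _ (d.finD M hM)) lam)

end DualityPart

end QHPaper

namespace QHPaper
open CategoryTheory

section HomFunctor
set_option linter.unusedSectionVars false

variable {S : Type} [Ring S]

/-- The functor `Hom_S(T,-)` on morphisms. -/
def Fm (T : ModuleCat.{0} S) {X Y : ModuleCat.{0} S} (f : X →ₗ[S] Y) :
    homTMod S T X →ₗ[RingelDualRing S T] homTMod S T Y where
  toFun φ := (f ∘ₗ (show T →ₗ[S] X from φ) : T →ₗ[S] Y)
  map_add' _ _ := LinearMap.comp_add _ _ _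
  map_smul' _ _ := rfl

/-- Powers of `T`. -/
abbrev pw (T : ModuleCat.{0} S) (n : ℕ) : ModuleCat.{0} S := ModuleCat.of S (Fin n → T)

variable {T : ModuleCat.{0} S} {X Y Z : ModuleCat.{0} S}

lemma Fm_apply (f : X →ₗ[S] Y) (φ : T →ₗ[S] X) :
    (Fm T f (φ : homTMod S T X)) = ((f ∘ₗ φ : T →ₗ[S] Y) : homTMod S T Y) := rfl

lemma Fm_comp (g : Y →ₗ[S] Z) (f : X →ₗ[S] Y) : Fm T (g ∘ₗ f) = Fm T g ∘ₗ Fm T f := rfl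

lemma Fm_id : Fm T (LinearMap.id : X →ₗ[S] X) = LinearMap.id := rfl

lemma Fm_zero : Fm T (0 : X →ₗ[S] Y) = 0 := rfl

lemma Fm_add (g f : X →ₗ[S] Y) : Fm T (g + f) = Fm T g + Fm T f := rfl

lemma Fm_sub (g f : X →ₗ[S] Y) : Fm T (g - f) = Fm T g - Fm T f := rfl

lemma Fm_ses {A B C : ModuleCat.{0} S} {f : A →ₗ[S] B} {g : B →ₗ[S] C} (h : SES f g)
    (hA : EV S 1 T A) : SES (Fm T f) (Fm T g) := by
  refine ⟨?_, ?_, ?_⟩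
  · intro φ ψ hφ
    refine LinearMap.ext fun x => h.inj ?_
    exact LinearMap.congr_fun hφ x
  · intro φ
    exact EV.lift h hA φ
  · intro φ
    constructor
    · intro hφ
      exact h.factor φ hφ
    · rintro ⟨ψ, rfl⟩
      refine LinearMap.ext fun x => ?_
      exact h.apply_eq_zero _

/-- Inclusion of a coordinate, as an element of `Hom(T,T^n)`. -/
abbrev inc (T : ModuleCat.{0} S) (n : ℕ) (i : Fin n) : T →ₗ[S] (Fin n → T) :=
  LinearMap.single S (fun _ : Fin n => (T : Type)) i

lemma pw_decomp {n : ℕ} {A : Type} [AddCommGroup A] [Module S A] (g : (Fin n → T) →ₗ[S] A) :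
    g = ∑ i, (g ∘ₗ inc T n i) ∘ₗ LinearMap.proj i := by
  refine LinearMap.pi_ext' fun i => ?_
  ext x
  simp only [LinearMap.comp_apply, LinearMap.sum_apply, LinearMap.proj_apply]
  rw [Finset.sum_eq_single i]
  · simp
  · intro b _ hb
    simp [Pi.single_eq_of_ne hb]
  · simp

/-- `Hom(T,T^n)` is free. -/
def Fm_free (T : ModuleCat.{0} S) (n : ℕ) :
    homTMod S T (pw T n) ≃ₗ[RingelDualRing S T] (Fin n → RingelDualRing S T) where
  toFun φ i := MulOpposite.op (LinearMap.proj i ∘ₗ (show T →ₗ[S] (Fin n → T) from φ))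
  map_add' _ _ := rfl
  map_smul' _ _ := rfl
  invFun u := (LinearMap.pi fun i => (u i).unop : T →ₗ[S] (Fin n → T))
  left_inv _ := rfl
  right_inv _ := rfl

instance (n : ℕ) : Module.Projective (RingelDualRing S T) (homTMod S T (pw T n)) :=
  Module.Projective.of_equiv (Fm_free T n).symm

instance (n : ℕ) : Module.Finite (RingelDualRing S T) (homTMod S T (pw T n)) :=
  Module.Finite.equiv (Fm_free T n).symm

lemma Fm_full {n : ℕ} (u : homTMod S T (pw T n) →ₗ[RingelDualRing S T] homTMod S T Y) :
    ∃ g : (Fin n → T) →ₗ[S] Y, u = Fm T (X := pw T n) g := by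
  refine ⟨∑ i, (show T →ₗ[S] Y from u (inc T n i)) ∘ₗ LinearMap.proj i, ?_⟩
  refine LinearMap.ext fun φ => ?_
  have h : φ = ∑ i, (MulOpposite.op (LinearMap.proj i ∘ₗ (show T →ₗ[S] (Fin n → T) from φ)) :
      RingelDualRing S T) • (show homTMod S T (pw T n) from inc T n i) := by
    apply (Fm_free T n).injective
    rw [map_sum]
    funext i
    rw [Finset.sum_apply, Finset.sum_eq_single i]
    · apply MulOpposite.unop_injective
      ext x
      show _ = (Pi.single i ((show T →ₗ[S] (Fin n → T) from φ) x i) : Fin n → T) i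
      simp
      rfl
    · intro b _ hb
      apply MulOpposite.unop_injective
      ext x
      show (Pi.single b ((show T →ₗ[S] (Fin n → T) from φ) x b) : Fin n → T) i = 0
      rw [Pi.single_eq_of_ne hb.symm]
    · simp
  conv_lhs => rw [h, map_sum]
  refine LinearMap.ext fun x => ?_
  let ev : homTMod S T Y →+ Y :=
    { toFun := fun f => (show T →ₗ[S] Y from f) x, map_zero' := rfl, map_add' := fun _ _ => rfl }
  show ev (∑ i, _) = (∑ i, (show T →ₗ[S] Y from u (inc T n i)) ∘ₗ LinearMap.proj i)
    ((show T →ₗ[S] (Fin n → T) from φ) x)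
  rw [map_sum, LinearMap.sum_apply]
  refine Finset.sum_congr rfl fun i _ => ?_
  rw [map_smul]
  rfl

lemma Fm_faithful_pw {n : ℕ} {g h : (Fin n → T) →ₗ[S] Y}
    (e : Fm T (X := pw T n) g = Fm T (X := pw T n) h) : g = h := by
  rw [pw_decomp g, pw_decomp h]
  refine Finset.sum_congr rfl fun i _ => ?_
  have := LinearMap.congr_fun e (inc T n i)
  exact congrArg (fun f : T →ₗ[S] Y => f ∘ₗ (LinearMap.proj i : (Fin n → T) →ₗ[S] T)) this

variable {Λ : Type} [Fintype Λ] [PartialOrder Λ] {Q : QHData S Λ} [FDA S]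

lemma IsFullTilting.std (hT : IsFullTilting S Q T) : Filt Q.std T := (inStdFilt_iff Q T).1 hT.1.1
lemma IsFullTilting.costd (hT : IsFullTilting S Q T) : Filt Q.costd T :=
  (inCostdFilt_iff Q T).1 hT.1.2

lemma IsFullTilting.faithful (hT : IsFullTilting S Q T) {K : ModuleCat.{0} S}
    (hK : Filt Q.costd K) {g h : K →ₗ[S] Y} (e : Fm T g = Fm T h) : g = h := by
  obtain ⟨n, K1, i, p, hs, _⟩ := hT.cover hK
  have : g ∘ₗ p = h ∘ₗ p := by
    apply Fm_faithful_pw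
    rw [Fm_comp (X := pw T n), Fm_comp (X := pw T n), e]
  exact LinearMap.cancel_right hs.surj |>.1 this

lemma IsFullTilting.full (hT : IsFullTilting S Q T) {K : ModuleCat.{0} S}
    (hK : Filt Q.costd K) (u : homTMod S T K →ₗ[RingelDualRing S T] homTMod S T Y) :
    ∃ g : K →ₗ[S] Y, u = Fm T g := by
  obtain ⟨n, K1, i, p, hs, hK1⟩ := hT.cover hK
  have hF := Fm_ses (B := pw T n) hs (hT.std.ev hK1 0)
  obtain ⟨g, hg⟩ := Fm_full (u ∘ₗ Fm T (X := pw T n) p)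
  have : g ∘ₗ i = 0 := by
    apply hT.faithful hK1
    rw [Fm_comp (Y := pw T n), ← hg, LinearMap.comp_assoc, hF.comp_eq_zero,
      LinearMap.comp_zero, Fm_zero]
  obtain ⟨v, hv⟩ := hs.descend g this
  refine ⟨v, ?_⟩
  apply LinearMap.cancel_right hF.surj |>.1
  rw [hg, ← hv, Fm_comp (X := pw T n)]

/-- Key comparison: `Ext` out of `X` and `Ext` out of `Hom(T,X)`. -/
lemma IsFullTilting.ev_iff (hT : IsFullTilting S Q T)
    (hfin : ∀ X : ModuleCat.{0} S, Module.Finite S X →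
      Module.Finite (RingelDualRing S T) (homTMod S T X))
    (d : ℕ) (X : ModuleCat.{0} S) (hX : Filt Q.costd X) :
    (∀ mu, EV S (d + 1) X (Q.costd mu)) ↔ ∀ M : ModuleCat.{0} (RingelDualRing S T),
      Module.Finite (RingelDualRing S T) M → EV (RingelDualRing S T) (d + 1) (homTMod S T X) M := by
  induction d generalizing X with
  | zero =>
    obtain ⟨n, K, i, p, hs, hK⟩ := hT.cover hX
    have hF := Fm_ses (B := pw T n) hs (hT.std.ev hK 0)
    constructor
    · intro h M hM
      have hXs := Q.filt_std_of_ev X (hX.finite inferInstance) h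
      obtain ⟨s, hps⟩ := EV.split hs (hXs.ev hK 0)
      refine EV.retract_left (Fm T (Y := pw T n) s) (Fm T (X := pw T n) p) ?_ (EV.of_proj 0)
      rw [← Fm_comp (Y := pw T n), hps]
      rfl
    · intro h mu
      obtain ⟨r, hr⟩ := EV.extend hF (h (homTMod S T K) (hfin K (hK.finite inferInstance)))
        LinearMap.id
      obtain ⟨ρ, rfl⟩ := Fm_full r
      have hρ : ρ ∘ₗ i = LinearMap.id := by
        apply hT.faithful hK
        rw [Fm_comp (Y := pw T n), hr]
        rfl
      refine EV.of_extend hs ((hT.std.pi n).ev (Filt.single mu) 0) fun φ => ⟨φ ∘ₗ ρ, ?_⟩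
      rw [LinearMap.comp_assoc, hρ, LinearMap.comp_id]
  | succ d ih =>
    obtain ⟨n, K, i, p, hs, hK⟩ := hT.cover hX
    have hF := Fm_ses (B := pw T n) hs (hT.std.ev hK 0)
    have hTn : ∀ e mu, EV S (e + 1) (Fin n → T) (Q.costd mu) :=
      fun e mu => (hT.std.pi n).ev (Filt.single mu) e
    constructor
    · intro h M hM
      refine EV.con3 hF ((ih K hK).1 (fun mu => EV.con1 hs (h mu) (hTn _ mu)) M hM) (EV.of_proj _)
    · intro h mu
      refine EV.con3 hs ((ih K hK).2 (fun M hM => EV.con1 hF (h M hM) (EV.of_proj _)) mu) (hTn _ mu)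

end HomFunctor

section Compare

variable {S : Type} [Ring S] {Λ : Type} [Fintype Λ] [PartialOrder Λ]

lemma GA.succ {Q : QHData S Λ} [FDA S] {d : ℕ} (h : GA Q d) : GA Q (d+1) := by
  intro M hM lam
  obtain ⟨E, j, hE, hEi, hj⟩ := FDA.enough M hM
  have hs := SES.of_inj j hj
  exact EV.cov1 hs (h (ModuleCat.of S (E ⧸ LinearMap.range j)) (hs.finite_right hE) lam)
    (EV.of_inj hEi _)

lemma GA.mono {Q : QHData S Λ} [FDA S] {d e : ℕ} (h : GA Q d) (hde : d ≤ e) : GA Q e := by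
  induction hde with
  | refl => exact h
  | step _ ih => exact ih.succ

lemma WA.succ {Q : QHData S Λ} [FDA S] {d : ℕ} (h : WA Q d) : WA Q (d+1) := by
  intro M hM lam
  obtain ⟨n, p, hp⟩ := exists_free_cover M hM
  have hs := SES.of_surj p hp
  exact EV.con3 hs (h (ModuleCat.of S (LinearMap.ker p)) (hs.finite_left inferInstance) lam)
    (EV.of_proj _)

lemma WA.mono {Q : QHData S Λ} [FDA S] {d e : ℕ} (h : WA Q d) (hde : d ≤ e) : WA Q e := by
  induction hde with
  | refl => exact h
  | step _ ih => exact ih.succ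

variable [FDA S] {Q : QHData S Λ} {T : ModuleCat.{0} S} [FDA (RingelDualRing S T)]
  {Q' : QHData (RingelDualRing S T) Λᵒᵈ}

lemma GA'_iff_WA (hRD : IsRingelDualData S Q T Q')
    (hfin : ∀ X : ModuleCat.{0} S, Module.Finite S X →
      Module.Finite (RingelDualRing S T) (homTMod S T X)) (d : ℕ) : GA Q' d ↔ WA Q d := by
  have hT := hRD.1
  constructor
  · intro h
    have h1 : ∀ j, d ≤ j → ∀ lam mu, EV S (j+1) (Q.costd lam) (Q.costd mu) := by
      intro j hj lam
      refine (hT.ev_iff hfin j _ (Filt.single lam)).2 fun M hM => ?_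
      obtain ⟨e⟩ := hRD.2 lam
      exact EV.congr_left (X := homTMod S T (Q.costd lam)) e.symm (h.mono hj M hM _)
    obtain ⟨n, hn⟩ := Q.bound
    have h2 : ∀ t j, d ≤ j → n ≤ j + 1 + t → ∀ M : ModuleCat.{0} S, Module.Finite S M →
        ∀ mu, EV S (j+1) M (Q.costd mu) := by
      intro t
      induction t with
      | zero =>
        intro j _ hj M hM mu
        exact hn _ (by omega) _ _ hM
      | succ t ih =>
        intro j hdj hj M hM mu
        obtain ⟨E, i, hE, hEi, hi⟩ := FDA.enough M hM
        have hs := SES.of_inj i hi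
        refine EV.con1 hs (ih (j+1) (by omega) (by omega)
          (ModuleCat.of S (E ⧸ LinearMap.range i)) (hs.finite_right hE) mu) ?_
        exact (Q.filt_inj E hE hEi).ev_left _ (fun lam => h1 j hdj lam mu)
    intro M hM mu
    exact h2 n d le_rfl (by omega) M hM mu
  · intro h M hM lam
    obtain ⟨e⟩ := hRD.2 (OrderDual.ofDual lam)
    refine EV.congr_left (Z := homTMod S T (Q.costd (OrderDual.ofDual lam))) e ?_
    exact (hT.ev_iff hfin d _ (Filt.single _)).1 (fun mu => h _ inferInstance mu) M hM

end Compare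

end QHPaper

namespace QHPaper
open CategoryTheory

section Third
set_option linter.unusedSectionVars false

variable {S : Type} [Ring S] {Λ : Type} [Fintype Λ] [PartialOrder Λ]

/-- Resolutions over the Ringel dual by modules `Hom(T,T^n)`. -/
structure Res (T : ModuleCat.{0} S) where
  N : ℕ → ModuleCat.{0} (RingelDualRing S T)
  n : ℕ → ℕ
  a : ∀ i, N (i+1) →ₗ[RingelDualRing S T] homTMod S T (pw T (n i))
  b : ∀ i, homTMod S T (pw T (n i)) →ₗ[RingelDualRing S T] N i
  ses : ∀ i, SES (a i) (b i)

variable {T : ModuleCat.{0} S}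

/-- Prolong a resolution. -/
def Res.cons (R : Res T) (N0 : ModuleCat.{0} (RingelDualRing S T)) (n0 : ℕ)
    (a0 : R.N 0 →ₗ[RingelDualRing S T] homTMod S T (pw T n0))
    (b0 : homTMod S T (pw T n0) →ₗ[RingelDualRing S T] N0) (h : SES a0 b0) : Res T where
  N := fun i => match i with
    | 0 => N0
    | i+1 => R.N i
  n := fun i => match i with
    | 0 => n0
    | i+1 => R.n i
  a := fun i => match i with
    | 0 => a0
    | i+1 => R.a i
  b := fun i => match i with
    | 0 => b0
    | i+1 => R.b i
  ses := fun i => match i with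
    | 0 => h
    | i+1 => R.ses i

lemma exists_res_step [FDA (RingelDualRing S T)]
    (N : {N : ModuleCat.{0} (RingelDualRing S T) // Module.Finite (RingelDualRing S T) N}) :
    ∃ (K : {N : ModuleCat.{0} (RingelDualRing S T) // Module.Finite (RingelDualRing S T) N}) (n : ℕ)
      (a : K.1 →ₗ[RingelDualRing S T] homTMod S T (pw T n))
      (b : homTMod S T (pw T n) →ₗ[RingelDualRing S T] N.1), SES a b := by
  obtain ⟨n, p, hp⟩ := exists_free_cover N.1 N.2
  have hs := SES.of_surj (p ∘ₗ (Fm_free T n).toLinearMap) (hp.comp (Fm_free T n).surjective)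
  exact ⟨⟨ModuleCat.of _ (LinearMap.ker (p ∘ₗ (Fm_free T n).toLinearMap)),
    hs.finite_left inferInstance⟩, n, _, _, hs⟩

lemma exists_res [FDA (RingelDualRing S T)] (N : ModuleCat.{0} (RingelDualRing S T))
    (hN : Module.Finite (RingelDualRing S T) N) : ∃ R : Res T, R.N 0 = N := by
  choose K n a b h using exists_res_step (T := T)
  let K' : ℕ → {N : ModuleCat.{0} (RingelDualRing S T) // Module.Finite (RingelDualRing S T) N} :=
    fun i => Nat.rec ⟨N, hN⟩ (fun _ M => K M) i
  exact ⟨⟨fun i => (K' i).1, fun i => n (K' i), fun i => a (K' i), fun i => b (K' i),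
    fun i => h (K' i)⟩, rfl⟩

lemma Res.exists_d (R : Res T) (i : ℕ) : ∃ g : (Fin (R.n (i+1)) → T) →ₗ[S] (Fin (R.n i) → T),
    R.a i ∘ₗ R.b (i+1) = Fm T (X := pw T (R.n (i+1))) (Y := pw T (R.n i)) g :=
  Fm_full (Y := pw T (R.n i)) _

/-- The differential. -/
noncomputable def Res.d (R : Res T) (i : ℕ) :
    (Fin (R.n (i+1)) → T) →ₗ[S] (Fin (R.n i) → T) := (R.exists_d i).choose

lemma Res.d_spec (R : Res T) (i : ℕ) : R.a i ∘ₗ R.b (i+1) =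
    Fm T (X := pw T (R.n (i+1))) (Y := pw T (R.n i)) (R.d i) := (R.exists_d i).choose_spec

lemma Res.d_d (R : Res T) (i : ℕ) : R.d i ∘ₗ R.d (i+1) = 0 := by
  apply Fm_faithful_pw (Y := pw T (R.n i))
  rw [Fm_comp (X := pw T (R.n (i+1+1))) (Y := pw T (R.n (i+1))) (Z := pw T (R.n i)), ← R.d_spec,
    ← R.d_spec]
  refine LinearMap.ext fun x => ?_
  show R.a i (R.b (i+1) (R.a (i+1) (R.b (i+1+1) x))) = 0
  rw [(R.ses (i+1)).apply_eq_zero, map_zero]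

/-- Exactness of `Hom(Y,T_•)` in degree `i+1`. -/
def Res.Hex (R : Res T) (Y : Type) [AddCommGroup Y] [Module S Y] (i : ℕ) : Prop :=
  ∀ φ : Y →ₗ[S] (Fin (R.n (i+1)) → T), R.d i ∘ₗ φ = 0 →
    ∃ ψ : Y →ₗ[S] (Fin (R.n (i+1+1)) → T), R.d (i+1) ∘ₗ ψ = φ

lemma Res.hex_T (R : Res T) (i : ℕ) : R.Hex T i := by
  intro φ hφ
  have h1 : R.a i (R.b (i+1) φ) = 0 := by
    have := LinearMap.congr_fun (R.d_spec i) φ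
    exact this.trans hφ
  have h2 : R.b (i+1) φ = 0 := (R.ses i).inj (by rw [h1, map_zero])
  obtain ⟨y, hy⟩ := ((R.ses (i+1)).exact _).1 h2
  obtain ⟨ψ, rfl⟩ := (R.ses (i+1+1)).surj y
  refine ⟨ψ, ?_⟩
  have := LinearMap.congr_fun (R.d_spec (i+1)) ψ
  exact this.symm.trans hy

lemma Res.hex_pw (R : Res T) (i n : ℕ) : R.Hex (Fin n → T) i := by
  intro φ hφ
  have h : ∀ j, ∃ ψ : T →ₗ[S] (Fin (R.n (i+1+1)) → T), R.d (i+1) ∘ₗ ψ = φ ∘ₗ inc T n j := by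
    intro j
    apply R.hex_T
    rw [← LinearMap.comp_assoc, hφ, LinearMap.zero_comp]
  choose ψ hψ using h
  refine ⟨∑ j, ψ j ∘ₗ LinearMap.proj j, ?_⟩
  rw [pw_decomp φ, show R.d (i+1) ∘ₗ ∑ j, ψ j ∘ₗ LinearMap.proj j =
    ∑ j, R.d (i+1) ∘ₗ ψ j ∘ₗ LinearMap.proj j by
      refine LinearMap.ext fun x => ?_
      simp only [LinearMap.comp_apply, LinearMap.sum_apply, map_sum]]
  refine Finset.sum_congr rfl fun j _ => ?_
  rw [← LinearMap.comp_assoc, hψ]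

lemma Res.hex_retract (R : Res T) {i : ℕ} {Y Z : Type} [AddCommGroup Y] [Module S Y]
    [AddCommGroup Z] [Module S Z] (s : Y →ₗ[S] Z) (r : Z →ₗ[S] Y) (hrs : r ∘ₗ s = LinearMap.id)
    (h : R.Hex Z i) : R.Hex Y i := by
  intro φ hφ
  obtain ⟨ψ, hψ⟩ := h (φ ∘ₗ r) (by rw [← LinearMap.comp_assoc, hφ, LinearMap.zero_comp])
  exact ⟨ψ ∘ₗ s, by rw [← LinearMap.comp_assoc, hψ, LinearMap.comp_assoc, hrs, LinearMap.comp_id]⟩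

variable [FDA S] {Q : QHData S Λ}

lemma Res.hex_of_ev (hT : IsFullTilting S Q T) (R : Res T) (e : ℕ) (Y : ModuleCat.{0} S)
    (hY : Filt Q.std Y) (h : ∀ lam, EV S (e+1) (Q.std lam) Y) (i : ℕ) (hi : e ≤ i) : R.Hex Y i := by
  induction e generalizing Y i with
  | zero =>
    have hYc := Q.filt_costd_of_ev Y (hY.finite inferInstance) h
    obtain ⟨n, s, r, hrs⟩ := hT.summand hY hYc
    exact R.hex_retract s r hrs (R.hex_pw i n)
  | succ e ih =>
    obtain ⟨n, C, j, q, hs, hC⟩ := hT.embed hY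
    obtain ⟨i, rfl⟩ : ∃ i', i = i' + 1 := ⟨i - 1, by omega⟩
    have hC' := ih C hC (fun lam => EV.cov3 hs (h lam)
      ((Filt.single lam).ev (hT.costd.pi n) e)) i (by omega)
    intro φ hφ
    obtain ⟨Φ, hΦ⟩ := EV.extend hs (hC.ev (hT.costd.pi _) 0) φ
    obtain ⟨w, hw⟩ := hs.descend (R.d (i+1) ∘ₗ Φ) (by rw [LinearMap.comp_assoc, hΦ, hφ])
    obtain ⟨v, hv⟩ := hC' w (by
      apply LinearMap.cancel_right hs.surj |>.1
      rw [LinearMap.comp_assoc, hw, ← LinearMap.comp_assoc, R.d_d, LinearMap.zero_comp,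
        LinearMap.zero_comp])
    obtain ⟨ψ, hψ⟩ := R.hex_pw (i+1) n (Φ - v ∘ₗ q) (by
      rw [LinearMap.comp_sub, ← LinearMap.comp_assoc, hv, hw, sub_self])
    refine ⟨ψ ∘ₗ j, ?_⟩
    rw [← LinearMap.comp_assoc, hψ, LinearMap.sub_comp, hΦ, LinearMap.comp_assoc, hs.comp_eq_zero,
      LinearMap.comp_zero, sub_zero]

/-- The regular module as an object. -/
abbrev reg (S : Type) [Ring S] : ModuleCat.{0} S := ModuleCat.of S S

instance : Module.Finite S (reg S) := inferInstanceAs (Module.Finite S S)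
instance : Module.Projective S (reg S) := inferInstanceAs (Module.Projective S S)

lemma Res.exact_of_hex (R : Res T) {i : ℕ} (h : R.Hex S i) (x : Fin (R.n (i+1)) → T)
    (hx : R.d i x = 0) : ∃ y, R.d (i+1) y = x := by
  obtain ⟨ψ, hψ⟩ := h (LinearMap.toSpanSingleton S _ x) (by
    ext
    simp [hx])
  exact ⟨ψ 1, by
    have := LinearMap.congr_fun hψ 1
    simpa using this⟩

lemma Res.hex_of_exact (R : Res T) {i : ℕ}
    (h : ∀ x : Fin (R.n (i+1)) → T, R.d i x = 0 → ∃ y, R.d (i+1) y = x) : R.Hex S i := by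
  intro φ hφ
  obtain ⟨y, hy⟩ := h (φ 1) (LinearMap.congr_fun hφ 1)
  exact ⟨LinearMap.toSpanSingleton S _ y, by
    ext
    simp [hy]⟩

lemma Res.ev_up (R : Res T) {M : ModuleCat.{0} (RingelDualRing S T)} (d e : ℕ)
    (h : EV (RingelDualRing S T) (e+1) (R.N d) M) :
    EV (RingelDualRing S T) (e+d+1) (R.N 0) M := by
  induction d generalizing e with
  | zero => exact h
  | succ d ih =>
    have := ih (e+1) (EV.con3 (R.ses d) h (EV.of_proj _))
    have e1 : e + 1 + d + 1 = e + (d+1) + 1 := by omega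
    rwa [e1] at this

lemma Res.ev_down (R : Res T) {M : ModuleCat.{0} (RingelDualRing S T)} (d e : ℕ)
    (h : EV (RingelDualRing S T) (e+d+1) (R.N 0) M) :
    EV (RingelDualRing S T) (e+1) (R.N d) M := by
  induction d generalizing e with
  | zero => exact h
  | succ d ih =>
    refine EV.con1 (R.ses d) (ih (e+1) ?_) (EV.of_proj _)
    have e1 : e + 1 + d + 1 = e + (d+1) + 1 := by omega
    rwa [e1]

section ringel
variable {Q' : QHData (RingelDualRing S T) Λᵒᵈ} 

lemma filt_std' (hRD : IsRingelDualData S Q T Q') {X : ModuleCat.{0} S} (hX : Filt Q.costd X) :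
    Filt Q'.std (homTMod S T X) := by
  induction hX with
  | zero M hM =>
    refine Filt.zero _ ⟨fun a b => LinearMap.ext fun x => Subsingleton.elim _ _⟩
  | ext i f g h hA ih =>
    obtain ⟨e⟩ := hRD.2 i
    exact Filt.extension (Fm_ses h (hRD.1.std.ev hA 0)) ih
      (Filt.congr (N := homTMod S T (Q.costd i)) e (Filt.single (D := Q'.std) (OrderDual.toDual i)))

lemma ev_inj' (hT : IsFullTilting S Q T) {X E : ModuleCat.{0} S} (hX : Filt Q.costd X)
    (hE : Module.Injective S E) : EV (RingelDualRing S T) 1 (homTMod S T X) (homTMod S T E) := by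
  obtain ⟨n, K, i, p, hs, hK⟩ := hT.cover hX
  have hF := Fm_ses (B := pw T n) hs (hT.std.ev hK 0)
  refine EV.of_extend hF (EV.of_proj 0) fun φ => ?_
  obtain ⟨g, rfl⟩ := hT.full hK φ
  obtain ⟨G, hG⟩ := EV.extend hs (EV.of_inj hE 0) g
  exact ⟨Fm T (X := pw T n) G, by rw [← hG, Fm_comp (Y := pw T n)]⟩

lemma filt_costd' [FDA (RingelDualRing S T)] (hRD : IsRingelDualData S Q T Q')
    {E : ModuleCat.{0} S} (hf : Module.Finite (RingelDualRing S T) (homTMod S T E))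
    (hE : Module.Injective S E) : Filt Q'.costd (homTMod S T E) := by
  refine Q'.filt_costd_of_ev _ hf fun lam => ?_
  obtain ⟨e⟩ := hRD.2 (OrderDual.ofDual lam)
  exact EV.congr_left (Z := homTMod S T (Q.costd (OrderDual.ofDual lam))) e
    (ev_inj' hRD.1 (Filt.single _) hE)

/-- First half of the comparison. -/
lemma WA'_of_GA [FDA (RingelDualRing S T)] (hRD : IsRingelDualData S Q T Q') (d : ℕ)
    (h : GA Q d) : WA Q' d := by
  intro N hN lam
  have hT := hRD.1
  have hTf : Module.Finite S T := hT.2.1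
  obtain ⟨R, rfl⟩ := exists_res N hN
  have hex : ∀ i, d ≤ i → ∀ x : Fin (R.n (i+1)) → T, R.d i x = 0 → ∃ y, R.d (i+1) y = x := by
    intro i hi
    refine R.exact_of_hex (R.hex_of_ev hT d (reg S) (Q.filt_proj _ inferInstance inferInstance)
      (fun mu => h _ inferInstance mu) i hi)
  have hs : ∀ i, d ≤ i → SES (LinearMap.range (R.d (i+1))).subtype (R.d i).rangeRestrict := by
    intro i hi
    refine ⟨Submodule.injective_subtype _, LinearMap.surjective_rangeRestrict _, ?_⟩
    rw [LinearMap.exact_iff, LinearMap.ker_rangeRestrict, Submodule.range_subtype]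
    ext x
    constructor
    · intro hx
      exact hex i hi x hx
    · rintro ⟨y, rfl⟩
      exact LinearMap.congr_fun (R.d_d i) y
  obtain ⟨n, hn⟩ := Q.bound
  have hev : ∀ t e i, d ≤ i → n ≤ e + 1 + t →
      ∀ mu, EV S (e+1) (Q.std mu) (LinearMap.range (R.d i)) := by
    intro t
    induction t with
    | zero =>
      intro e i _ he mu
      exact hn _ (by omega) (Q.std mu) (ModuleCat.of S (LinearMap.range (R.d i))) inferInstance
    | succ t ih =>
      intro e i hi he mu
      exact EV.cov3 (hs i hi) (ih (e+1) (i+1) (by omega) (by omega) mu)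
        ((Filt.single mu).ev (hT.costd.pi _) e)
  have hI : ∀ i, d ≤ i → Filt Q.costd (ModuleCat.of S (LinearMap.range (R.d i))) := by
    intro i hi
    have : Module.Finite S (LinearMap.range (R.d i)) := inferInstance
    exact Q.filt_costd_of_ev _ this (hev n 0 i hi (by omega))
  have hsX := SES.of_sub (LinearMap.range (R.d d))
  let X := ModuleCat.of S ((Fin (R.n d) → T) ⧸ LinearMap.range (R.d d))
  have hX : Filt Q.costd X := by
    have : Module.Finite S X := hsX.finite_right inferInstance
    refine Q.filt_costd_of_ev _ this fun mu => ?_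
    exact EV.cov3 hsX (hev n 1 d le_rfl (by omega) mu) ((Filt.single mu).ev (hT.costd.pi _) 0)
  have hFX := Fm_ses (A := ModuleCat.of S (LinearMap.range (R.d d))) (B := pw T (R.n d)) (C := X)
    hsX (hT.std.ev (hI d le_rfl) 0)
  have hF2 := Fm_ses (A := ModuleCat.of S (LinearMap.range (R.d (d+1))))
    (B := pw T (R.n (d+1))) (C := ModuleCat.of S (LinearMap.range (R.d d)))
    (hs d le_rfl) (hT.std.ev (hI (d+1) (by omega)) 0)
  have hk : LinearMap.ker (R.b d) = LinearMap.ker (Fm T (X := pw T (R.n d)) (Y := X)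
      (LinearMap.range (R.d d)).mkQ) := by
    rw [LinearMap.exact_iff.1 hFX.exact, LinearMap.exact_iff.1 (R.ses d).exact]
    have e1 : LinearMap.range (R.a d) = LinearMap.range (R.a d ∘ₗ R.b (d+1)) := by
      rw [LinearMap.range_comp_of_range_eq_top]
      exact LinearMap.range_eq_top.2 (R.ses (d+1)).surj
    rw [e1, R.d_spec, ← LinearMap.range_comp_of_range_eq_top _ (LinearMap.range_eq_top.2 hF2.surj)]
    rfl
  have e := ((LinearMap.quotKerEquivOfSurjective _ (R.ses d).surj).symm.trans
    (Submodule.quotEquivOfEq _ _ hk)).trans (LinearMap.quotKerEquivOfSurjective _ hFX.surj)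
  have := R.ev_up (M := Q'.costd lam) d 0 (EV.congr_left e
    ((filt_std' hRD hX).ev (Filt.single lam) 0))
  rwa [zero_add] at this

/-- Exactness forced by vanishing over the Ringel dual. -/
lemma Res.hex_of_WA [FDA (RingelDualRing S T)] (hRD : IsRingelDualData S Q T Q')
    (hfin : ∀ X : ModuleCat.{0} S, Module.Finite S X →
      Module.Finite (RingelDualRing S T) (homTMod S T X)) (R : Res T)
    (hN : Module.Finite (RingelDualRing S T) (R.N 0)) (j : ℕ) (h : WA Q' j) : R.Hex S j := by
  have hT := hRD.1
  have hTf : Module.Finite S T := hT.2.1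
  refine R.hex_of_exact fun z hz => ?_
  have hsX := SES.of_sub (LinearMap.range (R.d (j+1)))
  obtain ⟨E, ι, hE, hEi, hι⟩ := FDA.enough (ModuleCat.of S ((Fin (R.n (j+1)) → T) ⧸
    LinearMap.range (R.d (j+1)))) (hsX.finite_right inferInstance)
  let hh : (Fin (R.n (j+1)) → T) →ₗ[S] E := ι ∘ₗ (LinearMap.range (R.d (j+1))).mkQ
  have h0 : hh ∘ₗ R.d (j+1) = 0 := by
    refine LinearMap.ext fun x => ?_
    show ι ((LinearMap.range (R.d (j+1))).mkQ (R.d (j+1) x)) = 0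
    rw [Submodule.mkQ_apply, (Submodule.Quotient.mk_eq_zero _).2 (LinearMap.mem_range_self _ x), map_zero]
  have h1 : Fm T (X := pw T (R.n (j+1))) hh ∘ₗ R.a (j+1) = 0 := by
    apply LinearMap.cancel_right (R.ses (j+1+1)).surj |>.1
    rw [LinearMap.comp_assoc, R.d_spec, ← Fm_comp (Y := pw T (R.n (j+1))), h0]
    rfl
  obtain ⟨u, hu⟩ := (R.ses (j+1)).descend _ h1
  have hev : EV (RingelDualRing S T) (0 + j + 1) (R.N 0) (homTMod S T E) := by
    rw [zero_add]
    exact (filt_costd' hRD (hfin E hE) hEi).ev_right _ (fun lam => h _ hN lam)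
  obtain ⟨v, hv⟩ := EV.extend (R.ses j) (R.ev_down j 0 hev) u
  obtain ⟨g, rfl⟩ := Fm_full v
  have h2 : hh = g ∘ₗ R.d j := by
    apply Fm_faithful_pw
    rw [← hu, ← hv, LinearMap.comp_assoc, R.d_spec, Fm_comp (Y := pw T (R.n j))]
  have h3 : hh z = 0 := by
    rw [h2, LinearMap.comp_apply, hz, map_zero]
  have h4 : (LinearMap.range (R.d (j+1))).mkQ z = 0 := hι (by rw [map_zero]; exact h3)
  exact (Submodule.Quotient.mk_eq_zero _).1 h4

lemma Res.lemH (hT : IsFullTilting S Q T) (R : Res T) {n i : ℕ} {Y Y' : ModuleCat.{0} S}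
    (hY' : Filt Q.std Y')
    {j : Y →ₗ[S] (Fin n → T)} {p : (Fin n → T) →ₗ[S] Y'} (hs : SES j p) (h : R.Hex Y i)
    (w : Y' →ₗ[S] (Fin (R.n i) → T)) (y : (Fin n → T) →ₗ[S] (Fin (R.n (i+1)) → T))
    (hwy : w ∘ₗ p = R.d i ∘ₗ y) : ∃ v, R.d i ∘ₗ v = w := by
  obtain ⟨ψ0, hψ0⟩ := h (y ∘ₗ j) (by
    rw [← LinearMap.comp_assoc, ← hwy, LinearMap.comp_assoc, hs.comp_eq_zero, LinearMap.comp_zero])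
  obtain ⟨ψ, hψ⟩ := EV.extend hs (hY'.ev (hT.costd.pi _) 0) ψ0
  obtain ⟨v, hv⟩ := hs.descend (y - R.d (i+1) ∘ₗ ψ) (by
    rw [LinearMap.sub_comp, LinearMap.comp_assoc, hψ, hψ0, sub_self])
  refine ⟨v, ?_⟩
  apply LinearMap.cancel_right hs.surj |>.1
  rw [LinearMap.comp_assoc, hv, LinearMap.comp_sub, ← LinearMap.comp_assoc, R.d_d,
    LinearMap.zero_comp, sub_zero, hwy]

lemma Res.hex_shift (hT : IsFullTilting S Q T) (R : Res T) {n i : ℕ} {Y Y' : ModuleCat.{0} S}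
    (hY' : Filt Q.std Y')
    {j : Y →ₗ[S] (Fin n → T)} {p : (Fin n → T) →ₗ[S] Y'} (hs : SES j p) (h : R.Hex Y (i+1)) :
    R.Hex Y' i := by
  intro w hw
  obtain ⟨y, hy⟩ := R.hex_pw i n (w ∘ₗ p) (by
    rw [← LinearMap.comp_assoc, hw, LinearMap.zero_comp])
  exact R.lemH hT hY' hs h w y hy.symm

/-- Coresolution of the regular module by powers of `T`. -/
lemma exists_cores (hT : IsFullTilting S Q T) : ∃ (C : ℕ → ModuleCat.{0} S) (m : ℕ → ℕ)
    (a : ∀ i, C i →ₗ[S] (Fin (m i) → T)) (b : ∀ i, (Fin (m i) → T) →ₗ[S] C (i+1)),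
    C 0 = reg S ∧ (∀ i, SES (a i) (b i)) ∧ ∀ i, Filt Q.std (C i) := by
  have step : ∀ Y : {Y : ModuleCat.{0} S // Filt Q.std Y}, ∃ (Z : {Y : ModuleCat.{0} S // Filt Q.std Y})
      (n : ℕ) (j : Y.1 →ₗ[S] (Fin n → T)) (q : (Fin n → T) →ₗ[S] Z.1), SES j q := by
    rintro ⟨Y, hY⟩
    obtain ⟨n, C, j, q, hs, hC⟩ := hT.embed hY
    exact ⟨⟨C, hC⟩, n, j, q, hs⟩
  choose K n a b h using step
  let K' : ℕ → {Y : ModuleCat.{0} S // Filt Q.std Y} :=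
    fun i => Nat.rec ⟨reg S, Q.filt_proj _ inferInstance inferInstance⟩ (fun _ M => K M) i
  exact ⟨fun i => (K' i).1, fun i => n (K' i), fun i => a (K' i), fun i => b (K' i), rfl,
    fun i => h (K' i), fun i => (K' i).2⟩

lemma exists_res_start [FDA (RingelDualRing S T)] {m n : ℕ}
    (d0 : (Fin m → T) →ₗ[S] (Fin n → T)) : ∃ (R : Res T) (_ : R.n 1 = m) (_ : R.n 0 = n),
      Module.Finite (RingelDualRing S T) (R.N 0) ∧
      HEq (R.d 0) d0 := by
  let f := Fm T (X := pw T m) (Y := pw T n) d0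
  have hs1 := SES.of_surj f.rangeRestrict f.surjective_rangeRestrict
  have hs0 := SES.of_sub (LinearMap.range f)
  obtain ⟨R, hR⟩ := exists_res (T := T) (ModuleCat.of _ (LinearMap.ker f.rangeRestrict))
    (hs1.finite_left inferInstance)
  generalize hK : ModuleCat.of (RingelDualRing S T) (LinearMap.ker f.rangeRestrict) = K at hR
  obtain ⟨i, hi⟩ : ∃ i : K →ₗ[RingelDualRing S T] homTMod S T (pw T m), SES i f.rangeRestrict := by
    subst hK
    exact ⟨_, hs1⟩
  subst hR
  let R1 := R.cons (ModuleCat.of _ (LinearMap.range f)) m i f.rangeRestrict hi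
  let R0 := R1.cons (ModuleCat.of _ (homTMod S T (pw T n) ⧸ LinearMap.range f)) n
    (LinearMap.range f).subtype (LinearMap.range f).mkQ hs0
  refine ⟨R0, rfl, rfl, hs0.finite_right inferInstance, ?_⟩
  apply heq_of_eq
  refine Fm_faithful_pw (T := T) (Y := pw T n) (n := m) (g := R0.d 0) (h := d0) ?_
  refine (R0.d_spec 0).symm.trans ?_
  rfl

lemma cores_step [FDA (RingelDualRing S T)] (hRD : IsRingelDualData S Q T Q')
    (hfin : ∀ X : ModuleCat.{0} S, Module.Finite S X →
      Module.Finite (RingelDualRing S T) (homTMod S T X))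
    (C : ℕ → ModuleCat.{0} S) (m : ℕ → ℕ)
    (a : ∀ i, C i →ₗ[S] (Fin (m i) → T)) (b : ∀ i, (Fin (m i) → T) →ₗ[S] C (i+1))
    (hC0 : C 0 = reg S) (hs : ∀ i, SES (a i) (b i)) (hC : ∀ i, Filt Q.std (C i))
    (j : ℕ) (h : WA Q' j) (hj : Filt Q.costd (C (j+1))) : Filt Q.costd (C j) := by
  have hT := hRD.1
  obtain ⟨n, ι, r, hr⟩ := hT.summand (hC (j+1)) hj
  obtain ⟨R, hm, hn, hN, hd⟩ := exists_res_start (ι ∘ₗ b j)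
  have h0 : R.Hex (C 0) j := by
    rw [hC0]
    exact R.hex_of_WA hRD hfin hN j h
  have h1 : ∀ s i, s + i = j → R.Hex (C s) i := by
    intro s
    induction s with
    | zero =>
      intro i hi
      rw [zero_add] at hi
      rwa [hi]
    | succ s ih =>
      intro i hi
      exact R.hex_shift hT (hC _) (hs s) (ih (i+1) (by omega))
  have h2 := h1 j 0 rfl
  have h3 : ∃ v : C (j+1) →ₗ[S] (Fin (m j) → T), (ι ∘ₗ b j) ∘ₗ v = ι := by
    have key : ∀ {M0 N0 : ℕ} (hm : R.n 1 = M0) (hn : R.n 0 = N0)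
        (D : (Fin M0 → T) →ₗ[S] (Fin N0 → T)) (hd : HEq (R.d 0) D)
        (w : C (j+1) →ₗ[S] (Fin N0 → T)) (y : (Fin (m j) → T) →ₗ[S] (Fin M0 → T))
        (_ : w ∘ₗ b j = D ∘ₗ y), ∃ v, D ∘ₗ v = w := by
      rintro _ _ rfl rfl D hd w y hwy
      rw [← eq_of_heq hd] at hwy ⊢
      exact R.lemH hT (hC _) (hs j) h2 w y hwy
    exact key hm hn _ hd ι LinearMap.id rfl
  obtain ⟨v, hv⟩ := h3
  have h4 : b j ∘ₗ v = LinearMap.id := by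
    rw [← LinearMap.id_comp (b j), ← hr, LinearMap.comp_assoc, LinearMap.comp_assoc,
      ← LinearMap.comp_assoc v (b j) ι, hv]
  refine Q.filt_costd_of_ev _ ((hC j).finite inferInstance) fun lam => ?_
  refine EV.of_lift (hs j) ((Filt.single lam).ev (hT.costd.pi _) 0) fun φ => ⟨v ∘ₗ φ, ?_⟩
  rw [← LinearMap.comp_assoc, h4, LinearMap.id_comp]

/-- Second half of the comparison. -/
lemma GA_of_WA' [FDA (RingelDualRing S T)] (hRD : IsRingelDualData S Q T Q')
    (hfin : ∀ X : ModuleCat.{0} S, Module.Finite S X →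
      Module.Finite (RingelDualRing S T) (homTMod S T X)) (d : ℕ)
    (h : WA Q' d) : GA Q d := by
  have hT := hRD.1
  obtain ⟨C, m, a, b, hC0, hs, hC⟩ := exists_cores hT
  obtain ⟨n, hn⟩ := Q.bound
  -- shifting along the coresolution
  have hTe : ∀ i e lam, EV S (e+1) (Q.std lam) (Fin (m i) → T) :=
    fun i e lam => (Filt.single lam).ev (hT.costd.pi _) e
  have hdown : ∀ j e lam, EV S (e+j+1) (Q.std lam) (C 0) → EV S (e+1) (Q.std lam) (C j) := by
    intro j
    induction j with
    | zero => exact fun e lam h => h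
    | succ j ih =>
      intro e lam h
      refine EV.cov3 (hs j) (ih (e+1) lam ?_) (hTe _ _ _)
      have e1 : e + 1 + j + 1 = e + (j+1) + 1 := by omega
      rwa [e1]
  have hup : ∀ j e lam, EV S (e+1) (Q.std lam) (C j) → EV S (e+j+1) (Q.std lam) (C 0) := by
    intro j
    induction j with
    | zero => exact fun e lam h => h
    | succ j ih =>
      intro e lam h
      have := ih (e+1) lam (EV.cov1 (hs j) h (hTe _ _ _))
      have e1 : e + 1 + j + 1 = e + (j+1) + 1 := by omega
      rwa [e1] at this
  have h1 : ∀ t j, d ≤ j → n ≤ j + 1 + t → Filt Q.costd (C j) := by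
    intro t
    induction t with
    | zero =>
      intro j _ hj
      refine Q.filt_costd_of_ev _ ((hC j).finite inferInstance) fun lam => ?_
      exact hdown j 0 lam (hn _ (by omega) _ _ inferInstance)
    | succ t ih =>
      intro j hdj hj
      exact cores_step hRD hfin C m a b hC0 hs hC j (h.mono hdj) (ih (j+1) (by omega) (by omega))
  have h2 : ∀ j, d ≤ j → ∀ lam, EV S (j+1) (Q.std lam) S := by
    intro j hj lam
    have := hup j 0 lam ((Filt.single lam).ev (h1 n j hj (by omega)) 0)
    rw [hC0, zero_add] at this
    exact this
  have h3 : ∀ t j, d ≤ j → n ≤ j + 1 + t → ∀ M : ModuleCat.{0} S, Module.Finite S M →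
      ∀ lam, EV S (j+1) (Q.std lam) M := by
    intro t
    induction t with
    | zero =>
      intro j _ hj M _ lam
      exact hn _ (by omega) _ _ inferInstance
    | succ t ih =>
      intro j hdj hj M hM lam
      obtain ⟨r, p, hp⟩ := exists_free_cover M hM
      have hsp := SES.of_surj p hp
      exact EV.cov3 hsp (ih (j+1) (by omega) (by omega) (ModuleCat.of S (LinearMap.ker p))
        (hsp.finite_left inferInstance) lam) ((h2 j hdj lam).pi_right r)
  exact fun M hM lam => h3 n d le_rfl (by omega) M hM lam

end ringel
end Third

end QHPaper

namespace QHPaper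
open CategoryTheory

section FDim

lemma fin_of_k {k R V : Type} [Field k] [Ring R] [AddCommGroup V] [Module k V] [Module R V]
    (h : ∀ (c : k) (v : V), ∃ r : R, c • v = r • v) (hf : Module.Finite k V) :
    Module.Finite R V := by
  obtain ⟨s, hs⟩ := hf.fg_top
  refine ⟨⟨s, eq_top_iff.2 ?_⟩⟩
  let P : Submodule k V :=
    { carrier := Submodule.span R (s : Set V)
      add_mem' := fun ha hb => Submodule.add_mem _ ha hb
      zero_mem' := Submodule.zero_mem _
      smul_mem' := fun c v hv => by
        obtain ⟨r, hr⟩ := h c v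
        rw [hr]
        exact Submodule.smul_mem _ _ hv }
  have hP : Submodule.span k (s : Set V) ≤ P := Submodule.span_le.2 Submodule.subset_span
  intro x _
  have : x ∈ P := hP (by rw [hs]; trivial)
  exact this

variable (k : Type) [Field k] {S : Type} [Ring S] [Algebra k S] [FiniteDimensional k S]

open scoped ModuleCat.Algebra

lemma fin_k (M : ModuleCat.{0} S) (hM : Module.Finite S M) : Module.Finite k M :=
  Module.Finite.trans S M

lemma fin_hom_k (A M : ModuleCat.{0} S) (hA : Module.Finite S A) (hM : Module.Finite S M) :
    Module.Finite k (A →ₗ[S] M) := by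
  have := fin_k k A hA
  have := fin_k k M hM
  exact Module.Finite.of_injective (LinearMap.restrictScalarsₗ k S A M k)
    (LinearMap.restrictScalars_injective k)

lemma FDA.of_fd (k : Type) [Field k] (S : Type) [Ring S] [Algebra k S] [FiniteDimensional k S] :
    FDA S where
  art := IsArtinianRing.of_finite k S
  homfin := by
    intro A M hA hM
    have := fin_hom_k k A M hA hM
    obtain ⟨m, φ, hφ⟩ := Module.Finite.exists_fin (R := k) (M := A →ₗ[S] M)
    refine ⟨m, φ, ?_⟩
    intro ψ B N f j h
    choose Φ hΦ using h
    have : ψ ∈ Submodule.span k (Set.range φ) := by rw [hφ]; trivial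
    obtain ⟨c, rfl⟩ := (Submodule.mem_span_range_iff_exists_fun k).1 this
    refine ⟨∑ i, c i • Φ i, ?_⟩
    refine LinearMap.ext fun x => ?_
    simp only [LinearMap.comp_apply, LinearMap.sum_apply, LinearMap.smul_apply, map_sum]
    refine Finset.sum_congr rfl fun i _ => ?_
    have := LinearMap.congr_fun (hΦ i) x
    simp only [LinearMap.comp_apply] at this
    rw [this]
    have e : ∀ y : M, j (c i • y) = c i • j y := fun y => by
      rw [← algebraMap_smul S (c i) y, map_smul, algebraMap_smul]
    rw [e]
  enough := by
    intro M hM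
    let f := algebraMap k S
    let adj := ModuleCat.restrictCoextendScalarsAdj.{0} f
    let E := (ModuleCat.coextendScalars f).obj ((ModuleCat.restrictScalars f).obj M)
    have hmono : Mono (adj.unit.app M) := inferInstance
    refine ⟨E, (adj.unit.app M).hom, ?_, ?_, ?_⟩
    · have h1 : Module.Finite k ((ModuleCat.restrictScalars f).obj M) := fin_k k M hM
      have h2 : Module.Finite k ((ModuleCat.restrictScalars f).obj (ModuleCat.of S S)) :=
        fin_k k (ModuleCat.of S S) (inferInstanceAs (Module.Finite S S))
      have h3 : Module.Finite k ((ModuleCat.restrictScalars f).obj (ModuleCat.of S S) →ₗ[k]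
        (ModuleCat.restrictScalars f).obj M) := inferInstance
      refine fin_of_k (k := k) (R := S) (V := ((ModuleCat.restrictScalars f).obj (ModuleCat.of S S)
        →ₗ[k] (ModuleCat.restrictScalars f).obj M)) ?_ h3
      intro c v
      refine ⟨f c, LinearMap.ext fun x => ?_⟩
      show c • v x = v ((show S from x) * f c)
      rw [← map_smul]
      congr 1
      show f c * (show S from x) = (show S from x) * f c
      exact Algebra.commutes c _
    · refine (Module.injective_iff_injective_object S E).2 ?_
      have hI : Injective ((ModuleCat.restrictScalars f).obj M) :=
        (Module.injective_iff_injective_object k ((ModuleCat.restrictScalars f).obj M)).1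
          (Module.injective_of_isSemisimpleRing k _)
      exact adj.map_injective _ hI
    · exact (ModuleCat.mono_iff_injective _).1 hmono

open scoped ModuleCat.Algebra in
lemma FDA.ringel (k : Type) [Field k] {S : Type} [Ring S] [Algebra k S] [FiniteDimensional k S]
    (T : ModuleCat.{0} S) (hT : Module.Finite S T) : FDA (RingelDualRing S T) := by
  have h := fin_hom_k k T T hT hT
  have h' : FiniteDimensional k (Module.End S T) := h
  have : FiniteDimensional k (Module.End S T)ᵐᵒᵖ :=
    Module.Finite.equiv (MulOpposite.opLinearEquiv k)
  exact FDA.of_fd k (RingelDualRing S T)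

open scoped ModuleCat.Algebra in
lemma hfin_ringel (k : Type) [Field k] {S : Type} [Ring S] [Algebra k S] [FiniteDimensional k S]
    (T : ModuleCat.{0} S) (hT : Module.Finite S T) (X : ModuleCat.{0} S)
    (hX : Module.Finite S X) : Module.Finite (RingelDualRing S T) (homTMod S T X) := by
  have h := fin_hom_k k T X hT hX
  refine fin_of_k (k := k) (R := RingelDualRing S T) (V := T →ₗ[S] X) ?_ h
  intro c v
  refine ⟨MulOpposite.op (c • LinearMap.id), LinearMap.ext fun x => ?_⟩
  show c • v x = v (c • x)
  rw [← algebraMap_smul S c x, map_smul, algebraMap_smul]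

end FDim
end QHPaper

open QHPaper in
/-- Let `S` be a quasi-hereditary algebra with a simple-preserving duality
and Ringel dual `S'`. Then `gfd(S) = wfd(S) = wfd(S') = gfd(S')`. -/
theorem stmt9 (k S Λ : Type) [Field k] [Ring S] [Algebra k S] [FiniteDimensional k S]
    [Fintype Λ] [PartialOrder Λ]
    (QH : QHData S Λ) (dual : Duality S QH) (T : ModuleCat.{0} S)
    (QH' : QHData (RingelDualRing S T) Λᵒᵈ)
    (hRD : IsRingelDualData S QH T QH') :
    gfdAlg S QH = wfdAlg S QH ∧
    wfdAlg S QH = wfdAlg (RingelDualRing S T) QH' ∧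
    wfdAlg (RingelDualRing S T) QH' = gfdAlg (RingelDualRing S T) QH' := by
  have hTf : Module.Finite S T := hRD.1.2.1
  have i1 : FDA S := FDA.of_fd k S
  have i2 : FDA (RingelDualRing S T) := FDA.ringel k T hTf
  have hfin := hfin_ringel k T hTf
  have h1 : gfdAlg S QH = wfdAlg S QH := eq_of_forall_ge_iff fun d => by
    rw [gfdAlg_le_iff, wfdAlg_le_iff]
    exact dual.GA_iff_WA d
  have h2 : wfdAlg (RingelDualRing S T) QH' = gfdAlg S QH := eq_of_forall_ge_iff fun d => by
    rw [gfdAlg_le_iff, wfdAlg_le_iff]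
    exact ⟨GA_of_WA' hRD hfin d, WA'_of_GA hRD d⟩
  have h3 : gfdAlg (RingelDualRing S T) QH' = wfdAlg S QH := eq_of_forall_ge_iff fun d => by
    rw [gfdAlg_le_iff, wfdAlg_le_iff]
    exact GA'_iff_WA hRD hfin d
  exact ⟨h1, by rw [h2, h1], by rw [h2, h3, h1]⟩
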